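/- arXiv:1802.00792 — 2 statements merged into one kernel-verified Lean document; each statement's English description precedes it below -/
import Mathlib

section
/- Let n ≥ 3, let μ be a left SL(n,ℝ)-invariant Borel probability measure on the quotient X_n = SL(n,ℝ)/SL(n,ℤ), let A ⊆ ℝ^n be a Lebesgue-measurable set with 0 < |A| < ∞, and let M > 0. Then μ({Λ ∈ X_n : |N₀(Λ, A) − |A|| > M·|A|^{1/2}}) ≤ C_n · M^{-2}, where C_n = 8ζ(n−1)/ζ(n) and ζ is the Riemann zeta function. -/
open MeasureTheory Matrix

/-- `SL(n, ℝ)`. -/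
abbrev SLR (n : ℕ) := Matrix.SpecialLinearGroup (Fin n) ℝ

instance (n : ℕ) : TopologicalSpace (SLR n) :=
  TopologicalSpace.induced (fun g : SLR n => (g : Matrix (Fin n) (Fin n) ℝ)) inferInstance

noncomputable instance (n : ℕ) : MeasurableSpace (SLR n) := borel _

/-- `SL(n, ℤ)`, viewed as a subgroup of `SL(n, ℝ)` via the entrywise coercion `ℤ → ℝ`. -/
def SLZ (n : ℕ) : Subgroup (SLR n) :=
  (Matrix.SpecialLinearGroup.map (n := Fin n) (Int.castRingHom ℝ)).range

/-- The space `X_n = SL(n,ℝ)/SL(n,ℤ)` of unimodular lattices in `ℝ^n`: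
the coset of `g` corresponds to the lattice `gℤ^n`. -/
abbrev Xn (n : ℕ) := SLR n ⧸ SLZ n

/-- The set of nonzero integer vectors `x` with `gx ∈ A`; since `x ↦ gx` is a bijection from
`ℤ^n` onto the lattice `gℤ^n`, this set is in bijection with `(gℤ^n \ {0}) ∩ A`, so its
cardinality is `N₀(gℤ^n, A)`. -/
def nonzeroLatticePts {n : ℕ} (g : SLR n) (A : Set (Fin n → ℝ)) : Set (Fin n → ℤ) :=
  {x : Fin n → ℤ | x ≠ 0 ∧ (g : Matrix (Fin n) (Fin n) ℝ).mulVec (fun i => (x i : ℝ)) ∈ A}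

/-- The Riemann zeta value `ζ(m) = ∑_{k ≥ 1} k^{-m}` for a natural number `m`. -/
noncomputable def zetaNat (m : ℕ) : ℝ := ∑' k : ℕ, (((k : ℝ) + 1) ^ m)⁻¹

open scoped ENNReal NNReal Pointwise
open Filter Topology

/-!
An invariant probability measure on the space of unimodular lattices is unique, so it is unchanged
when a lattice is replaced by a random sublattice of prime index `p`, rescaled to covolume one.
Starting from a single lattice, the average over these finitely many sublattices of the number of
linearly independent `k`-tuples in a compact set is a weighted lattice point count in dimension
`k n`, and for `k < n` its limit superior as `p → ∞` is at most the volume of that set; for `k = 1`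
the limit is the volume. By uniqueness these estimates pass to the invariant measure. Hence the
number `N` of nonzero lattice points in `A` has mean `|A|`, and the linearly independent pairs
contribute at most `|A|²` to its second moment. The dependent pairs are `(k u, ± l u)` with `k` and
`l` coprime, so they contribute at most `2 ∑ max(k, l)⁻ⁿ |A| ≤ 4 ζ(n-1)/ζ(n) |A|`. Chebyshev's
inequality finishes the proof.
-/

section PointMeasure

variable {G : Type*} [Group G] {Γ : Subgroup G} {ι Y : Type*} [MeasurableSpace Y]

/-- A family of maps `Φ · i : G → Y` which right translation by elements of `Γ` merely permutes.
The set of points `Φ g i` then depends on the coset `gΓ` only; in the quotient `SL(n,ℝ)/SL(n,ℤ)`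
this is how functions of a lattice are written in terms of a basis of it. -/
def IsPermutedBy (Γ : Subgroup G) (Φ : G → ι → Y) : Prop :=
  ∀ g, ∀ γ ∈ Γ, ∃ e : ι ≃ ι, ∀ i, Φ (g * γ) i = Φ g (e i)

/-- The counting measure of the points `Φ g i`, as a function of the coset `gΓ`. It is defined
through a representative, whose choice does not matter when `IsPermutedBy Γ Φ`. -/
noncomputable def pointMeasure (Φ : G → ι → Y) (x : G ⧸ Γ) : Measure Y :=
  Measure.sum fun i => Measure.dirac (Φ x.out i)

namespace IsPermutedBy

variable {Φ : G → ι → Y}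

lemma pointMeasure_mk (hΦ : IsPermutedBy Γ Φ) (g : G) :
    pointMeasure Φ (g : G ⧸ Γ) = Measure.sum fun i => Measure.dirac (Φ g i) := by
  obtain ⟨γ, hγ⟩ := QuotientGroup.mk_out_eq_mul Γ g
  obtain ⟨e, he⟩ := hΦ g γ γ.2
  rw [pointMeasure, hγ]
  simp_rw [he]
  exact Measure.sum_comp_equiv e fun i => Measure.dirac (Φ g i)

lemma lintegral_pointMeasure_mk (hΦ : IsPermutedBy Γ Φ) (g : G) {f : Y → ℝ≥0∞}
    (hf : Measurable f) : ∫⁻ y, f y ∂pointMeasure Φ (g : G ⧸ Γ) = ∑' i, f (Φ g i) := by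
  rw [hΦ.pointMeasure_mk, lintegral_sum_measure]
  simp_rw [lintegral_dirac' _ hf]

lemma pointMeasure_mk_apply (hΦ : IsPermutedBy Γ Φ) (g : G) {s : Set Y}
    (hs : MeasurableSet s) :
    pointMeasure Φ (g : G ⧸ Γ) s = ∑' i, s.indicator 1 (Φ g i) := by
  rw [hΦ.pointMeasure_mk, Measure.sum_apply _ hs]
  simp_rw [Measure.dirac_apply' _ hs]

variable [MeasurableSpace G] [Countable ι]

lemma measurable_pointMeasure (hΦ : IsPermutedBy Γ Φ) (hm : ∀ i, Measurable fun g => Φ g i) :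
    Measurable (pointMeasure Φ : G ⧸ Γ → Measure Y) := by
  refine Measure.measurable_of_measurable_coe _ fun s hs => ?_
  rw [QuotientGroup.measurable_from_quotient]
  have : (fun x : G ⧸ Γ => pointMeasure Φ x s) ∘ ((↑) : G → G ⧸ Γ) =
      fun g => ∑' i, s.indicator 1 (Φ g i) :=
    funext fun g => hΦ.pointMeasure_mk_apply g hs
  rw [this]
  exact Measurable.tsum fun i => (measurable_one.indicator hs).comp (hm i)

end IsPermutedBy

end PointMeasure

section Uniqueness

variable {G : Type*} [Group G] {Γ : Subgroup G}

lemma isPermutedBy_mul : IsPermutedBy Γ fun (g : G) (γ : Γ) => g * γ := fun g γ hγ =>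
  ⟨Equiv.mulLeft ⟨γ, hγ⟩, fun i => by simp only [mul_assoc, Equiv.coe_mulLeft, Subgroup.coe_mul]⟩

lemma exists_tsum_coset_indicator_le [TopologicalSpace G] [IsTopologicalGroup G] [T2Space G]
    [DiscreteTopology Γ] {K : Set G} (hK : IsCompact K) :
    ∃ C : ℝ≥0, ∀ g, ∑' γ : Γ, K.indicator (1 : G → ℝ≥0∞) (g * γ) ≤ C := by
  have hfin : ((↑) ⁻¹' (K⁻¹ * K) : Set Γ).Finite := by
    simpa [Set.preimage_compl] using Γ.tendsto_coe_cofinite_of_discrete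
      (isDiscrete_iff_discreteTopology.2 inferInstance) (hK.inv.mul hK).compl_mem_cocompact
  refine ⟨hfin.toFinset.card, fun g => ?_⟩
  by_cases h : ∃ γ₀ : Γ, g * γ₀ ∈ K
  · obtain ⟨γ₀, hγ₀⟩ := h
    have hmem : ∀ γ : Γ, g * (γ₀ * γ : Γ) ∈ K → (γ : G) ∈ K⁻¹ * K := fun γ hγ =>
      ⟨(g * γ₀)⁻¹, Set.inv_mem_inv.2 hγ₀, _, hγ, by simp [mul_assoc]⟩
    have hsupp : ∀ γ ∉ hfin.toFinset, K.indicator (1 : G → ℝ≥0∞) (g * (γ₀ * γ : Γ)) = 0 :=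
      fun γ hγ => Set.indicator_of_notMem (fun h => hγ (hfin.mem_toFinset.2 (hmem γ h))) _
    rw [← (Equiv.mulLeft γ₀).tsum_eq]
    simp only [Equiv.coe_mulLeft]
    rw [tsum_eq_sum hsupp]
    refine (Finset.sum_le_card_nsmul _ _ 1 fun γ _ => ?_).trans (by simp)
    exact Set.indicator_le_self' (fun _ _ => zero_le) _
  · have : ∀ γ : Γ, K.indicator (1 : G → ℝ≥0∞) (g * γ) = 0 := fun γ =>
      Set.indicator_of_notMem (fun hγ => h ⟨γ, hγ⟩) _
    simp [this]

variable [MeasurableSpace G]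

lemma measurable_coset_smul [MeasurableMul G] (h : G) :
    Measurable fun x : G ⧸ Γ => h • x := by
  rw [QuotientGroup.measurable_from_quotient]
  exact QuotientGroup.measurable_coe.comp (measurable_const_mul h)

lemma lintegral_coset_smul [MeasurableMul G] (μ : Measure (G ⧸ Γ))
    [SMulInvariantMeasure G (G ⧸ Γ) μ] (h : G) {F : G ⧸ Γ → ℝ≥0∞} (hF : Measurable F) :
    ∫⁻ x, F (h • x) ∂μ = ∫⁻ x, F x ∂μ := by
  rw [← lintegral_map hF (measurable_coset_smul h)]
  congr 1
  ext s hs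
  rw [Measure.map_apply (measurable_coset_smul h) hs,
    SMulInvariantMeasure.measure_preimage_smul h hs]

/-- The pullback to `G` of a measure on `G ⧸ Γ`: every coset is given its counting measure. -/
noncomputable def cosetLift (μ : Measure (G ⧸ Γ)) : Measure G :=
  μ.bind (pointMeasure fun (g : G) (γ : Γ) => g * γ)

section Lift

variable [MeasurableMul G] [Countable Γ] (μ : Measure (G ⧸ Γ))

lemma lintegral_cosetLift {f : G → ℝ≥0∞} (hf : Measurable f) :
    ∫⁻ g, f g ∂cosetLift μ =
      ∫⁻ x, ∫⁻ g, f g ∂pointMeasure (fun (g : G) (γ : Γ) => g * γ) x ∂μ :=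
  Measure.lintegral_bind (isPermutedBy_mul.measurable_pointMeasure
    fun γ => measurable_mul_const (γ : G)).aemeasurable hf.aemeasurable

instance isMulLeftInvariant_cosetLift [SMulInvariantMeasure G (G ⧸ Γ) μ] :
    (cosetLift μ).IsMulLeftInvariant := by
  refine ⟨fun h => Measure.ext_of_lintegral _ fun f hf => ?_⟩
  have hfh : Measurable fun g => f (h * g) := hf.comp (measurable_const_mul h)
  rw [lintegral_map hf (measurable_const_mul h), lintegral_cosetLift μ hfh,
    lintegral_cosetLift μ hf,
    ← lintegral_coset_smul μ h (F := fun x => ∫⁻ g, f g ∂pointMeasure _ x)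
      ((Measure.measurable_lintegral hf).comp
        (isPermutedBy_mul.measurable_pointMeasure fun γ => measurable_mul_const (γ : G)))]
  refine lintegral_congr fun x => ?_
  induction x using QuotientGroup.induction_on with | H g => ?_
  rw [MulAction.Quotient.smul_coe, smul_eq_mul,
    isPermutedBy_mul.lintegral_pointMeasure_mk _ hf,
    isPermutedBy_mul.lintegral_pointMeasure_mk _ hfh]
  simp only [mul_assoc]

lemma lintegral_mul_cosetLift {w : G → ℝ≥0∞} (hw : Measurable w)
    (hw1 : ∀ g, ∑' γ : Γ, w (g * γ) = 1) {F : G ⧸ Γ → ℝ≥0∞} (hF : Measurable F) :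
    ∫⁻ g, w g * F g ∂cosetLift μ = ∫⁻ x, F x ∂μ := by
  have hm : Measurable fun g : G => w g * F g := hw.mul (hF.comp QuotientGroup.measurable_coe)
  rw [lintegral_cosetLift μ hm]
  refine lintegral_congr fun x => ?_
  induction x using QuotientGroup.induction_on with | H g => ?_
  rw [isPermutedBy_mul.lintegral_pointMeasure_mk _ hm]
  simp_rw [QuotientGroup.mk_mul_of_mem g (SetLike.coe_mem _), ENNReal.tsum_mul_right, hw1, one_mul]

end Lift

variable [TopologicalSpace G] [IsTopologicalGroup G] [T2Space G] [DiscreteTopology Γ]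
  [BorelSpace G]

lemma isFiniteMeasureOnCompacts_cosetLift [Countable Γ] (μ : Measure (G ⧸ Γ))
    [IsFiniteMeasure μ] : IsFiniteMeasureOnCompacts (cosetLift μ) := by
  refine ⟨fun K hK => ?_⟩
  obtain ⟨C, hC⟩ := exists_tsum_coset_indicator_le (Γ := Γ) hK
  have hKm : Measurable (K.indicator (1 : G → ℝ≥0∞)) := measurable_one.indicator hK.measurableSet
  rw [← lintegral_indicator_one hK.measurableSet, lintegral_cosetLift μ hKm]
  refine (lintegral_mono (g := fun _ => (C : ℝ≥0∞)) fun x => ?_).trans_lt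
    (by simp [ENNReal.mul_lt_top])
  induction x using QuotientGroup.induction_on with | H g => ?_
  rw [isPermutedBy_mul.lintegral_pointMeasure_mk _ hKm]
  exact hC g

variable [SecondCountableTopology G] [LocallyCompactSpace G]

variable (Γ) in
lemma exists_pos_tsum_coset_lt_top [Countable Γ] :
    ∃ u : G → ℝ≥0∞, Measurable u ∧ (∀ g, u g ≠ 0) ∧ ∀ g, ∑' γ : Γ, u (g * γ) ≠ ∞ := by
  let K : ℕ → Set G := compactCovering G
  have hK : ∀ m, IsCompact (K m) := isCompact_compactCovering G
  choose C hC using fun m => exists_tsum_coset_indicator_le (Γ := Γ) (hK m)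
  let c : ℕ → ℝ≥0∞ := fun m => 2⁻¹ ^ m / (C m + 1)
  refine ⟨fun g => ∑' m, c m * (K m).indicator 1 g, ?_, fun g h => ?_, fun g => ?_⟩
  · exact Measurable.tsum fun m => (measurable_one.indicator (hK m).measurableSet).const_mul _
  · obtain ⟨m, hm⟩ := exists_mem_compactCovering g
    have := ENNReal.tsum_eq_zero.1 h m
    simp [hm, K, c, ENNReal.div_eq_zero_iff] at this
  · have hle : ∑' γ : Γ, ∑' m, c m * (K m).indicator 1 (g * γ) ≤ ∑' m : ℕ, (2⁻¹ : ℝ≥0∞) ^ m := by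
      rw [ENNReal.tsum_comm]
      refine ENNReal.tsum_le_tsum fun m => ?_
      calc ∑' γ : Γ, c m * (K m).indicator 1 (g * γ) ≤ c m * (C m + 1) := by
            rw [ENNReal.tsum_mul_left]
            gcongr
            exact (hC m g).trans le_self_add
        _ = 2⁻¹ ^ m := ENNReal.div_mul_cancel (by simp) (by simp)
    exact ne_top_of_le_ne_top (by simp [ENNReal.tsum_geometric]) hle

variable (Γ) in
lemma exists_tsum_coset_eq_one [Countable Γ] :
    ∃ w : G → ℝ≥0∞, Measurable w ∧ ∀ g, ∑' γ : Γ, w (g * γ) = 1 := by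
  obtain ⟨u, hu, hpos, hfin⟩ := exists_pos_tsum_coset_lt_top (G := G) Γ
  let s : G → ℝ≥0∞ := fun g => ∑' γ : Γ, u (g * γ)
  have hs : Measurable s := Measurable.tsum fun γ => hu.comp (measurable_mul_const _)
  have hsinv : ∀ g, ∀ γ : Γ, s (g * γ) = s g := fun g γ => by
    simp only [s, mul_assoc]
    exact (Equiv.mulLeft γ).tsum_eq fun δ : Γ => u (g * δ)
  have hs0 : ∀ g, s g ≠ 0 := fun g h => hpos g <| by
    simpa only [OneMemClass.coe_one, mul_one] using ENNReal.tsum_eq_zero.1 h 1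
  refine ⟨fun g => u g / s g, hu.div hs, fun g => ?_⟩
  simp_rw [hsinv, div_eq_mul_inv]
  rw [ENNReal.tsum_mul_right]
  exact ENNReal.mul_inv_cancel (hs0 g) (hfin g)

theorem smulInvariant_probabilityMeasure_unique (μ ν : Measure (G ⧸ Γ))
    [IsProbabilityMeasure μ] [IsProbabilityMeasure ν] [SMulInvariantMeasure G (G ⧸ Γ) μ]
    [SMulInvariantMeasure G (G ⧸ Γ) ν] : μ = ν := by
  have : Countable Γ := TopologicalSpace.separableSpace_iff_countable.1 inferInstance
  obtain ⟨w, hw, hw1⟩ := exists_tsum_coset_eq_one (G := G) Γ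
  have eq_haar : ∀ (ρ : Measure (G ⧸ Γ)) [IsProbabilityMeasure ρ]
      [SMulInvariantMeasure G (G ⧸ Γ) ρ], ∃ c : ℝ≥0∞, ∀ F : G ⧸ Γ → ℝ≥0∞, Measurable F →
        ∫⁻ x, F x ∂ρ = c * ∫⁻ g : G, w g * F g ∂Measure.haar := fun ρ _ _ => by
    have := isFiniteMeasureOnCompacts_cosetLift ρ
    refine ⟨Measure.haarScalarFactor (cosetLift ρ) Measure.haar, fun F hF => ?_⟩
    rw [← lintegral_mul_cosetLift ρ hw hw1 hF]
    conv_lhs => rw [Measure.isMulLeftInvariant_eq_smul (cosetLift ρ) Measure.haar]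
    rw [lintegral_smul_measure]
    rfl
  obtain ⟨a, ha⟩ := eq_haar μ
  obtain ⟨b, hb⟩ := eq_haar ν
  set I := ∫⁻ g : G, w g ∂Measure.haar
  have ha1 : a * I = 1 := by simpa using (ha 1 measurable_one).symm
  have hb1 : b * I = 1 := by simpa using (hb 1 measurable_one).symm
  have hab : a = b := by
    calc a = a * (b * I) := by rw [hb1, mul_one]
      _ = b * (a * I) := by ring
      _ = b := by rw [ha1, mul_one]
  refine Measure.ext_of_lintegral _ fun F hF => ?_
  rw [ha F hF, hb F hF, hab]

end Uniqueness

namespace SLR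

variable {n : ℕ}

instance : IsTopologicalGroup (SLR n) :=
  @Matrix.SpecialLinearGroup.topologicalGroup (Fin n) ℝ _ _ _ _ _

instance : BorelSpace (SLR n) := ⟨rfl⟩

lemma isClosedEmbedding_coe :
    IsClosedEmbedding (fun g : SLR n => (g : Matrix (Fin n) (Fin n) ℝ)) :=
  Matrix.SpecialLinearGroup.isClosedEmbedding_val

instance : T2Space (SLR n) := isClosedEmbedding_coe.isEmbedding.t2Space

instance : LocallyCompactSpace (SLR n) :=
  have : LocallyCompactSpace (Matrix (Fin n) (Fin n) ℝ) :=
    inferInstanceAs (LocallyCompactSpace (Fin n → Fin n → ℝ))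
  isClosedEmbedding_coe.locallyCompactSpace

instance : SecondCountableTopology (SLR n) :=
  have : SecondCountableTopology (Matrix (Fin n) (Fin n) ℝ) :=
    inferInstanceAs (SecondCountableTopology (Fin n → Fin n → ℝ))
  isClosedEmbedding_coe.isEmbedding.secondCountableTopology

instance : DiscreteTopology (SLZ n) :=
  Matrix.SpecialLinearGroup.discreteSpecialLinearGroupIntRangeSL

lemma measurable_mulVec (v : Fin n → ℝ) :
    Measurable fun g : SLR n => (g : Matrix (Fin n) (Fin n) ℝ).mulVec v :=
  (isClosedEmbedding_coe.continuous.matrix_mulVec continuous_const).measurable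

end SLR

section Counting

variable {κ ι : Type*}

/-- The real tuple of vectors underlying an integral one. -/
def realTuple (j : κ → ι → ℤ) : κ → ι → ℝ := fun l i => j l i

/-- The half-open unit cube with lowest corner `j`. -/
def unitCube (j : κ → ι → ℤ) : Set (κ → ι → ℝ) := {y | ∀ l i, ⌊y l i⌋ = j l i}

/-- The number of integral tuples `j` with `c j ∈ S`. -/
noncomputable def tupleCount (c : ℝ) (S : Set (κ → ι → ℝ)) : ℝ≥0∞ :=
  ∑' j : κ → ι → ℤ, S.indicator 1 (c • realTuple j)

lemma unitCube_eq_pi (j : κ → ι → ℤ) :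
    unitCube j = Set.univ.pi fun l => Set.univ.pi fun i => Set.Ico (j l i : ℝ) (j l i + 1) := by
  ext y
  simp [unitCube, Int.floor_eq_iff]

lemma pairwise_disjoint_unitCube :
    Pairwise (Function.onFun Disjoint (unitCube : (κ → ι → ℤ) → _)) := by
  intro j j' h
  refine Set.disjoint_left.2 fun y hy hy' => h ?_
  ext l i
  exact (hy l i).symm.trans (hy' l i)

lemma measurableSet_unitCube [Countable κ] [Countable ι] (j : κ → ι → ℤ) :
    MeasurableSet (unitCube j) := by
  rw [unitCube_eq_pi]
  exact .univ_pi fun _ => .univ_pi fun _ => measurableSet_Ico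

variable [Fintype κ] [Fintype ι]

lemma volume_unitCube (j : κ → ι → ℤ) : volume (unitCube j) = 1 := by
  rw [unitCube_eq_pi, volume_pi_pi]
  simp [volume_pi_pi]

lemma dist_smul_realTuple_le {c : ℝ} (hc : 0 < c) {j : κ → ι → ℤ} {y : κ → ι → ℝ}
    (hy : y ∈ unitCube j) : dist (c • y) (c • realTuple j) ≤ c := by
  rw [dist_smul₀, Real.norm_of_nonneg hc.le]
  refine mul_le_of_le_one_right hc.le <|
    (dist_pi_le_iff zero_le_one).2 fun l => (dist_pi_le_iff zero_le_one).2 fun i => ?_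
  have := Int.floor_eq_iff.1 (hy l i)
  rw [Real.dist_eq, realTuple, abs_le]
  constructor <;> linarith

lemma tupleCount_eq_volume_biUnion_unitCube (c : ℝ) (S : Set (κ → ι → ℝ)) :
    tupleCount c S = volume (⋃ j ∈ {j | c • realTuple j ∈ S}, unitCube j) := by
  rw [measure_biUnion (Set.to_countable _) (pairwise_disjoint_unitCube.set_pairwise _)
    fun j _ => measurableSet_unitCube j]
  simp_rw [volume_unitCube]
  rw [tsum_subtype _ fun _ => 1]
  rfl

lemma ofReal_pow_mul_volume_preimage_smul {c : ℝ} (hc : 0 < c) (S : Set (κ → ι → ℝ)) :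
    ENNReal.ofReal c ^ (Fintype.card κ * Fintype.card ι) * volume ((c • ·) ⁻¹' S) =
      volume S := by
  have hd : Module.finrank ℝ (κ → ι → ℝ) = Fintype.card κ * Fintype.card ι := by
    simp [Module.finrank_pi_fintype]
  have hcd : 0 < c ^ (Fintype.card κ * Fintype.card ι) := pow_pos hc _
  have h := Measure.addHaar_preimage_smul (volume : Measure (κ → ι → ℝ)) hc.ne' S
  rw [hd, abs_of_pos (inv_pos.2 hcd), ENNReal.ofReal_inv_of_pos hcd,
    ENNReal.ofReal_pow hc.le] at h
  rw [h, ENNReal.mul_inv_cancel_left (pow_ne_zero _ (ENNReal.ofReal_pos.2 hc).ne')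
    (ENNReal.pow_ne_top ENNReal.ofReal_ne_top)]

lemma tupleCount_le_volume_cthickening {c : ℝ} (hc : 0 < c) (S : Set (κ → ι → ℝ)) :
    ENNReal.ofReal c ^ (Fintype.card κ * Fintype.card ι) * tupleCount c S ≤
      volume (Metric.cthickening c S) := by
  rw [← ofReal_pow_mul_volume_preimage_smul hc, tupleCount_eq_volume_biUnion_unitCube]
  gcongr
  refine Set.iUnion₂_subset fun j (hj : c • realTuple j ∈ S) y hy => ?_
  exact Metric.mem_cthickening_of_dist_le (c • y) (c • realTuple j) c S hj
    (dist_smul_realTuple_le hc hy)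

lemma volume_le_tupleCount {c : ℝ} (hc : 0 < c) {K U : Set (κ → ι → ℝ)}
    (h : Metric.cthickening c K ⊆ U) :
    volume K ≤ ENNReal.ofReal c ^ (Fintype.card κ * Fintype.card ι) * tupleCount c U := by
  rw [← ofReal_pow_mul_volume_preimage_smul hc K, tupleCount_eq_volume_biUnion_unitCube]
  gcongr
  intro y hy
  let j : κ → ι → ℤ := fun l i => ⌊y l i⌋
  have hyj : y ∈ unitCube j := fun _ _ => rfl
  refine Set.mem_iUnion₂.2 ⟨j, h ?_, hyj⟩
  refine Metric.mem_cthickening_of_dist_le (c • realTuple j) (c • y) c K hy ?_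
  rw [dist_comm]
  exact dist_smul_realTuple_le hc hyj

end Counting

section ModPrime

variable {κ ι : Type*}

lemma linearIndependent_intCast_rat {v : κ → ι → ℤ} (hv : LinearIndependent ℤ v) :
    LinearIndependent ℚ fun l i => (v l i : ℚ) := by
  refine (LinearIndependent.iff_fractionRing ℤ ℚ).1 <|
    hv.map' ((Algebra.linearMap ℤ ℚ).compLeft ι) (LinearMap.ker_eq_bot.2 fun x y h => ?_)
  exact funext fun i => Int.cast_injective (congr_fun h i)

/-- The reduction modulo `p` of an integral tuple, as a matrix with the vectors as its rows. -/
def modMatrix (p : ℕ) (j : κ → ι → ℤ) : Matrix κ ι (ZMod p) :=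
  Matrix.of fun l i => (j l i : ZMod p)

/-- The number of nonzero covectors modulo `p` annihilating the reduction of `j`. -/
noncomputable def annihilatorCount [Fintype ι] (p : ℕ) (j : κ → ι → ℤ) : ℕ :=
  Nat.card {a : ι → ZMod p // a ≠ 0 ∧ (modMatrix p j).mulVec a = 0}

lemma annihilatorCount_add_one [Fintype ι] {p : ℕ} [Fact p.Prime] (j : κ → ι → ℤ) :
    annihilatorCount p j + 1 = p ^ (Fintype.card ι - (modMatrix p j).rank) := by
  have hker : annihilatorCount p j =
      ((LinearMap.ker (modMatrix p j).mulVecLin : Set (ι → ZMod p)) \ {0}).ncard :=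
    Nat.card_congr (Equiv.subtypeEquivRight fun a => by simp [and_comm])
  have hrank := LinearMap.finrank_range_add_finrank_ker (modMatrix p j).mulVecLin
  rw [← Matrix.rank, Module.finrank_fintype_fun_eq_card] at hrank
  rw [hker, Set.ncard_sdiff_singleton_add_one (Submodule.zero_mem _), ← hrank,
    Nat.add_sub_cancel_left]
  exact (Module.natCard_eq_pow_finrank (K := ZMod p)).trans (by rw [Nat.card_zmod]; rfl)

variable [Fintype κ]

lemma exists_isUnit_submatrix_of_linearIndependent_row [DecidableEq κ] [Finite ι] {K : Type*}
    [Field K] {A : Matrix κ ι K} (hA : LinearIndependent K A.row) :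
    ∃ f : κ → ι, IsUnit (A.submatrix id f) := by
  have := Fintype.ofFinite ι
  obtain ⟨v, hv, -, hvind⟩ := Submodule.exists_fun_fin_finrank_span_eq K (Set.range A.col)
  choose c hc using hv
  have hcard : Module.finrank K (Submodule.span K (Set.range A.col)) = Fintype.card κ := by
    rw [← A.rank_eq_finrank_span_cols, hA.rank_matrix]
  let e : κ ≃ Fin (Module.finrank K (Submodule.span K (Set.range A.col))) :=
    Fintype.equivFinOfCardEq hcard.symm
  refine ⟨c ∘ e, Matrix.linearIndependent_cols_iff_isUnit.1 ?_⟩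
  have hcol : (A.submatrix id (c ∘ e)).col = v ∘ e := funext fun l => hc (e l)
  rw [hcol]
  exact hvind.comp e e.injective

lemma linearIndependent_row_of_isUnit_submatrix [DecidableEq κ] {K : Type*} [Field K]
    {A : Matrix κ ι K} {f : κ → ι} (hf : IsUnit (A.submatrix id f)) :
    LinearIndependent K A.row :=
  LinearIndependent.of_comp (LinearMap.funLeft K K f)
    (Matrix.linearIndependent_rows_iff_isUnit.2 hf)

lemma linearIndependent_row_modMatrix [Finite ι] {p : ℕ} [Fact p.Prime] {j : κ → ι → ℤ}
    (hj : LinearIndependent ℤ j) {B : ℝ} (hB : ∀ l i, |(j l i : ℝ)| ≤ B)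
    (hp : (Fintype.card κ).factorial * B ^ Fintype.card κ < p) :
    LinearIndependent (ZMod p) (modMatrix p j).row := by
  classical
  obtain ⟨f, hf⟩ := exists_isUnit_submatrix_of_linearIndependent_row
    (A := Matrix.of fun l i => (j l i : ℚ)) (linearIndependent_intCast_rat hj)
  let D : Matrix κ κ ℤ := Matrix.of fun l m => j l (f m)
  have hD : D.det ≠ 0 := by
    rw [Matrix.isUnit_iff_isUnit_det, isUnit_iff_ne_zero] at hf
    rw [← Int.cast_ne_zero (α := ℚ), Int.cast_det]
    exact hf
  have hDp : |(D.det : ℝ)| < p := by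
    refine lt_of_le_of_lt ?_ hp
    rw [Int.cast_det, ← nsmul_eq_mul]
    exact Matrix.det_le (abv := AbsoluteValue.abs) fun l m => hB l (f m)
  refine linearIndependent_row_of_isUnit_submatrix (f := f) ?_
  rw [Matrix.isUnit_iff_isUnit_det, isUnit_iff_ne_zero]
  change (D.map (Int.cast : ℤ → ZMod p)).det ≠ 0
  rw [← Int.cast_det, Ne, ZMod.intCast_zmod_eq_zero_iff_dvd]
  exact fun h => hD (Int.eq_zero_of_abs_lt_dvd h (by exact_mod_cast hDp))

variable [Fintype ι] {p : ℕ} [Fact p.Prime]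

lemma annihilatorCount_le {j : κ → ι → ℤ} (hj : LinearIndependent (ZMod p) (modMatrix p j).row) :
    annihilatorCount p j ≤ p ^ (Fintype.card ι - Fintype.card κ) := by
  rw [← hj.rank_matrix, ← annihilatorCount_add_one]
  exact Nat.le_succ _

lemma le_annihilatorCount_add_one (j : κ → ι → ℤ) :
    p ^ (Fintype.card ι - Fintype.card κ) ≤ annihilatorCount p j + 1 := by
  rw [annihilatorCount_add_one]
  exact Nat.pow_le_pow_right (Fact.out : p.Prime).pos
    (Nat.sub_le_sub_left (modMatrix p j).rank_le_card_height _)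

end ModPrime

section HeckeMatrix

section Matrix

variable {ι : Type*} [Fintype ι] [DecidableEq ι]

lemma det_updateRow_one {R : Type*} [CommRing R] (i : ι) (b : ι → R) :
    ((1 : Matrix ι ι R).updateRow i b).det = b i := by
  rw [← Matrix.cramer_transpose_apply, Matrix.transpose_one, Matrix.cramer_one,
    Module.End.one_apply]

lemma exists_diagonal_update_mulVec_eq_iff {R : Type*} [CommRing R] {i : ι} {d : R} {z : ι → R} :
    (∃ x, (Matrix.diagonal (Function.update 1 i d)).mulVec x = z) ↔ d ∣ z i := by
  constructor
  · rintro ⟨x, rfl⟩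
    simp [Matrix.mulVec_diagonal]
  · rintro ⟨q, hq⟩
    refine ⟨Function.update z i q, funext fun l => ?_⟩
    rw [Matrix.mulVec_diagonal]
    by_cases hl : l = i
    · subst hl; simp [hq]
    · simp [hl]

lemma exists_specialLinearGroup_mul_eq {R : Type*} [CommRing R] [IsDomain R] {A B : Matrix ι ι R}
    (hdet : A.det = B.det) (hB : B.det ≠ 0) (h : ∀ x, ∃ y, B.mulVec y = A.mulVec x) :
    ∃ δ : Matrix.SpecialLinearGroup ι R, A = B * δ.1 := by
  choose y hy using fun j => h (Pi.single j 1)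
  let δ : Matrix ι ι R := Matrix.of fun i j => y j i
  have hmul : A = B * δ := by
    ext i j
    have := congr_fun (hy j) i
    rw [Matrix.mulVec_single_one] at this
    exact this.symm
  refine ⟨⟨δ, mul_left_cancel₀ hB ?_⟩, hmul⟩
  rw [← Matrix.det_mul, ← hmul, hdet, mul_one]

end Matrix

section ModPairing

variable {ι : Type*} [Fintype ι] {p : ℕ}

/-- The pairing of a covector modulo `p` and an integral vector, with values modulo `p`. -/
def modPairing (a : ι → ZMod p) (x : ι → ℤ) : ZMod p := a ⬝ᵥ fun i => (x i : ZMod p)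

variable [DecidableEq ι]

lemma exists_matrix_range_eq [Fact p.Prime] {a : ι → ZMod p} (ha : a ≠ 0) :
    ∃ B : Matrix ι ι ℤ, B.det = p ∧ ∀ y, (∃ x, B.mulVec x = y) ↔ modPairing a y = 0 := by
  obtain ⟨i, hi⟩ : ∃ i, a i ≠ 0 := Function.ne_iff.1 ha
  obtain ⟨b, hb⟩ := (ZMod.intCast_surjective.comp_left (α := ι)) fun l => a l / a i
  replace hb : ∀ l, (b l : ZMod p) = a l / a i := congr_fun hb
  -- In the coordinates given by `P`, the sublattice is cut out by divisibility of one coordinate.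
  let P : Matrix ι ι ℤ := (1 : Matrix ι ι ℤ).updateRow i (Function.update b i 1)
  let D : Matrix ι ι ℤ := Matrix.diagonal (Function.update 1 i (p : ℤ))
  have hP : P.det = 1 := by rw [det_updateRow_one, Function.update_self]
  have hPu : IsUnit P.det := hP ▸ isUnit_one
  have hPy : ∀ y, ((P.mulVec y i : ℤ) : ZMod p) = (a i)⁻¹ * modPairing a y := fun y => by
    have hcoef : ∀ l, ((Function.update b i 1 l : ℤ) : ZMod p) = (a i)⁻¹ * a l := fun l => by
      by_cases hl : l = i
      · subst hl; simp [hi]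
      · simp [hl, hb, div_eq_inv_mul]
    simp only [P, Matrix.mulVec, Matrix.updateRow_self, dotProduct, Int.cast_sum, Int.cast_mul,
      hcoef, modPairing, Finset.mul_sum, mul_assoc]
  refine ⟨P⁻¹ * D, ?_, fun y => ?_⟩
  · rw [Matrix.det_mul, Matrix.det_nonsing_inv, hP, Matrix.det_diagonal,
      Finset.prod_update_of_mem (Finset.mem_univ i)]
    simp
  · have hxy : ∀ x, (P⁻¹ * D).mulVec x = y ↔ D.mulVec x = P.mulVec y := fun x => by
      constructor
      · rintro rfl
        rw [Matrix.mulVec_mulVec, Matrix.mul_nonsing_inv_cancel_left P D hPu]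
      · intro h
        rw [← Matrix.mulVec_mulVec, h, Matrix.mulVec_mulVec, Matrix.nonsing_inv_mul P hPu,
          Matrix.one_mulVec]
    simp_rw [hxy]
    rw [exists_diagonal_update_mulVec_eq_iff, ← ZMod.intCast_zmod_eq_zero_iff_dvd, hPy,
      mul_eq_zero, or_iff_right (inv_ne_zero hi)]

end ModPairing

variable {n p : ℕ}

/-- The nonzero covectors modulo `p`; up to scaling they parametrise the sublattices of `ℤ^n` of
prime index `p`. -/
abbrev NonzeroCovector (n p : ℕ) := {a : Fin n → ZMod p // a ≠ 0}

/-- The transpose action on covectors modulo `p` of an element of `SL(n, ℤ)`. -/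
def transposeAct (m : Matrix.SpecialLinearGroup (Fin n) ℤ) :
    (Fin n → ZMod p) ≃ₗ[ZMod p] (Fin n → ZMod p) :=
  Matrix.SpecialLinearGroup.toLin' (m.map (Int.castRingHom (ZMod p))).transpose

lemma modPairing_mulVec (m : Matrix.SpecialLinearGroup (Fin n) ℤ) (a : Fin n → ZMod p)
    (x : Fin n → ℤ) : modPairing a (m.1.mulVec x) = modPairing (transposeAct m a) x := by
  have hm : (fun i => ((m.1.mulVec x i : ℤ) : ZMod p)) =
      ((Int.castRingHom (ZMod p)).mapMatrix m.1).mulVec fun i => x i :=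
    funext fun i => RingHom.map_mulVec (Int.castRingHom (ZMod p)) m.1 x i
  rw [modPairing, hm, Matrix.dotProduct_mulVec, ← Matrix.mulVec_transpose]
  rfl

/-- The contragredient action of an element of `SL(n, ℤ)` on nonzero covectors modulo `p`. -/
def covectorAct (m : Matrix.SpecialLinearGroup (Fin n) ℤ) :
    NonzeroCovector n p ≃ NonzeroCovector n p :=
  (transposeAct m).symm.toEquiv.subtypeEquiv fun _ => (transposeAct m).symm.map_ne_zero_iff.symm

lemma modPairing_covectorAct (m : Matrix.SpecialLinearGroup (Fin n) ℤ) (a : NonzeroCovector n p)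
    (x : Fin n → ℤ) : modPairing (covectorAct m a).1 (m.1.mulVec x) = modPairing a.1 x := by
  rw [modPairing_mulVec]
  exact congr_arg (modPairing · x) ((transposeAct m).apply_symm_apply a.1)

variable [Fact p.Prime]

lemma natCard_nonzeroCovector : Nat.card (NonzeroCovector n p) = p ^ n - 1 := by
  rw [Nat.card_eq_fintype_card, Fintype.card_subtype_compl, Fintype.card_fun, ZMod.card,
    Fintype.card_fin, Fintype.card_unique]

instance [NeZero n] : Nonempty (NonzeroCovector n p) :=
  ⟨⟨1, one_ne_zero⟩⟩

variable (a : NonzeroCovector n p)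

/-- An integral matrix of determinant `p` whose columns span the vectors annihilated by `a`. -/
noncomputable def heckeMatrix : Matrix (Fin n) (Fin n) ℤ :=
  (exists_matrix_range_eq a.2).choose

lemma det_heckeMatrix : (heckeMatrix a).det = p :=
  (exists_matrix_range_eq a.2).choose_spec.1

lemma det_heckeMatrix_ne_zero : (heckeMatrix a).det ≠ 0 := by
  rw [det_heckeMatrix]
  exact_mod_cast (Fact.out : p.Prime).ne_zero

lemma exists_heckeMatrix_mulVec_eq_iff {y : Fin n → ℤ} :
    (∃ x, (heckeMatrix a).mulVec x = y) ↔ modPairing a.1 y = 0 :=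
  (exists_matrix_range_eq a.2).choose_spec.2 y

lemma exists_mul_heckeMatrix (m : Matrix.SpecialLinearGroup (Fin n) ℤ) :
    ∃ δ : Matrix.SpecialLinearGroup (Fin n) ℤ,
      m.1 * heckeMatrix a = heckeMatrix (covectorAct m a) * δ.1 := by
  refine exists_specialLinearGroup_mul_eq ?_ (det_heckeMatrix_ne_zero _) fun x => ?_
  · rw [Matrix.det_mul, m.2, one_mul, det_heckeMatrix, det_heckeMatrix]
  · rw [exists_heckeMatrix_mulVec_eq_iff, ← Matrix.mulVec_mulVec, modPairing_covectorAct,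
      ← exists_heckeMatrix_mulVec_eq_iff]
    exact ⟨x, rfl⟩

end HeckeMatrix

section HeckeMeasure

variable {n p : ℕ}

/-- The factor `p^(-1/n)` which makes a sublattice of index `p` unimodular again. -/
noncomputable def heckeScale (n p : ℕ) : ℝ := ((p : ℝ)⁻¹) ^ ((n : ℝ)⁻¹)

lemma heckeScale_pow [NeZero n] : heckeScale n p ^ n = (p : ℝ)⁻¹ :=
  Real.rpow_inv_natCast_pow (by positivity) (NeZero.ne n)

variable [Fact p.Prime]

lemma heckeScale_pos : 0 < heckeScale n p :=
  Real.rpow_pos_of_pos (inv_pos.2 (Nat.cast_pos.2 (Fact.out : p.Prime).pos)) _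

variable [NeZero n]

/-- The element of `SL(n, ℝ)` proportional to `heckeMatrix a`. -/
noncomputable def heckePoint (a : NonzeroCovector n p) : SLR n :=
  ⟨heckeScale n p • (Int.castRingHom ℝ).mapMatrix (heckeMatrix a), by
    have hp0 : (p : ℝ) ≠ 0 := Nat.cast_ne_zero.2 (Fact.out : p.Prime).ne_zero
    rw [Matrix.det_smul, Fintype.card_fin, heckeScale_pow, ← RingHom.map_det, det_heckeMatrix]
    simp [hp0]⟩

/-- The unimodular lattices proportional to the index `p` sublattices of `gℤ^n`, each of them
listed `p - 1` times. -/
noncomputable def heckeFamily (n p : ℕ) [Fact p.Prime] [NeZero n] (g : SLR n)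
    (a : NonzeroCovector n p) : Xn n :=
  ((g * heckePoint a : SLR n) : Xn n)

lemma isPermutedBy_heckeFamily : IsPermutedBy (SLZ n) (heckeFamily n p) := by
  rintro g _ ⟨m, rfl⟩
  refine ⟨covectorAct m, fun a => ?_⟩
  obtain ⟨δ, hδ⟩ := exists_mul_heckeMatrix a m
  have h : Matrix.SpecialLinearGroup.map (Int.castRingHom ℝ) m * heckePoint a =
      heckePoint (covectorAct m a) * Matrix.SpecialLinearGroup.map (Int.castRingHom ℝ) δ := by
    have hδ' := congr_arg (Int.castRingHom ℝ).mapMatrix hδ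
    rw [map_mul, map_mul] at hδ'
    refine Subtype.ext ?_
    calc (Int.castRingHom ℝ).mapMatrix m.1 *
          (heckeScale n p • (Int.castRingHom ℝ).mapMatrix (heckeMatrix a))
        = heckeScale n p • ((Int.castRingHom ℝ).mapMatrix (heckeMatrix (covectorAct m a)) *
            (Int.castRingHom ℝ).mapMatrix δ.1) := by rw [mul_smul_comm, hδ']
      _ = (heckeScale n p • (Int.castRingHom ℝ).mapMatrix (heckeMatrix (covectorAct m a))) *
            (Int.castRingHom ℝ).mapMatrix δ.1 := (smul_mul_assoc _ _ _).symm
  rw [heckeFamily, mul_assoc, h, ← mul_assoc]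
  exact QuotientGroup.mk_mul_of_mem _ ⟨δ, rfl⟩

/-- The uniform distribution on the unimodular lattices proportional to an index `p` sublattice
of the given one: the Hecke correspondence at `p`. -/
noncomputable def heckeMeasure (p : ℕ) [Fact p.Prime] (x : Xn n) : Measure (Xn n) :=
  (Nat.card (NonzeroCovector n p) : ℝ≥0∞)⁻¹ • pointMeasure (heckeFamily n p) x

lemma measurable_heckeMeasure : Measurable (heckeMeasure (n := n) p) :=
  Measure.measurable_of_measurable_coe _ fun _ hs =>
    ((Measure.measurable_coe hs).comp (isPermutedBy_heckeFamily.measurable_pointMeasure fun _ =>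
      QuotientGroup.measurable_coe.comp (measurable_mul_const _))).const_mul _

lemma lintegral_heckeMeasure_mk (g : SLR n) {F : Xn n → ℝ≥0∞} (hF : Measurable F) :
    ∫⁻ x, F x ∂heckeMeasure p (g : Xn n) =
      (Nat.card (NonzeroCovector n p) : ℝ≥0∞)⁻¹ *
        ∑' a : NonzeroCovector n p, F ((g * heckePoint a : SLR n) : Xn n) := by
  rw [heckeMeasure, lintegral_smul_measure,
    isPermutedBy_heckeFamily.lintegral_pointMeasure_mk g hF, smul_eq_mul]
  rfl

instance (x : Xn n) : IsProbabilityMeasure (heckeMeasure p x) := by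
  induction x using QuotientGroup.induction_on with | H g => ?_
  refine ⟨?_⟩
  rw [← lintegral_one, lintegral_heckeMeasure_mk g measurable_const, ENNReal.tsum_const, mul_one,
    ENat.card_eq_coe_natCard]
  exact ENNReal.inv_mul_cancel (Nat.cast_ne_zero.2 Nat.card_pos.ne') (ENNReal.natCast_ne_top _)

lemma lintegral_heckeMeasure_smul (h : SLR n) (x : Xn n) {F : Xn n → ℝ≥0∞} (hF : Measurable F) :
    ∫⁻ y, F y ∂heckeMeasure p (h • x) = ∫⁻ y, F (h • y) ∂heckeMeasure p x := by
  induction x using QuotientGroup.induction_on with | H g => ?_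
  rw [MulAction.Quotient.smul_coe, smul_eq_mul, lintegral_heckeMeasure_mk _ hF,
    lintegral_heckeMeasure_mk g (F := fun y => F (h • y)) (hF.comp (measurable_coset_smul h))]
  simp only [MulAction.Quotient.smul_coe, smul_eq_mul, mul_assoc]

theorem bind_heckeMeasure (μ : Measure (Xn n)) [IsProbabilityMeasure μ]
    [SMulInvariantMeasure (SLR n) (Xn n) μ] : μ.bind (heckeMeasure p) = μ := by
  have : IsProbabilityMeasure (μ.bind (heckeMeasure p)) :=
    isProbabilityMeasure_bind measurable_heckeMeasure.aemeasurable (ae_of_all _ inferInstance)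
  have : SMulInvariantMeasure (SLR n) (Xn n) (μ.bind (heckeMeasure p)) := ⟨fun h s hs => by
    rw [Measure.bind_apply (measurable_coset_smul h hs) measurable_heckeMeasure.aemeasurable,
      Measure.bind_apply hs measurable_heckeMeasure.aemeasurable,
      ← lintegral_coset_smul μ h (F := fun x => heckeMeasure p x s)
        ((Measure.measurable_coe hs).comp measurable_heckeMeasure)]
    refine lintegral_congr fun x => ?_
    have := lintegral_heckeMeasure_smul (p := p) h x (measurable_one.indicator hs)
    rw [lintegral_indicator_one hs] at this
    rw [this, ← lintegral_indicator_one (measurable_coset_smul h hs)]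
    rfl⟩
  exact smulInvariant_probabilityMeasure_unique _ _

lemma lintegral_lintegral_heckeMeasure (μ : Measure (Xn n)) [IsProbabilityMeasure μ]
    [SMulInvariantMeasure (SLR n) (Xn n) μ] {F : Xn n → ℝ≥0∞} (hF : Measurable F) :
    ∫⁻ x, ∫⁻ y, F y ∂heckeMeasure p x ∂μ = ∫⁻ x, F x ∂μ := by
  rw [← Measure.lintegral_bind measurable_heckeMeasure.aemeasurable hF.aemeasurable,
    bind_heckeMeasure]

end HeckeMeasure

section LatticeTuples

variable {n k : ℕ}

/-- The linearly independent `k`-tuples of integral vectors. -/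
abbrev IndepTuple (n k : ℕ) := {j : Fin k → Fin n → ℤ // LinearIndependent ℤ j}

/-- A matrix applied to each vector of a tuple. -/
def tupleMap (M : Matrix (Fin n) (Fin n) ℝ) (y : Fin k → Fin n → ℝ) : Fin k → Fin n → ℝ :=
  fun l => M.mulVec (y l)

/-- The images under `g` of the linearly independent integral `k`-tuples. -/
def tupleFamily (n k : ℕ) (g : SLR n) (j : IndepTuple n k) : Fin k → Fin n → ℝ :=
  tupleMap g.1 (realTuple j.1)

/-- The counting measure of the linearly independent `k`-tuples of vectors of a lattice. -/
noncomputable def latticeTuples (k : ℕ) (x : Xn n) : Measure (Fin k → Fin n → ℝ) :=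
  pointMeasure (tupleFamily n k) x

lemma tupleMap_intCast_realTuple (B : Matrix (Fin n) (Fin n) ℤ) (j : Fin k → Fin n → ℤ) :
    tupleMap ((Int.castRingHom ℝ).mapMatrix B) (realTuple j) =
      realTuple fun l => B.mulVec (j l) :=
  funext₂ fun l i => (RingHom.map_mulVec (Int.castRingHom ℝ) B (j l) i).symm

lemma tupleMap_mul (M N : Matrix (Fin n) (Fin n) ℝ) (y : Fin k → Fin n → ℝ) :
    tupleMap (M * N) y = tupleMap M (tupleMap N y) :=
  funext fun l => (Matrix.mulVec_mulVec (y l) M N).symm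

lemma isPermutedBy_tupleFamily : IsPermutedBy (SLZ n) (tupleFamily n k) := by
  rintro g _ ⟨m, rfl⟩
  let φ := Matrix.SpecialLinearGroup.toLin' m
  refine ⟨(Equiv.piCongrRight fun _ => φ.toEquiv).subtypeEquiv fun j =>
    (φ.toLinearMap.linearIndependent_iff (LinearEquiv.ker φ)).symm, fun j => ?_⟩
  exact (tupleMap_mul _ _ _).trans (congr_arg (tupleMap g.1) (tupleMap_intCast_realTuple m.1 j.1))

lemma measurable_latticeTuples : Measurable (latticeTuples k : Xn n → _) :=
  isPermutedBy_tupleFamily.measurable_pointMeasure fun _ =>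
    measurable_pi_lambda _ fun _ => SLR.measurable_mulVec _

lemma measurable_latticeTuples_apply {S : Set (Fin k → Fin n → ℝ)} (hS : MeasurableSet S) :
    Measurable fun x : Xn n => latticeTuples k x S :=
  (Measure.measurable_coe hS).comp measurable_latticeTuples

lemma latticeTuples_mk_apply (g : SLR n) {S : Set (Fin k → Fin n → ℝ)} (hS : MeasurableSet S) :
    latticeTuples k (g : Xn n) S = ∑' j, S.indicator 1 (tupleFamily n k g j) :=
  isPermutedBy_tupleFamily.pointMeasure_mk_apply g hS

lemma continuous_tupleMap (M : Matrix (Fin n) (Fin n) ℝ) :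
    Continuous (tupleMap M : (Fin k → Fin n → ℝ) → _) :=
  continuous_pi fun l => continuous_const.matrix_mulVec (continuous_apply l)

lemma isCompact_preimage_tupleMap (g : SLR n) {S : Set (Fin k → Fin n → ℝ)} (hS : IsCompact S) :
    IsCompact (tupleMap g.1 ⁻¹' S) := by
  have h : ∀ g₁ g₂ : SLR n, g₁ * g₂ = 1 → ∀ y : Fin k → Fin n → ℝ,
      tupleMap g₁.1 (tupleMap g₂.1 y) = y := fun g₁ g₂ hg y => by
    have hg' : g₁.1 * g₂.1 = 1 := congr_arg Subtype.val hg
    rw [← tupleMap_mul, hg']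
    exact funext fun l => Matrix.one_mulVec (y l)
  rw [← Set.image_eq_preimage_of_inverse (f := tupleMap (g⁻¹).1)
    (h g g⁻¹ (mul_inv_cancel g)) (h g⁻¹ g (inv_mul_cancel g))]
  exact hS.image (continuous_tupleMap _)

lemma volume_preimage_tupleMap (g : SLR n) {S : Set (Fin k → Fin n → ℝ)} (hS : MeasurableSet S) :
    volume (tupleMap g.1 ⁻¹' S) = volume S := by
  have h : MeasurePreserving (Matrix.toLin' g.1) volume volume := by
    refine ⟨(continuous_const.matrix_mulVec continuous_id).measurable, ?_⟩
    rw [Real.map_matrix_volume_pi_eq_smul_volume_pi (by rw [g.2]; exact one_ne_zero), g.2]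
    simp
  exact (volume_preserving_pi fun _ : Fin k => h).measure_preimage hS.nullMeasurableSet

end LatticeTuples

section HeckeMean

variable {n k p : ℕ} [Fact p.Prime]

/-- The action of `heckeMatrix a` on linearly independent tuples. -/
noncomputable def heckeTuple (a : NonzeroCovector n p) (j : IndepTuple n k) : IndepTuple n k :=
  ⟨fun l => (heckeMatrix a).mulVec (j.1 l), j.2.map' (heckeMatrix a).mulVecLin <|
    LinearMap.ker_eq_bot.2 (Matrix.mulVec_injective_of_det_ne_zero (det_heckeMatrix_ne_zero a))⟩

lemma heckeTuple_injective (a : NonzeroCovector n p) :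
    Function.Injective (heckeTuple (k := k) a) := fun _ _ h =>
  Subtype.ext <| funext fun l =>
    Matrix.mulVec_injective_of_det_ne_zero (det_heckeMatrix_ne_zero a)
      (congr_fun (congr_arg Subtype.val h) l)

lemma mem_range_heckeTuple {a : NonzeroCovector n p} {j : IndepTuple n k} :
    j ∈ Set.range (heckeTuple a) ↔ (modMatrix p j.1).mulVec a.1 = 0 := by
  have h : (modMatrix p j.1).mulVec a.1 = 0 ↔ ∀ l, modPairing a.1 (j.1 l) = 0 := by
    rw [funext_iff]
    exact forall_congr' fun l => by rw [modPairing, dotProduct_comm]; rfl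
  rw [h]
  refine ⟨?_, fun hj => ?_⟩
  · rintro ⟨i, rfl⟩ l
    exact (exists_heckeMatrix_mulVec_eq_iff a).1 ⟨_, rfl⟩
  · choose x hx using fun l => (exists_heckeMatrix_mulVec_eq_iff a).2 (hj l)
    have hxj : (heckeMatrix a).mulVecLin ∘ x = j.1 := funext hx
    exact ⟨⟨x, .of_comp (heckeMatrix a).mulVecLin (hxj ▸ j.2)⟩, Subtype.ext (funext hx)⟩

lemma tsum_indicator_range_heckeTuple (j : IndepTuple n k) (r : ℝ≥0∞) :
    ∑' a : NonzeroCovector n p, (Set.range (heckeTuple a)).indicator (fun _ => r) j =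
      r * annihilatorCount p j.1 := by
  have hcard : annihilatorCount p j.1 =
      Nat.card {a : NonzeroCovector n p | (modMatrix p j.1).mulVec a.1 = 0} :=
    Nat.card_congr (Equiv.subtypeSubtypeEquivSubtypeInter _ _).symm
  have hind : ∀ a : NonzeroCovector n p, (Set.range (heckeTuple a)).indicator (fun _ => r) j =
      {a : NonzeroCovector n p | (modMatrix p j.1).mulVec a.1 = 0}.indicator (fun _ => r) a :=
    fun _ => Set.indicator_const_eq_indicator_const mem_range_heckeTuple
  simp_rw [hind]
  rw [← tsum_subtype, ENNReal.tsum_const, ENat.card_eq_coe_natCard, hcard, mul_comm]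
  rfl

variable [NeZero n]

lemma lintegral_latticeTuples_heckeMeasure (g : SLR n) {S : Set (Fin k → Fin n → ℝ)}
    (hS : MeasurableSet S) :
    ∫⁻ y, latticeTuples k y S ∂heckeMeasure p (g : Xn n) =
      (Nat.card (NonzeroCovector n p) : ℝ≥0∞)⁻¹ * ∑' j : IndepTuple n k,
        (tupleMap g.1 ⁻¹' S).indicator 1 (heckeScale n p • realTuple j.1) *
          (annihilatorCount p j.1 : ℝ≥0∞) := by
  let f : IndepTuple n k → ℝ≥0∞ := fun j =>
    (tupleMap g.1 ⁻¹' S).indicator 1 (heckeScale n p • realTuple j.1)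
  have hf : ∀ (a : NonzeroCovector n p) i,
      S.indicator 1 (tupleFamily n k (g * heckePoint a) i) = f (heckeTuple a i) :=
    fun a i => congr_arg (S.indicator 1) <| by
      have h : tupleMap (heckePoint a).1 (realTuple i.1) =
          heckeScale n p • realTuple (heckeTuple a i).1 := by
        rw [heckeTuple, ← tupleMap_intCast_realTuple]
        exact funext fun l => Matrix.smul_mulVec _ _ _
      exact (tupleMap_mul _ _ _).trans (congr_arg (tupleMap g.1) h)
  rw [lintegral_heckeMeasure_mk g (measurable_latticeTuples_apply hS)]
  congr 1
  calc ∑' a, latticeTuples k ((g * heckePoint a : SLR n) : Xn n) S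
      = ∑' a, ∑' i, f (heckeTuple a i) :=
        tsum_congr fun a => (latticeTuples_mk_apply _ hS).trans (tsum_congr (hf a))
    _ = ∑' a, ∑' j, (Set.range (heckeTuple a)).indicator f j := tsum_congr fun a => by
        rw [← tsum_subtype]
        exact (tsum_range f (heckeTuple_injective a)).symm
    _ = ∑' j, ∑' a, (Set.range (heckeTuple a)).indicator f j := ENNReal.tsum_comm
    _ = ∑' j, f j * (annihilatorCount p j.1 : ℝ≥0∞) :=
        tsum_congr fun j => tsum_indicator_range_heckeTuple j (f j)

end HeckeMean

section HeckeMeanAsymptotics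

variable {n k : ℕ}

lemma tendsto_nth_prime : Tendsto (Nat.nth Nat.Prime) atTop atTop :=
  (Nat.nth_strictMono Nat.infinite_setOfPred_prime).tendsto_atTop

instance (m : ℕ) : Fact (Nat.nth Nat.Prime m).Prime := ⟨Nat.prime_nth_prime m⟩

section Prime

variable {p : ℕ} [Fact p.Prime]

lemma ofReal_heckeScale_pow [NeZero n] (k : ℕ) :
    ENNReal.ofReal (heckeScale n p) ^ (k * n) = ((p : ℝ≥0∞) ^ k)⁻¹ := by
  rw [mul_comm, pow_mul, ← ENNReal.ofReal_pow heckeScale_pos.le, heckeScale_pow,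
    ENNReal.ofReal_inv_of_pos (Nat.cast_pos.2 (Fact.out : p.Prime).pos), ENNReal.ofReal_natCast,
    ENNReal.inv_pow]

lemma annihilatorCount_le_of_norm_le [NeZero n] (hkn : k ≤ n) (j : IndepTuple n k) {R : ℝ}
    (hR : ‖heckeScale n p • realTuple j.1‖ ≤ R)
    (hp : k.factorial * R ^ k * heckeScale n p ^ (n - k) < 1) :
    annihilatorCount p j.1 ≤ p ^ (n - k) := by
  set c := heckeScale n p
  have hc : 0 < c := heckeScale_pos
  have hB : ∀ l i, |(j.1 l i : ℝ)| ≤ R / c := fun l i => by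
    rw [le_div_iff₀ hc]
    calc |(j.1 l i : ℝ)| * c = ‖(c • realTuple j.1) l i‖ := by
          simp [realTuple, abs_of_pos hc, mul_comm]
      _ ≤ ‖c • realTuple j.1‖ := (norm_le_pi_norm _ i).trans (norm_le_pi_norm _ l)
      _ ≤ R := hR
  have hcp : c ^ k * c ^ (n - k) * p = 1 := by
    rw [← pow_add, Nat.add_sub_cancel' hkn, heckeScale_pow,
      inv_mul_cancel₀ (Nat.cast_ne_zero.2 (Fact.out : p.Prime).ne_zero)]
  have hBp : k.factorial * (R / c) ^ k < p := by
    rw [div_pow, ← mul_div_assoc, div_lt_iff₀ (pow_pos hc k)]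
    refine lt_of_mul_lt_mul_right ?_ (pow_pos hc (n - k)).le
    linarith
  simpa only [Fintype.card_fin] using annihilatorCount_le
    (linearIndependent_row_modMatrix j.2 hB (by simpa only [Fintype.card_fin] using hBp))

lemma tsum_indicator_mul_annihilatorCount_le [NeZero n] (hkn : k ≤ n)
    {T : Set (Fin k → Fin n → ℝ)} {R : ℝ}
    (hT : T ⊆ Metric.closedBall 0 R) (hp : k.factorial * R ^ k * heckeScale n p ^ (n - k) < 1) :
    ∑' j : IndepTuple n k, T.indicator 1 (heckeScale n p • realTuple j.1) *
        (annihilatorCount p j.1 : ℝ≥0∞) ≤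
      (p : ℝ≥0∞) ^ n * volume (Metric.cthickening (heckeScale n p) T) := by
  set c := heckeScale n p
  have hp0 : (p : ℝ≥0∞) ^ k ≠ 0 :=
    pow_ne_zero _ (Nat.cast_ne_zero.2 (Fact.out : p.Prime).ne_zero)
  have hp1 : (p : ℝ≥0∞) ^ k ≠ ∞ := ENNReal.pow_ne_top (ENNReal.natCast_ne_top p)
  calc ∑' j : IndepTuple n k, T.indicator 1 (c • realTuple j.1) *
          (annihilatorCount p j.1 : ℝ≥0∞)
      ≤ ∑' j : IndepTuple n k, T.indicator 1 (c • realTuple j.1) * (p : ℝ≥0∞) ^ (n - k) := by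
        refine ENNReal.tsum_le_tsum fun j => ?_
        by_cases hj : c • realTuple j.1 ∈ T
        · gcongr
          exact_mod_cast annihilatorCount_le_of_norm_le hkn j (mem_closedBall_zero_iff.1 (hT hj)) hp
        · rw [Set.indicator_of_notMem hj, zero_mul, zero_mul]
    _ ≤ tupleCount c T * (p : ℝ≥0∞) ^ (n - k) := by
        rw [ENNReal.tsum_mul_right]
        gcongr
        exact ENNReal.tsum_comp_le_tsum_of_injective Subtype.val_injective _
    _ = (p : ℝ≥0∞) ^ n * (ENNReal.ofReal c ^ (k * n) * tupleCount c T) := by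
        have hpow : (p : ℝ≥0∞) ^ n = p ^ (n - k) * p ^ k := by
          rw [← pow_add, Nat.sub_add_cancel hkn]
        rw [ofReal_heckeScale_pow, hpow, mul_assoc, ENNReal.mul_inv_cancel_left hp0 hp1, mul_comm]
    _ ≤ (p : ℝ≥0∞) ^ n * volume (Metric.cthickening c T) := by
        gcongr
        simpa only [Fintype.card_fin] using tupleCount_le_volume_cthickening heckeScale_pos T

lemma one_sub_inv_mul_le_annihilatorCount (hn : 2 ≤ n) (j : Fin 1 → Fin n → ℤ) :
    (1 - (p : ℝ≥0∞)⁻¹) * (p : ℝ≥0∞) ^ (n - 1) ≤ annihilatorCount p j := by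
  have hp : p.Prime := Fact.out
  have hone : 1 ≤ (p : ℝ≥0∞)⁻¹ * (p : ℝ≥0∞) ^ (n - 1) := by
    rw [← ENNReal.div_eq_inv_mul, ENNReal.le_div_iff_mul_le (Or.inl (by simp [hp.ne_zero]))
      (Or.inl (ENNReal.natCast_ne_top p)), one_mul]
    exact_mod_cast Nat.le_self_pow (by omega) p
  have hann : (p : ℝ≥0∞) ^ (n - 1) ≤ annihilatorCount p j + 1 := by
    have := le_annihilatorCount_add_one (p := p) j
    rw [Fintype.card_fin, Fintype.card_fin] at this
    exact_mod_cast this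
  rw [ENNReal.sub_mul fun _ _ => ENNReal.pow_ne_top (ENNReal.natCast_ne_top p), one_mul,
    tsub_le_iff_right]
  exact hann.trans (by gcongr)

lemma linearIndependent_fin_one_iff {j : Fin 1 → Fin n → ℤ} :
    LinearIndependent ℤ j ↔ j 0 ≠ 0 := by
  rw [linearIndependent_unique_iff]
  rfl

lemma add_tsum_indepTuple_one (f : (Fin 1 → Fin n → ℤ) → ℝ≥0∞) :
    f 0 + ∑' j : IndepTuple n 1, f j.1 = ∑' j, f j := by
  rw [ENNReal.tsum_eq_add_tsum_ite (f := f) 0]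
  congr 1
  refine (tsum_subtype {j | LinearIndependent ℤ j} f).trans (tsum_congr fun j => ?_)
  have hj : j = 0 ↔ ¬ LinearIndependent ℤ j := by
    rw [linearIndependent_fin_one_iff, not_not, funext_iff, Fin.forall_fin_one]
    rfl
  by_cases h : j = 0
  · rw [if_pos h, Set.indicator_of_notMem (hj.1 h)]
  · rw [if_neg h, Set.indicator_of_mem (not_not.1 (mt hj.2 h))]

lemma inv_le_inv_natCard_nonzeroCovector_mul (hn : 1 ≤ n) :
    (p : ℝ≥0∞)⁻¹ ≤ (Nat.card (NonzeroCovector n p) : ℝ≥0∞)⁻¹ * (p : ℝ≥0∞) ^ (n - 1) := by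
  have hp0 : (p : ℝ≥0∞) ≠ 0 := Nat.cast_ne_zero.2 (Fact.out : p.Prime).ne_zero
  have hpow : (p : ℝ≥0∞) ^ n = p * p ^ (n - 1) := by rw [← pow_succ', Nat.sub_add_cancel hn]
  calc (p : ℝ≥0∞)⁻¹ = ((p : ℝ≥0∞) ^ n)⁻¹ * (p : ℝ≥0∞) ^ (n - 1) := by
        rw [hpow, ENNReal.mul_inv (Or.inl hp0) (Or.inl (ENNReal.natCast_ne_top p)), mul_assoc,
          ENNReal.inv_mul_cancel (pow_ne_zero _ hp0)
            (ENNReal.pow_ne_top (ENNReal.natCast_ne_top p)), mul_one]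
    _ ≤ _ := by
        gcongr
        rw [natCard_nonzeroCovector]
        exact_mod_cast Nat.sub_le _ _

lemma le_lintegral_latticeTuples_heckeMeasure [NeZero n] (hn : 2 ≤ n) (g : SLR n)
    {K U : Set (Fin 1 → Fin n → ℝ)} (hU : MeasurableSet U)
    (h : Metric.cthickening (heckeScale n p) K ⊆ tupleMap g.1 ⁻¹' U) :
    (1 - (p : ℝ≥0∞)⁻¹) * (volume K - (p : ℝ≥0∞)⁻¹) ≤
      ∫⁻ y, latticeTuples 1 y U ∂heckeMeasure p (g : Xn n) := by
  set c := heckeScale n p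
  set T := tupleMap g.1 ⁻¹' U
  have hcount : volume K - (p : ℝ≥0∞)⁻¹ ≤
      (p : ℝ≥0∞)⁻¹ * ∑' j : IndepTuple n 1, T.indicator 1 (c • realTuple j.1) := by
    rw [tsub_le_iff_left]
    calc volume K ≤ (p : ℝ≥0∞)⁻¹ * tupleCount c T := by
          simpa only [Fintype.card_fin, ofReal_heckeScale_pow, pow_one] using
            volume_le_tupleCount heckeScale_pos h
      _ = (p : ℝ≥0∞)⁻¹ * (T.indicator 1 (c • realTuple (0 : Fin 1 → Fin n → ℤ)) +
            ∑' j : IndepTuple n 1, T.indicator 1 (c • realTuple j.1)) := by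
          rw [add_tsum_indepTuple_one fun j => T.indicator 1 (c • realTuple j)]
          rfl
      _ ≤ _ := by
          rw [mul_add]
          gcongr
          exact mul_le_of_le_one_right' (Set.indicator_le_self' (fun _ _ => zero_le) _)
  rw [lintegral_latticeTuples_heckeMeasure g hU]
  calc (1 - (p : ℝ≥0∞)⁻¹) * (volume K - (p : ℝ≥0∞)⁻¹)
      ≤ (1 - (p : ℝ≥0∞)⁻¹) * ((Nat.card (NonzeroCovector n p) : ℝ≥0∞)⁻¹ * (p : ℝ≥0∞) ^ (n - 1) *
          ∑' j : IndepTuple n 1, T.indicator 1 (c • realTuple j.1)) := by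
        gcongr
        exact hcount.trans (by gcongr; exact inv_le_inv_natCard_nonzeroCovector_mul (by omega))
    _ = (Nat.card (NonzeroCovector n p) : ℝ≥0∞)⁻¹ * ∑' j : IndepTuple n 1,
          T.indicator 1 (c • realTuple j.1) * ((1 - (p : ℝ≥0∞)⁻¹) * (p : ℝ≥0∞) ^ (n - 1)) := by
        rw [ENNReal.tsum_mul_right]
        ring
    _ ≤ _ := by
        gcongr with j
        exact one_sub_inv_mul_le_annihilatorCount hn j.1

end Prime

variable [NeZero n]

lemma tendsto_heckeScale : Tendsto (heckeScale n) atTop (𝓝 0) := by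
  have h : Tendsto (fun x : ℝ => x ^ ((n : ℝ)⁻¹)) (𝓝 0) (𝓝 (0 ^ ((n : ℝ)⁻¹))) :=
    (Real.continuousAt_rpow_const _ _ (Or.inr (by positivity))).tendsto
  rw [Real.zero_rpow (inv_ne_zero (Nat.cast_ne_zero.2 (NeZero.ne n)))] at h
  exact h.comp tendsto_inv_atTop_nhds_zero_nat

lemma tendsto_inv_natCard_nonzeroCovector_mul :
    Tendsto (fun m => (Nat.card (NonzeroCovector n (Nat.nth Nat.Prime m)) : ℝ≥0∞)⁻¹ *
      (Nat.nth Nat.Prime m : ℝ≥0∞) ^ n) atTop (𝓝 1) := by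
  have hN : Tendsto (fun p : ℕ => p ^ n - 1) atTop atTop :=
    (tendsto_sub_atTop_nat 1).comp (tendsto_pow_atTop (NeZero.ne n))
  have h := (ENNReal.tendsto_inv_nat_nhds_zero.comp (hN.comp tendsto_nth_prime)).const_add 1
  rw [add_zero] at h
  refine h.congr fun m => ?_
  have hcard : Nat.card (NonzeroCovector n (Nat.nth Nat.Prime m)) ≠ 0 := Nat.card_pos.ne'
  have hpow : (Nat.nth Nat.Prime m : ℝ≥0∞) ^ n =
      Nat.card (NonzeroCovector n (Nat.nth Nat.Prime m)) + 1 := by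
    rw [natCard_nonzeroCovector]
    exact_mod_cast (Nat.sub_add_cancel (Nat.pow_pos (Nat.prime_nth_prime m).pos)).symm
  rw [hpow, mul_add, mul_one, ENNReal.inv_mul_cancel (Nat.cast_ne_zero.2 hcard)
    (ENNReal.natCast_ne_top _), natCard_nonzeroCovector]
  rfl

theorem limsup_lintegral_latticeTuples_heckeMeasure_le (hkn : k < n) (x : Xn n)
    {S : Set (Fin k → Fin n → ℝ)} (hS : IsCompact S) :
    limsup (fun m => ∫⁻ y, latticeTuples k y S ∂heckeMeasure (Nat.nth Nat.Prime m) x) atTop ≤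
      volume S := by
  induction x using QuotientGroup.induction_on with | H g => ?_
  set T := tupleMap g.1 ⁻¹' S
  have hT : IsCompact T := isCompact_preimage_tupleMap g hS
  obtain ⟨R, hR⟩ := hT.isBounded.subset_closedBall 0
  have hscale := (tendsto_heckeScale (n := n)).comp tendsto_nth_prime
  have hlim : Tendsto (fun m => (Nat.card (NonzeroCovector n (Nat.nth Nat.Prime m)) : ℝ≥0∞)⁻¹ *
      (Nat.nth Nat.Prime m : ℝ≥0∞) ^ n * volume (Metric.cthickening
        (heckeScale n (Nat.nth Nat.Prime m)) T)) atTop (𝓝 (1 * volume S)) := by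
    rw [← volume_preimage_tupleMap g hS.measurableSet]
    exact ENNReal.Tendsto.mul tendsto_inv_natCard_nonzeroCovector_mul (Or.inl one_ne_zero)
      ((tendsto_measure_cthickening_of_isCompact hT).comp hscale) (Or.inr ENNReal.one_ne_top)
  have hsmall : Tendsto (fun m => k.factorial * R ^ k *
      heckeScale n (Nat.nth Nat.Prime m) ^ (n - k)) atTop (𝓝 0) := by
    have := (hscale.pow (n - k)).const_mul (k.factorial * R ^ k)
    rwa [zero_pow (by omega), mul_zero] at this
  rw [one_mul] at hlim
  rw [← hlim.limsup_eq]
  refine limsup_le_limsup ?_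
  filter_upwards [hsmall.eventually_lt_const one_pos] with m hm
  rw [lintegral_latticeTuples_heckeMeasure g hS.measurableSet, mul_assoc]
  gcongr
  exact tsum_indicator_mul_annihilatorCount_le hkn.le hR hm

theorem le_liminf_lintegral_latticeTuples_heckeMeasure (hn : 2 ≤ n) (x : Xn n)
    {K U : Set (Fin 1 → Fin n → ℝ)} (hK : IsCompact K) (hU : IsOpen U) (hKU : K ⊆ U) :
    volume K ≤
      liminf (fun m => ∫⁻ y, latticeTuples 1 y U ∂heckeMeasure (Nat.nth Nat.Prime m) x) atTop := by
  induction x using QuotientGroup.induction_on with | H g => ?_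
  obtain ⟨δ, hδ, hδU⟩ := (isCompact_preimage_tupleMap g hK).exists_cthickening_subset_open
    (hU.preimage (continuous_tupleMap g.1)) (Set.preimage_mono hKU)
  have hinv : Tendsto (fun m => (Nat.nth Nat.Prime m : ℝ≥0∞)⁻¹) atTop (𝓝 0) :=
    ENNReal.tendsto_inv_nat_nhds_zero.comp tendsto_nth_prime
  have hsub : ∀ a : ℝ≥0∞, Tendsto (fun m => a - (Nat.nth Nat.Prime m : ℝ≥0∞)⁻¹) atTop (𝓝 a) :=
    fun a => by
      simpa only [tsub_zero] using
        ENNReal.Tendsto.sub tendsto_const_nhds hinv (Or.inr ENNReal.zero_ne_top)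
  have hlim : Tendsto (fun m => (1 - (Nat.nth Nat.Prime m : ℝ≥0∞)⁻¹) *
      (volume K - (Nat.nth Nat.Prime m : ℝ≥0∞)⁻¹)) atTop (𝓝 (1 * volume K)) :=
    ENNReal.Tendsto.mul (hsub 1) (Or.inl one_ne_zero) (hsub _) (Or.inr ENNReal.one_ne_top)
  rw [← one_mul (volume K), ← hlim.liminf_eq]
  refine liminf_le_liminf ?_
  filter_upwards [((tendsto_heckeScale (n := n)).comp tendsto_nth_prime).eventually_le_const hδ]
    with m hm
  rw [← volume_preimage_tupleMap g hK.measurableSet]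
  exact le_lintegral_latticeTuples_heckeMeasure hn g hU.measurableSet
    ((Metric.cthickening_mono hm _).trans hδU)

end HeckeMeanAsymptotics

section SiegelRogers

variable {n k : ℕ}

/-- The intensity measure of the linearly independent `k`-tuples of vectors of a `μ`-random
lattice. -/
noncomputable def tupleIntensity (k : ℕ) (μ : Measure (Xn n)) : Measure (Fin k → Fin n → ℝ) :=
  μ.bind (latticeTuples k)

lemma tupleIntensity_apply (μ : Measure (Xn n)) {S : Set (Fin k → Fin n → ℝ)}
    (hS : MeasurableSet S) : tupleIntensity k μ S = ∫⁻ x, latticeTuples k x S ∂μ :=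
  Measure.bind_apply hS measurable_latticeTuples.aemeasurable

lemma lintegral_eq_iSup_lintegral_min {Ω : Type*} [MeasurableSpace Ω] (μ : Measure Ω)
    {f : Ω → ℝ≥0∞} (hf : Measurable f) : ∫⁻ x, f x ∂μ = ⨆ L : ℕ, ∫⁻ x, min (f x) L ∂μ := by
  rw [← lintegral_iSup (fun L => hf.min measurable_const)
    fun L L' h x => min_le_min_left _ (Nat.cast_le.2 h)]
  refine lintegral_congr fun x => ?_
  have := inf_iSup_eq (f x) fun L : ℕ => (L : ℝ≥0∞)
  rwa [ENNReal.iSup_natCast, inf_top_eq] at this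

variable [NeZero n] (μ : Measure (Xn n)) [IsProbabilityMeasure μ]
  [SMulInvariantMeasure (SLR n) (Xn n) μ]

lemma lintegral_min_le_lintegral_min_heckeMeasure (p : ℕ) [Fact p.Prime] {F : Xn n → ℝ≥0∞}
    (hF : Measurable F) (L : ℝ≥0∞) :
    ∫⁻ x, min (F x) L ∂μ ≤ ∫⁻ x, min (∫⁻ y, F y ∂heckeMeasure p x) L ∂μ := by
  rw [← lintegral_lintegral_heckeMeasure (p := p) μ (hF.min measurable_const)]
  refine lintegral_mono fun x => le_min (lintegral_mono fun y => min_le_left _ _) ?_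
  refine (lintegral_mono fun y => min_le_right _ _).trans ?_
  rw [lintegral_const, measure_univ, mul_one]

lemma tupleIntensity_le_of_isCompact (hkn : k < n) {S : Set (Fin k → Fin n → ℝ)}
    (hS : IsCompact S) : tupleIntensity k μ S ≤ volume S := by
  have hmeas : Measurable fun x : Xn n => latticeTuples k x S :=
    measurable_latticeTuples_apply hS.measurableSet
  rw [tupleIntensity_apply μ hS.measurableSet, lintegral_eq_iSup_lintegral_min μ hmeas]
  refine iSup_le fun L => ?_
  let f : ℕ → Xn n → ℝ≥0∞ := fun m x =>
    min (∫⁻ y, latticeTuples k y S ∂heckeMeasure (Nat.nth Nat.Prime m) x) L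
  have hf : ∀ m, Measurable (f m) := fun m =>
    ((Measure.measurable_lintegral hmeas).comp measurable_heckeMeasure).min measurable_const
  calc ∫⁻ x, min (latticeTuples k x S) L ∂μ ≤ limsup (fun m => ∫⁻ x, f m x ∂μ) atTop :=
        le_limsup_of_frequently_le <| Frequently.of_forall fun m =>
          lintegral_min_le_lintegral_min_heckeMeasure μ (Nat.nth Nat.Prime m) hmeas L
    _ ≤ ∫⁻ x, limsup (fun m => f m x) atTop ∂μ :=
        limsup_lintegral_le (fun _ => (L : ℝ≥0∞)) hf
          (fun m => Eventually.of_forall fun x => min_le_right _ _) (by simp)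
    _ ≤ ∫⁻ _, volume S ∂μ := lintegral_mono fun x =>
        (limsup_le_limsup (Eventually.of_forall fun m => min_le_left _ _)).trans
          (limsup_lintegral_latticeTuples_heckeMeasure_le hkn x hS)
    _ = volume S := by rw [lintegral_const, measure_univ, mul_one]

lemma isFiniteMeasureOnCompacts_tupleIntensity (hkn : k < n) :
    IsFiniteMeasureOnCompacts (tupleIntensity k μ) :=
  ⟨fun _ hK => (tupleIntensity_le_of_isCompact μ hkn hK).trans_lt hK.measure_lt_top⟩

theorem tupleIntensity_le (hkn : k < n) : tupleIntensity k μ ≤ volume := by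
  have := isFiniteMeasureOnCompacts_tupleIntensity μ hkn
  refine Measure.le_iff.2 fun S hS => ?_
  rw [hS.measure_eq_iSup_isCompact]
  exact iSup₂_le fun K hKS => iSup_le fun hK =>
    (tupleIntensity_le_of_isCompact μ hkn hK).trans (measure_mono hKS)

lemma volume_le_tupleIntensity_of_isCompact (hn : 2 ≤ n) {K U : Set (Fin 1 → Fin n → ℝ)}
    (hK : IsCompact K) (hU : IsOpen U) (hKU : K ⊆ U) : volume K ≤ tupleIntensity 1 μ U := by
  let f : ℕ → Xn n → ℝ≥0∞ := fun m x =>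
    ∫⁻ y, latticeTuples 1 y U ∂heckeMeasure (Nat.nth Nat.Prime m) x
  have hmeas : Measurable fun x : Xn n => latticeTuples 1 x U :=
    measurable_latticeTuples_apply hU.measurableSet
  calc volume K = ∫⁻ _, volume K ∂μ := by rw [lintegral_const, measure_univ, mul_one]
    _ ≤ ∫⁻ x, liminf (fun m => f m x) atTop ∂μ :=
        lintegral_mono fun x => le_liminf_lintegral_latticeTuples_heckeMeasure hn x hK hU hKU
    _ ≤ liminf (fun m => ∫⁻ x, f m x ∂μ) atTop := lintegral_liminf_le fun m =>
        (Measure.measurable_lintegral hmeas).comp measurable_heckeMeasure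
    _ = tupleIntensity 1 μ U := by
        simp_rw [f, lintegral_lintegral_heckeMeasure μ hmeas]
        rw [liminf_const, tupleIntensity_apply μ hU.measurableSet]

theorem tupleIntensity_one (hn : 2 ≤ n) : tupleIntensity 1 μ = volume := by
  have := isFiniteMeasureOnCompacts_tupleIntensity (k := 1) μ (by omega)
  refine (tupleIntensity_le μ (by omega)).antisymm <| Measure.le_iff.2 fun S _ => ?_
  rw [S.measure_eq_iInf_isOpen (tupleIntensity 1 μ)]
  refine le_iInf₂ fun U hSU => le_iInf fun hU => (measure_mono hSU).trans ?_
  have : (volume : Measure (Fin 1 → Fin n → ℝ)).Regular :=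
    Measure.Regular.of_sigmaCompactSpace_of_isLocallyFiniteMeasure _
  rw [hU.measure_eq_iSup_isCompact]
  exact iSup₂_le fun K hKU => iSup_le fun hK => volume_le_tupleIntensity_of_isCompact μ hn hK hU hKU

end SiegelRogers

section DependentPairs

variable {n : ℕ}

/-- The coprime pairs of positive integers. -/
abbrev CoprimePair := {q : ℕ+ × ℕ+ // Nat.Coprime q.1 q.2}

lemma exists_units_mul_pnat {z : ℤ} (hz : z ≠ 0) : ∃ (s : ℤˣ) (k : ℕ+), z = s * (k : ℕ) := by
  refine (Int.natAbs_eq z).elim (fun h => ⟨1, ⟨_, Int.natAbs_pos.2 hz⟩, ?_⟩)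
    fun h => ⟨-1, ⟨_, Int.natAbs_pos.2 hz⟩, ?_⟩ <;> simpa using h

lemma exists_isCoprime_smul_add_smul_eq_zero {v w : Fin n → ℤ}
    (h : ¬LinearIndependent ℤ ![v, w]) : ∃ a b : ℤ, IsCoprime a b ∧ a • v + b • w = 0 := by
  rw [LinearIndependent.pair_iff] at h
  push Not at h
  obtain ⟨a, b, hab, hne⟩ := h
  have hd : Int.gcd a b ≠ 0 := fun h => hne (Int.gcd_eq_zero_iff.1 h).1 (Int.gcd_eq_zero_iff.1 h).2
  obtain ⟨a', b', hcop, ha, hb⟩ := Int.exists_gcd_one (Nat.pos_of_ne_zero hd)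
  have hrel : (Int.gcd a b : ℤ) • (a' • v + b' • w) = 0 := by
    rw [smul_add, smul_smul, smul_smul, mul_comm _ a', mul_comm _ b', ← ha, ← hb, hab]
  exact ⟨a', b', Int.isCoprime_iff_gcd_eq_one.2 hcop,
    (smul_eq_zero.1 hrel).resolve_left (Int.natCast_ne_zero.2 hd)⟩

lemma exists_isCoprime_smul_eq {v w : Fin n → ℤ} (h : ¬LinearIndependent ℤ ![v, w]) :
    ∃ (a b : ℤ) (u : Fin n → ℤ), IsCoprime a b ∧ v = a • u ∧ w = b • u := by
  obtain ⟨a, b, hab, hrel⟩ := exists_isCoprime_smul_add_smul_eq_zero h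
  have hrel' : ∀ i, a * v i + b * w i = 0 := congr_fun hrel
  obtain ⟨r, s, hrs⟩ := hab
  refine ⟨b, -a, fun i => s * v i - r * w i, ⟨s, -r, by linarith⟩, ?_, ?_⟩ <;> ext i
  · change v i = b * (s * v i - r * w i)
    linear_combination -v i * hrs + r * hrel' i
  · change w i = -a * (s * v i - r * w i)
    linear_combination -w i * hrs + s * hrel' i

lemma exists_coprimePair_smul_eq {v w : Fin n → ℤ} (hv : v ≠ 0) (hw : w ≠ 0)
    (h : ¬LinearIndependent ℤ ![v, w]) : ∃ (q : CoprimePair) (s : ℤˣ) (u : Fin n → ℤ),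
      u ≠ 0 ∧ v = (q.1.1 : ℤ) • u ∧ w = (s * q.1.2 : ℤ) • u := by
  obtain ⟨a, b, u, hab, rfl, rfl⟩ := exists_isCoprime_smul_eq h
  obtain ⟨s, k, rfl⟩ := exists_units_mul_pnat (left_ne_zero_of_smul hv)
  obtain ⟨t, l, rfl⟩ := exists_units_mul_pnat (left_ne_zero_of_smul hw)
  have hkl : Nat.Coprime k l :=
    Nat.isCoprime_iff_coprime.1 ((isCoprime_mul_units_left s.isUnit t.isUnit _ _).1 hab)
  have hs : (s : ℤ) * s = 1 := by rw [← Units.val_mul, Int.units_mul_self, Units.val_one]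
  refine ⟨⟨(k, l), hkl⟩, t * s, (s : ℤ) • u,
    smul_ne_zero s.ne_zero (right_ne_zero_of_smul hv), ?_, ?_⟩
  · rw [smul_smul, mul_comm]
  · rw [smul_smul, Units.val_mul, mul_right_comm, mul_assoc _ _ (s : ℤ), hs, mul_one]

/-- The nonzero integral vectors. -/
abbrev NonzeroVector (n : ℕ) := {v : Fin n → ℤ // v ≠ 0}

lemma sq_tsum_nonzeroVector_le (f : (Fin n → ℤ) → ℝ≥0∞) :
    (∑' v : NonzeroVector n, f v.1) ^ 2 ≤ ∑' j : IndepTuple n 2, f (j.1 0) * f (j.1 1) +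
      ∑' q : CoprimePair × ℤˣ, ∑' u : NonzeroVector n,
        f ((q.1.1.1 : ℤ) • u.1) * f ((q.2 * q.1.1.2 : ℤ) • u.1) := by
  let F : NonzeroVector n × NonzeroVector n → ℝ≥0∞ := fun q => f q.1.1 * f q.2.1
  let D : Set (NonzeroVector n × NonzeroVector n) := {q | LinearIndependent ℤ ![q.1.1, q.2.1]}
  have hsq : (∑' v : NonzeroVector n, f v.1) ^ 2 = ∑' q, F q := by
    rw [sq, ENNReal.tsum_prod']
    simp_rw [F, ENNReal.tsum_mul_left, ENNReal.tsum_mul_right]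
  have hindep : ∑' q : D, F q.1 ≤ ∑' j : IndepTuple n 2, f (j.1 0) * f (j.1 1) :=
    ENNReal.tsum_comp_le_tsum_of_injective
      (f := fun q : D => (⟨![q.1.1.1, q.1.2.1], q.2⟩ : IndepTuple n 2))
      (fun q q' h => Subtype.ext <| Prod.ext
        (Subtype.ext (congr_fun (congr_arg Subtype.val h) 0))
        (Subtype.ext (congr_fun (congr_arg Subtype.val h) 1)))
      fun j => f (j.1 0) * f (j.1 1)
  have hparam : ∀ q : (Dᶜ : Set _), ∃ r : (CoprimePair × ℤˣ) × NonzeroVector n,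
      q.1.1.1 = (r.1.1.1.1 : ℤ) • r.2.1 ∧ q.1.2.1 = (r.1.2 * r.1.1.1.2 : ℤ) • r.2.1 := fun q => by
    obtain ⟨r, s, u, hu, h1, h2⟩ := exists_coprimePair_smul_eq q.1.1.2 q.1.2.2 q.2
    exact ⟨((r, s), ⟨u, hu⟩), h1, h2⟩
  choose r hr1 hr2 using hparam
  have hr : Function.Injective r := fun q q' h => by
    refine Subtype.ext (Prod.ext (Subtype.ext ?_) (Subtype.ext ?_))
    · rw [hr1, hr1 q', h]
    · rw [hr2, hr2 q', h]
  rw [hsq, ← ENNReal.summable.tsum_add_tsum_compl (s := D) ENNReal.summable, ← ENNReal.tsum_prod]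
  refine add_le_add hindep ?_
  calc ∑' q : (Dᶜ : Set _), F q.1
      = ∑' q, f (((r q).1.1.1.1 : ℤ) • (r q).2.1) *
          f (((r q).1.2 * (r q).1.1.1.2 : ℤ) • (r q).2.1) :=
        tsum_congr fun q => by rw [← hr1, ← hr2]
    _ ≤ _ := ENNReal.tsum_comp_le_tsum_of_injective hr _

end DependentPairs

section VectorCount

variable {n : ℕ}

/-- The number of nonzero vectors of a lattice in `A`, possibly infinite. -/
noncomputable def vectorCount (A : Set (Fin n → ℝ)) (x : Xn n) : ℝ≥0∞ :=
  latticeTuples 1 x {y | y 0 ∈ A}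

variable {A : Set (Fin n → ℝ)}

lemma measurable_vectorCount (hA : MeasurableSet A) : Measurable (vectorCount A) :=
  measurable_latticeTuples_apply (measurable_pi_apply 0 hA)

lemma vectorCount_mk (hA : MeasurableSet A) (g : SLR n) :
    vectorCount A (g : Xn n) =
      ∑' v : NonzeroVector n, A.indicator 1 (g.1.mulVec fun i => (v.1 i : ℝ)) := by
  let e : IndepTuple n 1 ≃ NonzeroVector n :=
    (Equiv.funUnique (Fin 1) (Fin n → ℤ)).subtypeEquiv fun _ => linearIndependent_fin_one_iff
  exact (latticeTuples_mk_apply g (measurable_pi_apply 0 hA)).trans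
    (e.tsum_eq fun v => A.indicator 1 (g.1.mulVec fun i => (v.1 i : ℝ)))

lemma vectorCount_mk_eq_encard (hA : MeasurableSet A) (g : SLR n) :
    vectorCount A (g : Xn n) = (nonzeroLatticePts g A).encard := by
  let φ : (Fin n → ℤ) → Fin n → ℝ := fun v => g.1.mulVec fun i => (v i : ℝ)
  calc vectorCount A (g : Xn n)
      = ∑' v, ({v | v ≠ 0} : Set (Fin n → ℤ)).indicator ((φ ⁻¹' A).indicator 1) v :=
        (vectorCount_mk hA g).trans (tsum_subtype {v | v ≠ 0} ((φ ⁻¹' A).indicator 1))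
    _ = ∑' v, (nonzeroLatticePts g A).indicator 1 v := by
        rw [Set.indicator_indicator]
        rfl
    _ = (nonzeroLatticePts g A).encard :=
        (tsum_subtype _ _).symm.trans (ENNReal.tsum_set_one _)

lemma vectorCount_mk_eq_top_iff (hA : MeasurableSet A) (g : SLR n) :
    vectorCount A (g : Xn n) = ⊤ ↔ (nonzeroLatticePts g A).Infinite := by
  rw [vectorCount_mk_eq_encard hA, ENat.toENNReal_eq_top, Set.encard_eq_top_iff]

lemma toReal_vectorCount_mk (hA : MeasurableSet A) (g : SLR n) :
    (vectorCount A (g : Xn n)).toReal = (nonzeroLatticePts g A).ncard := by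
  rw [vectorCount_mk_eq_encard hA, Set.ncard_def]
  cases (nonzeroLatticePts g A).encard <;> simp

lemma vectorCount_sq_le (hA : MeasurableSet A) (x : Xn n) :
    vectorCount A x ^ 2 ≤ latticeTuples 2 x (Set.univ.pi fun _ => A) +
      ∑' q : CoprimePair × ℤˣ, vectorCount
        (((q.1.1.1 : ℤ) • ·) ⁻¹' A ∩ ((q.2 * q.1.1.2 : ℤ) • ·) ⁻¹' A) x := by
  induction x using QuotientGroup.induction_on with | H g => ?_
  let φ : (Fin n → ℤ) → Fin n → ℝ := fun v => g.1.mulVec fun i => (v i : ℝ)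
  have hφ : ∀ (c : ℤ) v, φ (c • v) = c • φ v := fun c v => by
    have hcast : (fun i => ((c • v) i : ℝ)) = c • fun i => (v i : ℝ) :=
      funext fun i => by simp
    exact (congr_arg g.1.mulVec hcast).trans (Matrix.mulVec_smul _ _ _)
  have hpre : ∀ c : ℤ, MeasurableSet ((c • · : (Fin n → ℝ) → _) ⁻¹' A) := fun c =>
    measurable_const_smul c hA
  calc vectorCount A (g : Xn n) ^ 2
      ≤ ∑' j : IndepTuple n 2, A.indicator 1 (φ (j.1 0)) * A.indicator 1 (φ (j.1 1)) +
        ∑' q : CoprimePair × ℤˣ, ∑' u : NonzeroVector n,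
          A.indicator 1 (φ ((q.1.1.1 : ℤ) • u.1)) *
            A.indicator 1 (φ ((q.2 * q.1.1.2 : ℤ) • u.1)) := by
        rw [vectorCount_mk hA]
        exact sq_tsum_nonzeroVector_le fun v => A.indicator 1 (φ v)
    _ = _ := by
        rw [latticeTuples_mk_apply g (.univ_pi fun _ => hA)]
        congr 1
        · refine tsum_congr fun j => ?_
          rw [← Finset.coe_univ, Set.indicator_pi_one_apply, Fin.prod_univ_two]
          rfl
        · refine tsum_congr fun q => ?_
          rw [vectorCount_mk ((hpre _).inter (hpre _))]
          refine tsum_congr fun u => ?_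
          rw [Set.inter_indicator_one, hφ, hφ]
          rfl

variable (μ : Measure (Xn n)) [IsProbabilityMeasure μ] [SMulInvariantMeasure (SLR n) (Xn n) μ]

lemma lintegral_vectorCount [NeZero n] (hn : 2 ≤ n) (hA : MeasurableSet A) :
    ∫⁻ x, vectorCount A x ∂μ = volume A := by
  have hS : {y : Fin 1 → Fin n → ℝ | y 0 ∈ A} = Set.univ.pi fun _ => A := by
    ext y
    simp [Set.mem_pi]
  simp_rw [vectorCount, hS]
  rw [← tupleIntensity_apply μ (.univ_pi fun _ => hA), tupleIntensity_one μ hn, volume_pi_pi,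
    Fin.prod_univ_one]

end VectorCount

section ZetaSums

lemma summable_zetaNat {m : ℕ} (hm : 2 ≤ m) : Summable fun k : ℕ => (((k : ℝ) + 1) ^ m)⁻¹ := by
  have h := (summable_nat_add_iff 1).2 (Real.summable_nat_pow_inv.2 hm)
  simpa only [Nat.cast_add, Nat.cast_one] using h

lemma zetaNat_pos {m : ℕ} (hm : 2 ≤ m) : 0 < zetaNat m :=
  (summable_zetaNat hm).tsum_pos (fun _ => by positivity) 0 (by positivity)

lemma ofReal_zetaNat {m : ℕ} (hm : 2 ≤ m) :
    ENNReal.ofReal (zetaNat m) = ∑' k : ℕ+, ((k : ℝ≥0∞) ^ m)⁻¹ := by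
  rw [zetaNat, ENNReal.ofReal_tsum_of_nonneg (fun _ => by positivity) (summable_zetaNat hm),
    tsum_pnat_eq_tsum_succ (f := fun k : ℕ => ((k : ℝ≥0∞) ^ m)⁻¹)]
  refine tsum_congr fun k => ?_
  rw [ENNReal.ofReal_inv_of_pos (by positivity), ENNReal.ofReal_pow (by positivity),
    ← Nat.cast_succ, ENNReal.ofReal_natCast]

lemma tsum_min_le (a : ℕ+ → ℝ≥0∞) :
    ∑' q : ℕ+ × ℕ+, min (a q.1) (a q.2) ≤ 2 * ∑' k : ℕ+, (k : ℝ≥0∞) * a k := by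
  have hsum : ∑' k : ℕ+, ∑' l : ℕ+, (if l ≤ k then a k else 0) = ∑' k : ℕ+, (k : ℝ≥0∞) * a k := by
    refine tsum_congr fun k => ?_
    rw [tsum_eq_sum (s := Finset.Icc 1 k) fun l hl =>
        if_neg fun h => hl (Finset.mem_Icc.2 ⟨one_le, h⟩),
      Finset.sum_congr rfl fun l hl => if_pos (Finset.mem_Icc.1 hl).2, Finset.sum_const,
      PNat.card_Icc, nsmul_eq_mul]
    simp
  calc ∑' q : ℕ+ × ℕ+, min (a q.1) (a q.2)
      ≤ ∑' q : ℕ+ × ℕ+, ((if q.2 ≤ q.1 then a q.1 else 0) + if q.1 ≤ q.2 then a q.2 else 0) :=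
        ENNReal.tsum_le_tsum fun ⟨k, l⟩ => by
          rcases le_total l k with h | h
          · exact (min_le_left _ _).trans (le_add_right (if_pos h).ge)
          · exact (min_le_right _ _).trans (le_add_left (if_pos h).ge)
    _ = 2 * ∑' k : ℕ+, (k : ℝ≥0∞) * a k := by
        rw [ENNReal.tsum_add, ENNReal.tsum_prod', ENNReal.tsum_prod',
          ENNReal.tsum_comm (f := fun k l : ℕ+ => if k ≤ l then a l else 0), hsum, two_mul]

/-- The pairs `(d k, d l)` with `k` and `l` coprime exhaust all pairs without repetition. -/
lemma tsum_inv_pow_mul_tsum_coprimePair_le (n : ℕ) :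
    (∑' d : ℕ+, ((d : ℝ≥0∞) ^ n)⁻¹) *
        ∑' q : CoprimePair, min ((q.1.1 : ℝ≥0∞) ^ n)⁻¹ ((q.1.2 : ℝ≥0∞) ^ n)⁻¹ ≤
      ∑' q : ℕ+ × ℕ+, min ((q.1 : ℝ≥0∞) ^ n)⁻¹ ((q.2 : ℝ≥0∞) ^ n)⁻¹ := by
  have hinj : Function.Injective fun r : ℕ+ × CoprimePair =>
      (r.1 * r.2.1.1, r.1 * r.2.1.2) := by
    rintro ⟨d, ⟨k, l⟩, h⟩ ⟨d', ⟨k', l'⟩, h'⟩ heq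
    obtain ⟨hk, hl⟩ := Prod.mk.inj heq
    have hgcd : ∀ (d : ℕ+) {k l : ℕ+}, Nat.Coprime k l →
        Nat.gcd (d * k : ℕ+) (d * l : ℕ+) = d := fun d k l h => by
      rw [PNat.mul_coe, PNat.mul_coe, Nat.gcd_mul_left, h.gcd_eq_one, mul_one]
    obtain rfl : d = d' := PNat.eq <| by
      rw [← hgcd d h, ← hgcd d' h']
      exact congr_arg₂ (fun a b : ℕ+ => Nat.gcd a b) hk hl
    obtain rfl := mul_left_cancel hk
    obtain rfl := mul_left_cancel hl
    rfl
  refine le_of_eq_of_le ?_ (ENNReal.tsum_comp_le_tsum_of_injective hinj _)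
  rw [← ENNReal.tsum_mul_right, ENNReal.tsum_prod']
  refine tsum_congr fun d => ?_
  rw [← ENNReal.tsum_mul_left]
  refine tsum_congr fun q => ?_
  have hmul : ∀ k : ℕ+, (((d * k : ℕ+) : ℝ≥0∞) ^ n)⁻¹ = ((d : ℝ≥0∞) ^ n)⁻¹ * ((k : ℝ≥0∞) ^ n)⁻¹ :=
    fun k => by
      rw [PNat.mul_coe, Nat.cast_mul, mul_pow,
        ENNReal.mul_inv (.inl (by simp)) (.inl (by simp))]
  simp_rw [hmul, mul_min]

lemma two_mul_tsum_coprimePair_le {n : ℕ} (hn : 3 ≤ n) :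
    2 * ∑' q : CoprimePair, min ((q.1.1 : ℝ≥0∞) ^ n)⁻¹ ((q.1.2 : ℝ≥0∞) ^ n)⁻¹ ≤
      ENNReal.ofReal (4 * zetaNat (n - 1) / zetaNat n) := by
  have hz : 0 < zetaNat n := zetaNat_pos (by omega)
  have hweight : ∀ k : ℕ+, (k : ℝ≥0∞) * ((k : ℝ≥0∞) ^ n)⁻¹ = ((k : ℝ≥0∞) ^ (n - 1))⁻¹ := fun k => by
    obtain ⟨m, rfl⟩ : ∃ m, n = m + 1 := ⟨n - 1, by omega⟩
    rw [pow_succ, ENNReal.mul_inv (.inr (by simp)) (.inr (by simp)), mul_left_comm,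
      ENNReal.mul_inv_cancel (by simp) (by simp), mul_one, Nat.add_sub_cancel]
  have hmul := (tsum_inv_pow_mul_tsum_coprimePair_le n).trans
    (tsum_min_le fun k : ℕ+ => ((k : ℝ≥0∞) ^ n)⁻¹)
  simp_rw [hweight] at hmul
  rw [← ofReal_zetaNat (by omega), ← ofReal_zetaNat (by omega)] at hmul
  rw [ENNReal.ofReal_div_of_pos hz, ENNReal.ofReal_mul zero_le_four, ENNReal.ofReal_ofNat,
    ENNReal.le_div_iff_mul_le (.inl (by simpa using hz)) (.inl ENNReal.ofReal_ne_top)]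
  calc _ = 2 * (ENNReal.ofReal (zetaNat n) *
          ∑' q : CoprimePair, min ((q.1.1 : ℝ≥0∞) ^ n)⁻¹ ((q.1.2 : ℝ≥0∞) ^ n)⁻¹) := by ring
    _ ≤ 2 * (2 * ENNReal.ofReal (zetaNat (n - 1))) := by gcongr
    _ = 4 * ENNReal.ofReal (zetaNat (n - 1)) := by ring

end ZetaSums

section SecondMoment

variable {n : ℕ}

lemma volume_preimage_zsmul (A : Set (Fin n → ℝ)) {z : ℤ} (hz : z ≠ 0) :
    volume ((z • · : (Fin n → ℝ) → _) ⁻¹' A) = ((z.natAbs : ℝ≥0∞) ^ n)⁻¹ * volume A := by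
  simp_rw [← Int.cast_smul_eq_zsmul ℝ]
  rw [Measure.addHaar_preimage_smul _ (Int.cast_ne_zero.2 hz), Module.finrank_fin_fun, abs_inv,
    abs_pow, ENNReal.ofReal_inv_of_pos (by positivity), ENNReal.ofReal_pow (abs_nonneg _),
    ← Int.cast_abs, Int.abs_eq_natAbs, Int.cast_natCast, ENNReal.ofReal_natCast]

variable [NeZero n] (μ : Measure (Xn n)) [IsProbabilityMeasure μ]
  [SMulInvariantMeasure (SLR n) (Xn n) μ] {A : Set (Fin n → ℝ)}

lemma lintegral_vectorCount_preimage_inter_le (hn : 2 ≤ n) (hA : MeasurableSet A)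
    (q : CoprimePair × ℤˣ) :
    ∫⁻ x, vectorCount (((q.1.1.1 : ℤ) • ·) ⁻¹' A ∩ ((q.2 * q.1.1.2 : ℤ) • ·) ⁻¹' A) x ∂μ ≤
      min ((q.1.1.1 : ℝ≥0∞) ^ n)⁻¹ ((q.1.1.2 : ℝ≥0∞) ^ n)⁻¹ * volume A := by
  have hk : ((q.1.1.1 : ℕ) : ℤ) ≠ 0 := by simp
  have hl : (q.2 * q.1.1.2 : ℤ) ≠ 0 := by simp
  rw [lintegral_vectorCount μ hn
    ((measurable_const_smul _ hA).inter (measurable_const_smul _ hA)), min_mul]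
  refine le_min ((measure_mono Set.inter_subset_left).trans_eq ?_)
    ((measure_mono Set.inter_subset_right).trans_eq ?_)
  · rw [volume_preimage_zsmul A hk, Int.natAbs_natCast]
  · rw [volume_preimage_zsmul A hl, Int.natAbs_mul, Int.units_natAbs, one_mul, Int.natAbs_natCast]

lemma lintegral_vectorCount_sq_le (hn : 3 ≤ n) (hA : MeasurableSet A) :
    ∫⁻ x, vectorCount A x ^ 2 ∂μ ≤
      volume A ^ 2 + ENNReal.ofReal (4 * zetaNat (n - 1) / zetaNat n) * volume A := by
  have hpi : MeasurableSet (Set.univ.pi fun _ : Fin 2 => A) := .univ_pi fun _ => hA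
  have hindep : ∫⁻ x, latticeTuples 2 x (Set.univ.pi fun _ => A) ∂μ ≤ volume A ^ 2 := by
    rw [← tupleIntensity_apply μ hpi]
    refine (tupleIntensity_le μ (by omega) _).trans_eq ?_
    rw [volume_pi_pi, Fin.prod_univ_two, sq]
  calc ∫⁻ x, vectorCount A x ^ 2 ∂μ
      ≤ ∫⁻ x, (latticeTuples 2 x (Set.univ.pi fun _ => A) + ∑' q : CoprimePair × ℤˣ, vectorCount
          (((q.1.1.1 : ℤ) • ·) ⁻¹' A ∩ ((q.2 * q.1.1.2 : ℤ) • ·) ⁻¹' A) x) ∂μ :=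
        lintegral_mono (vectorCount_sq_le hA)
    _ ≤ volume A ^ 2 + ∑' q : CoprimePair × ℤˣ,
          min ((q.1.1.1 : ℝ≥0∞) ^ n)⁻¹ ((q.1.1.2 : ℝ≥0∞) ^ n)⁻¹ * volume A := by
        rw [lintegral_add_left (measurable_latticeTuples_apply hpi),
          lintegral_tsum fun q => (measurable_vectorCount
            ((measurable_const_smul _ hA).inter (measurable_const_smul _ hA))).aemeasurable]
        exact add_le_add hindep (ENNReal.tsum_le_tsum
          (lintegral_vectorCount_preimage_inter_le μ (by omega) hA))
    _ ≤ _ := by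
        rw [ENNReal.tsum_mul_right, ENNReal.tsum_prod']
        simp_rw [tsum_fintype, Finset.sum_const, Finset.card_univ, Fintype.card_units_int,
          nsmul_eq_mul, ENNReal.tsum_mul_left]
        gcongr
        exact two_mul_tsum_coprimePair_le hn

end SecondMoment

section Chebyshev

variable {Ω : Type*} [MeasurableSpace Ω] {μ : Measure Ω} {N : Ω → ℝ≥0∞} {v : ℝ≥0∞}
  {C M : ℝ}

lemma memLp_two_toReal (hN : Measurable N) (hsq : ∫⁻ ω, N ω ^ 2 ∂μ ≠ ⊤) :
    MemLp (fun ω => (N ω).toReal) 2 μ := by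
  refine (memLp_two_iff_integrable_sq hN.ennreal_toReal.aestronglyMeasurable).2 ?_
  simp_rw [← ENNReal.toReal_pow]
  exact integrable_toReal_of_lintegral_ne_top (hN.pow_const 2).aemeasurable hsq

variable [IsProbabilityMeasure μ]

lemma variance_toReal_le (hN : Measurable N) (hmean : ∫⁻ ω, N ω ∂μ = v) (hv : v ≠ ⊤) (hC : 0 ≤ C)
    (hsq : ∫⁻ ω, N ω ^ 2 ∂μ ≤ v ^ 2 + ENNReal.ofReal C * v) :
    ProbabilityTheory.variance (fun ω => (N ω).toReal) μ ≤ C * v.toReal := by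
  have hbound : v ^ 2 + ENNReal.ofReal C * v ≠ ⊤ := by finiteness
  have hsq_top := ne_top_of_le_ne_top hbound hsq
  have hEN : ∫ ω, (N ω).toReal ∂μ = v.toReal := by
    rw [integral_toReal hN.aemeasurable (ae_lt_top hN (hmean.trans_ne hv)), hmean]
  have hEN2 : ∫ ω, (N ω).toReal ^ 2 ∂μ ≤ v.toReal ^ 2 + C * v.toReal := by
    simp_rw [← ENNReal.toReal_pow]
    rw [integral_toReal (hN.pow_const 2).aemeasurable (ae_lt_top (hN.pow_const 2) hsq_top)]
    refine (ENNReal.toReal_mono hbound hsq).trans_eq ?_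
    rw [ENNReal.toReal_add (by finiteness) (by finiteness), ENNReal.toReal_mul,
      ENNReal.toReal_pow, ENNReal.toReal_ofReal hC]
  rw [ProbabilityTheory.variance_eq_sub (memLp_two_toReal hN hsq_top), hEN]
  exact sub_left_le_of_le_add hEN2

lemma measure_top_or_lt_abs_sub_le (hN : Measurable N) (hmean : ∫⁻ ω, N ω ∂μ = v) (hv0 : v ≠ 0)
    (hv : v ≠ ⊤) (hC : 0 ≤ C) (hsq : ∫⁻ ω, N ω ^ 2 ∂μ ≤ v ^ 2 + ENNReal.ofReal C * v)
    (hM : 0 < M) :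
    μ {ω | N ω = ⊤ ∨ M * √v.toReal < |(N ω).toReal - v.toReal|} ≤
      ENNReal.ofReal (C * (M ^ 2)⁻¹) := by
  have hvpos : 0 < v.toReal := ENNReal.toReal_pos hv0 hv
  have hfinite : ∀ᵐ ω ∂μ, N ω < ⊤ := ae_lt_top hN (hmean.trans_ne hv)
  have hEN : ∫ ω, (N ω).toReal ∂μ = v.toReal := by
    rw [integral_toReal hN.aemeasurable hfinite, hmean]
  have hL2 : MemLp (fun ω => (N ω).toReal) 2 μ :=
    memLp_two_toReal hN (ne_top_of_le_ne_top (by finiteness) hsq)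
  calc μ {ω | N ω = ⊤ ∨ M * √v.toReal < |(N ω).toReal - v.toReal|}
      ≤ μ {ω | M * √v.toReal ≤ |(N ω).toReal - ∫ ω, (N ω).toReal ∂μ|} := by
        refine measure_mono_ae (hfinite.mono fun ω hω h => ?_)
        exact hEN ▸ (h.resolve_left hω.ne).le
    _ ≤ ENNReal.ofReal (ProbabilityTheory.variance (fun ω => (N ω).toReal) μ /
          (M * √v.toReal) ^ 2) :=
        ProbabilityTheory.meas_ge_le_variance_div_sq hL2 (by positivity)
    _ ≤ ENNReal.ofReal (C * v.toReal / (M * √v.toReal) ^ 2) := by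
        gcongr
        exact variance_toReal_le hN hmean hv hC hsq
    _ = ENNReal.ofReal (C * (M ^ 2)⁻¹) := by
        rw [mul_pow, Real.sq_sqrt hvpos.le]
        congr 1
        field_simp

end Chebyshev

/-- **Random Minkowski / Rogers–Chebyshev bound.** Let `n ≥ 3`, let `μ` be a left
`SL(n,ℝ)`-invariant Borel probability measure on `X_n = SL(n,ℝ)/SL(n,ℤ)`, let `A ⊆ ℝ^n` be
measurable with `0 < |A| < ∞`, and `M > 0`. Then the measure of the set of unimodular
lattices `Λ = gℤ^n` with `|N₀(Λ, A) - |A|| > M |A|^{1/2}` (where a lattice with infinitely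
many nonzero points in `A` counts as such) is at most `C_n M⁻²`, `C_n = 8 ζ(n-1)/ζ(n)`. -/
theorem random_minkowski_chebyshev
    (n : ℕ) (hn : 3 ≤ n) (μ : Measure (Xn n)) [IsProbabilityMeasure μ]
    [SMulInvariantMeasure (SLR n) (Xn n) μ]
    (A : Set (Fin n → ℝ)) (hA : MeasurableSet A)
    (hApos : 0 < volume A) (hAfin : volume A < ⊤)
    (M : ℝ) (hM : 0 < M) :
    μ {Λ : Xn n | ∃ g : SLR n, (g : Xn n) = Λ ∧
        ((nonzeroLatticePts g A).Infinite ∨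
          M * Real.sqrt (volume A).toReal <
            |((nonzeroLatticePts g A).ncard : ℝ) - (volume A).toReal|)}
      ≤ ENNReal.ofReal (8 * zetaNat (n - 1) / zetaNat n * (M ^ 2)⁻¹) := by
  have : NeZero n := ⟨by omega⟩
  have hz : 0 < zetaNat n := zetaNat_pos (by omega)
  have hz' : 0 < zetaNat (n - 1) := zetaNat_pos (by omega)
  calc _ ≤ μ {Λ | vectorCount A Λ = ⊤ ∨
          M * √(volume A).toReal < |(vectorCount A Λ).toReal - (volume A).toReal|} := by
        refine measure_mono ?_
        rintro _ ⟨g, rfl, h⟩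
        rwa [Set.mem_ofPred_eq, vectorCount_mk_eq_top_iff hA, toReal_vectorCount_mk hA]
    _ ≤ ENNReal.ofReal (4 * zetaNat (n - 1) / zetaNat n * (M ^ 2)⁻¹) :=
        measure_top_or_lt_abs_sub_le (measurable_vectorCount hA)
          (lintegral_vectorCount μ (by omega) hA) hApos.ne' hAfin.ne (by positivity)
          (lintegral_vectorCount_sq_le μ hn hA) hM
    _ ≤ _ := by
        gcongr
        norm_num
end

section
/- Let n ≥ 3, let Q₀ be a real quadratic form on ℝ^n satisfying the volume asymptotic condition with constant c₀ > 0, and let δ > 0. For each j ∈ ℕ define A_j = {x ∈ ℝ^n : 0 < Q₀(x) < 2^{-j} and ‖x‖ < 2^{(1/(n-2)+δ)j}}. Then for Haar-almost every g ∈ SL(n,ℝ), there exists j₀ ∈ ℕ such that for all j ≥ j₀ the lattice gℤ^n intersects A_j, i.e., gℤ^n ∩ A_j ≠ ∅. -/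
open MeasureTheory Matrix Filter Asymptotics

/-- The Euclidean norm of a vector in `ℝ^n`. -/
noncomputable def euclNorm {n : ℕ} (x : Fin n → ℝ) : ℝ := Real.sqrt (∑ i, x i ^ 2)

/-- The quadratic form `x ↦ xᵀ M x` attached to a matrix `M`. -/
def Qform {n : ℕ} (M : Matrix (Fin n) (Fin n) ℝ) (x : Fin n → ℝ) : ℝ := x ⬝ᵥ M.mulVec x

/-- The quadratic form of `M` satisfies the volume asymptotic condition with constant `c₀`:
for all `a < b`, `|Q₀⁻¹((a,b)) ∩ B(0,T)| = c₀ (b-a) T^{n-2} + o(T^{n-2})` as `T → ∞`. -/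
def volumeAsymp {n : ℕ} (M : Matrix (Fin n) (Fin n) ℝ) (c₀ : ℝ) : Prop :=
  ∀ a b : ℝ, a < b →
    (fun T : ℝ =>
        (volume {x : Fin n → ℝ | Qform M x ∈ Set.Ioo a b ∧ euclNorm x ≤ T}).toReal
          - c₀ * (b - a) * T ^ (n - 2)) =o[atTop] fun T : ℝ => T ^ (n - 2)

/-- The set `A_j = {x ∈ ℝ^n : 0 < Q₀(x) < 2^{-j}, ‖x‖ < 2^{(1/(n-2)+δ) j}}`. -/
noncomputable def Aset {n : ℕ} (M : Matrix (Fin n) (Fin n) ℝ) (δ : ℝ) (j : ℕ) :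
    Set (Fin n → ℝ) :=
  {y : Fin n → ℝ | (0 < Qform M y ∧ Qform M y < (2 : ℝ) ^ (-(j : ℝ))) ∧
    euclNorm y < (2 : ℝ) ^ ((1 / ((n : ℝ) - 2) + δ) * j)}

/-!
Call `g` good if, up to dilations by bounded factors, `g ℤ^n` meets all but finitely many of the
sets `S_j`, which are slightly thinner than the `A_j` but still of exponentially growing volume.
Goodness depends only on the commensurability class of `g ℤ^n`, so the set of good `g` is invariant
under the dense group `SL(n, ℚ)` and is null or conull; as the extra factor `2 ^ (δ j)` absorbs
bounded dilations, it suffices that it is not null.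

For this, let `R` be large, `p` a prime with `R ^ n < p ≤ 2 R ^ n`, and consider the lattices
`R⁻¹ {x ∈ ℤ^n | x · a ≡ 0 mod p}`, of covolume about `1`. Distinct primitive vectors of size `O(R)`
are not proportional modulo `p` (up to sign), so they impose pairwise independent conditions on `a`,
and Chebyshev's inequality shows that the lattices missing a region of volume `V` make up a
proportion `O(1 / V)` of all `a`. Since `∑ 1 / vol S_j` converges, for any `h` most `a` give a
lattice which meets all the `h⁻¹ S_j` from some point on, and moreover boxes around the coordinate
axes; the latter give the lattice a bounded basis, so that up to a bounded dilation it is contained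
in `v ℤ^n` with `v ∈ SL(n, ℝ)` in a fixed compact set. Averaging over `h` in a compact set, one
`a` works for a positive proportion of `h`, and `h v` is then good, up to letting the number of
regions tend to infinity.
-/

open scoped Pointwise Topology

section ZeroOneLaw

variable {G : Type*} [Group G] [TopologicalSpace G] [IsTopologicalGroup G] [LocallyCompactSpace G]
  [MeasurableSpace G] [BorelSpace G] (μ : Measure G) [μ.IsHaarMeasure] {E : Set G}

theorem measure_diff_preimage_mul_left_eq_zero_of_dense [μ.InnerRegular]
    (hE : MeasurableSet E) (hd : Dense {γ : G | ∀ x, γ * x ∈ E ↔ x ∈ E}) (g : G) :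
    μ (E \ (g * ·) ⁻¹' E) = 0 := by
  set C := E \ (g * ·) ⁻¹' E
  by_contra hC
  -- Steinhaus: `C / C` is a neighbourhood of `1`, so the dense set meets its translate by `g`.
  have hCC : (g⁻¹ * ·) ⁻¹' (C / C) ∈ 𝓝 g := by
    refine (continuous_const_mul g⁻¹).continuousAt.preimage_mem_nhds ?_
    simpa only [inv_mul_cancel] using Measure.div_mem_nhds_one_of_haar_pos μ C
      (hE.diff (measurable_const_mul g hE)) (pos_iff_ne_zero.2 hC)
  obtain ⟨γ, hγ, hγE⟩ := mem_closure_iff_nhds.1 (hd g) _ hCC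
  obtain ⟨c₁, hc₁, c₂, hc₂, hc⟩ := Set.mem_div.1 hγ
  have hγc : γ * c₂ = g * c₁ := by
    rw [div_eq_iff_eq_mul.1 hc, mul_assoc, mul_inv_cancel_left]
  exact hc₁.2 (Set.mem_preimage.2 (hγc ▸ (hγE c₂).2 hc₂.1))

theorem ae_mem_of_dense_left_invariant [SecondCountableTopology G] [μ.InnerRegular]
    (hE : MeasurableSet E) (hpos : μ E ≠ 0) (hd : Dense {γ : G | ∀ x, γ * x ∈ E ↔ x ∈ E}) :
    ∀ᵐ x ∂μ, x ∈ E := by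
  have hinv (g : G) : (g • ·) ⁻¹' E =ᵐ[μ] E := by
    refine (ae_le_set.2 ?_).antisymm
      (ae_le_set.2 (measure_diff_preimage_mul_left_eq_zero_of_dense μ hE hd g))
    have h := measure_diff_preimage_mul_left_eq_zero_of_dense μ hE.compl
      (by simpa only [Set.mem_compl_iff, not_iff_not] using hd) g
    rwa [Set.preimage_compl, compl_sdiff_compl] at h
  rcases eventuallyConst_set.1
    (aeconst_of_forall_preimage_smul_ae_eq G hE.nullMeasurableSet hinv) with h | h
  · exact h
  · exact absurd (measure_eq_zero_iff_ae_notMem.2 h) hpos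

theorem ae_mem_of_dense_right_invariant [SecondCountableTopology G] [μ.InnerRegular]
    (hE : MeasurableSet E) (hpos : μ E ≠ 0) (hd : Dense {γ : G | ∀ x, x * γ ∈ E ↔ x ∈ E}) :
    ∀ᵐ x ∂μ, x ∈ E := by
  have hd' : Dense {γ : G | ∀ x, γ * x ∈ E⁻¹ ↔ x ∈ E⁻¹} := by
    refine (hd.preimage (isOpenMap_inv G)).mono fun γ hγ x => ?_
    simpa only [Set.mem_inv, _root_.mul_inv_rev] using hγ x⁻¹
  have h := ae_mem_of_dense_left_invariant μ hE.inv (mt (measure_inv_null μ).1 hpos) hd'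
  rw [ae_iff] at h ⊢
  rwa [← measure_inv_null]

end ZeroOneLaw

section SpecialLinear

variable {n : ℕ}

instance : IsTopologicalGroup (SLR n) :=
  Matrix.SpecialLinearGroup.topologicalGroup (n := Fin n) (R := ℝ)

instance : BorelSpace (SLR n) := ⟨rfl⟩

theorem isClosedEmbedding_coe_SLR :
    Topology.IsClosedEmbedding (fun g : SLR n => (g : Matrix (Fin n) (Fin n) ℝ)) :=
  Matrix.SpecialLinearGroup.isClosedEmbedding_val

instance : SecondCountableTopology (SLR n) :=
  haveI : SecondCountableTopology (Matrix (Fin n) (Fin n) ℝ) :=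
    inferInstanceAs (SecondCountableTopology (Fin n → Fin n → ℝ))
  isClosedEmbedding_coe_SLR.isEmbedding.secondCountableTopology

instance : LocallyCompactSpace (SLR n) :=
  haveI : LocallyCompactSpace (Matrix (Fin n) (Fin n) ℝ) :=
    inferInstanceAs (LocallyCompactSpace (Fin n → Fin n → ℝ))
  isClosedEmbedding_coe_SLR.locallyCompactSpace

theorem continuous_mulVec_SLR (y : Fin n → ℝ) :
    Continuous fun g : SLR n => (g : Matrix (Fin n) (Fin n) ℝ) *ᵥ y :=
  isClosedEmbedding_coe_SLR.continuous.matrix_mulVec continuous_const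

theorem isCompact_setOf_abs_entry_le (B : ℝ) : IsCompact {g : SLR n | ∀ i j, |g i j| ≤ B} := by
  have hIcc : IsCompact (Set.Icc (fun _ _ => -B) fun _ _ => B : Set (Fin n → Fin n → ℝ)) :=
    isCompact_Icc
  convert isClosedEmbedding_coe_SLR.isCompact_preimage hIcc
  ext g
  simp only [Set.mem_ofPred_eq, abs_le, forall_and]
  rfl

end SpecialLinear

section RationalPoints

variable {ι : Type*} [Fintype ι] [DecidableEq ι]

/-- The matrix `m` with its row `i₀` rescaled so that the determinant becomes `1`
(when `m.det ≠ 0`). -/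
def rescaleRow {K : Type*} [Field K] (i₀ : ι) (m : Matrix ι ι K) : Matrix ι ι K :=
  m.updateRow i₀ (m.det⁻¹ • m i₀)

theorem det_rescaleRow {K : Type*} [Field K] (i₀ : ι) {m : Matrix ι ι K} (hm : m.det ≠ 0) :
    (rescaleRow i₀ m).det = 1 := by
  rw [rescaleRow, det_updateRow_smul, updateRow_eq_self, inv_mul_cancel₀ hm]

theorem rescaleRow_of_det_eq_one {K : Type*} [Field K] (i₀ : ι) {m : Matrix ι ι K}
    (hm : m.det = 1) : rescaleRow i₀ m = m := by
  rw [rescaleRow, hm, inv_one, one_smul, updateRow_eq_self]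

theorem rescaleRow_map {K L : Type*} [Field K] [Field L] (f : K →+* L) (i₀ : ι)
    (m : Matrix ι ι K) : rescaleRow i₀ (m.map f) = (rescaleRow i₀ m).map f := by
  ext i j
  have hdet : (m.map f).det = f m.det := (f.map_det m).symm
  rcases eq_or_ne i i₀ with rfl | hi
  · simp [rescaleRow, hdet]
  · simp [rescaleRow, hi]

theorem continuousAt_rescaleRow (i₀ : ι) {m : Matrix ι ι ℝ} (hm : m.det ≠ 0) :
    ContinuousAt (rescaleRow i₀) m :=
  continuousAt_id.update i₀
    ((continuous_id.matrix_det.continuousAt.inv₀ hm).smul (continuous_apply i₀).continuousAt)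

theorem denseRange_map_rat_SLR {n : ℕ} [NeZero n] :
    DenseRange fun q : Matrix.SpecialLinearGroup (Fin n) ℚ =>
      (Matrix.SpecialLinearGroup.map (algebraMap ℚ ℝ) q : SLR n) := by
  have hdense : DenseRange fun q : Matrix (Fin n) (Fin n) ℚ => q.map (algebraMap ℚ ℝ) :=
    DenseRange.piMap fun _ => DenseRange.piMap fun _ => Rat.denseRange_cast
  intro g
  rw [isClosedEmbedding_coe_SLR.isInducing.closure_eq_preimage_closure_image, Set.mem_preimage,
    mem_closure_iff_nhds]
  intro t ht
  have hmem : ∀ᶠ m in 𝓝 (g : Matrix (Fin n) (Fin n) ℝ), rescaleRow 0 m ∈ t :=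
    (continuousAt_rescaleRow 0 (by simp)).eventually_mem
      (by rwa [rescaleRow_of_det_eq_one 0 g.det_coe])
  have hdet : ∀ᶠ m in 𝓝 (g : Matrix (Fin n) (Fin n) ℝ), m.det ≠ 0 :=
    continuous_id.matrix_det.continuousAt.eventually_ne (by simp)
  obtain ⟨_, ⟨hqt, hq0⟩, q, rfl⟩ := mem_closure_iff_nhds.1 (hdense g.1) _ (hmem.and hdet)
  have hq : q.det ≠ 0 := fun h =>
    hq0 (((algebraMap ℚ ℝ).map_det q).symm.trans (by rw [h, map_zero]))
  exact ⟨_, hqt, _, ⟨⟨rescaleRow 0 q, det_rescaleRow 0 hq⟩, rfl⟩, (rescaleRow_map _ 0 q).symm⟩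

end RationalPoints

section CastVec

variable {ι κ : Type*} (R : Type*) [CommRing R]

/-- Entrywise reduction of integer vectors to a ring `R`, as a `ℤ`-linear map. It is used both for
the inclusion `ℤ^n ⊆ ℝ^n` and for the reduction of `ℤ^n` modulo `p`. -/
def castVec : (ι → ℤ) →ₗ[ℤ] ι → R := (Algebra.linearMap ℤ R).compLeft ι

@[simp]
theorem castVec_apply (x : ι → ℤ) (i : ι) : castVec R x i = x i := rfl

theorem castVec_injective [CharZero R] : Function.Injective (castVec R : (ι → ℤ) → ι → R) :=
  fun _ _ h => funext fun i => Int.cast_injective (congrFun h i)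

theorem castVec_mulVec [Fintype ι] (A : Matrix κ ι ℤ) (x : ι → ℤ) :
    castVec R (A *ᵥ x) = A.map (Int.cast : ℤ → R) *ᵥ castVec R x :=
  funext fun i => RingHom.map_mulVec (Int.castRingHom R) A x i

end CastVec

section Invariance

variable {n : ℕ}

/-- The matrices `g` for which the lattice `g ℤ^n` meets `U`. -/
def meetSet (U : Set (Fin n → ℝ)) : Set (SLR n) := {g | ∃ x : Fin n → ℤ, g.1 *ᵥ castVec ℝ x ∈ U}

theorem meetSet_mono {U V : Set (Fin n → ℝ)} (h : U ⊆ V) : meetSet U ⊆ meetSet V :=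
  fun _ ⟨x, hx⟩ => ⟨x, h hx⟩

theorem isOpen_meetSet {U : Set (Fin n → ℝ)} (hU : IsOpen U) : IsOpen (meetSet U) := by
  simp only [meetSet, Set.ofPred_exists]
  exact isOpen_iUnion fun x => hU.preimage (continuous_mulVec_SLR (castVec ℝ x))

/-- The matrices `g` for which, up to dilations by bounded factors, `g ℤ^n` meets all but finitely
many of the sets `S j`. Allowing dilations makes the set invariant under `SL(n, ℚ)`, which only
preserves `ℤ^n` up to finite index. -/
def eventuallyMeetSet (S : ℕ → Set (Fin n → ℝ)) : Set (SLR n) :=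
  {g | ∃ D : ℕ, ∀ᶠ j in atTop, g ∈ meetSet (Set.Ioc (0 : ℝ) D • S j)}

theorem isOpen_Ioc_smul {U : Set (Fin n → ℝ)} (hU : IsOpen U) (D : ℝ) :
    IsOpen (Set.Ioc (0 : ℝ) D • U) := by
  rw [← Set.iUnion_smul_set]
  exact isOpen_biUnion fun t ht => hU.smul₀ ht.1.ne'

theorem measurableSet_eventuallyMeetSet {S : ℕ → Set (Fin n → ℝ)} (hS : ∀ j, IsOpen (S j)) :
    MeasurableSet (eventuallyMeetSet S) := by
  simp only [eventuallyMeetSet, Set.ofPred_exists, ← Filter.mem_liminf_iff_eventually_mem]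
  exact MeasurableSet.iUnion fun D => MeasurableSet.measurableSet_liminf fun j =>
    (isOpen_meetSet (isOpen_Ioc_smul (hS j) D)).measurableSet

theorem map_ratCast_mulVec_castVec (q : Matrix (Fin n) (Fin n) ℚ) (x : Fin n → ℤ) :
    (q.den : ℝ) • q.map (algebraMap ℚ ℝ) *ᵥ castVec ℝ x = castVec ℝ (q.num *ᵥ x) := by
  rw [castVec_mulVec, ← smul_mulVec]
  congr 1
  ext i j
  have h := q.num_div_den i j
  rw [div_eq_iff (Nat.cast_ne_zero.2 q.den_ne_zero)] at h
  simpa [mul_comm] using congrArg (Rat.cast : ℚ → ℝ) h.symm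

theorem mem_eventuallyMeetSet_of_mul_map {S : ℕ → Set (Fin n → ℝ)} {g : SLR n}
    (q : Matrix.SpecialLinearGroup (Fin n) ℚ)
    (h : g * Matrix.SpecialLinearGroup.map (algebraMap ℚ ℝ) q ∈ eventuallyMeetSet S) :
    g ∈ eventuallyMeetSet S := by
  obtain ⟨D, hD⟩ := h
  have hN : (0 : ℝ) < q.1.den := Nat.cast_pos.2 (Nat.pos_of_ne_zero q.1.den_ne_zero)
  refine ⟨q.1.den * D, hD.mono fun j ⟨x, hx⟩ => ⟨q.1.num *ᵥ x, ?_⟩⟩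
  rw [← map_ratCast_mulVec_castVec, mulVec_smul, mulVec_mulVec]
  have hmem := Set.smul_mem_smul_set (a := (q.1.den : ℝ)) hx
  rwa [← smul_assoc, LinearOrderedField.smul_Ioc hN, mul_zero, ← Nat.cast_mul] at hmem

theorem mul_map_mem_eventuallyMeetSet_iff {S : ℕ → Set (Fin n → ℝ)} {g : SLR n}
    (q : Matrix.SpecialLinearGroup (Fin n) ℚ) :
    g * Matrix.SpecialLinearGroup.map (algebraMap ℚ ℝ) q ∈ eventuallyMeetSet S ↔
      g ∈ eventuallyMeetSet S := by
  refine ⟨mem_eventuallyMeetSet_of_mul_map q, fun h => mem_eventuallyMeetSet_of_mul_map q⁻¹ ?_⟩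
  rwa [map_inv, mul_inv_cancel_right]

theorem ae_mem_eventuallyMeetSet [NeZero n] {S : ℕ → Set (Fin n → ℝ)} (hS : ∀ j, IsOpen (S j))
    (μ : Measure (SLR n)) [μ.IsHaarMeasure] (hpos : μ (eventuallyMeetSet S) ≠ 0) :
    ∀ᵐ g ∂μ, g ∈ eventuallyMeetSet S := by
  refine ae_mem_of_dense_right_invariant μ (measurableSet_eventuallyMeetSet hS) hpos ?_
  refine denseRange_map_rat_SLR.mono ?_
  rintro _ ⟨q, rfl⟩ x
  exact mul_map_mem_eventuallyMeetSet_iff q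

end Invariance

section SecondMoment

variable {α β : Type*} [Fintype α] [DecidableEq α] {p : ℝ}

theorem sum_centered_mul_centered (p : ℝ) (E F : Finset α) :
    ∑ a, ((if a ∈ E then p else 0) - 1) * ((if a ∈ F then p else 0) - 1) =
      p ^ 2 * (E ∩ F).card - p * E.card - p * F.card + Fintype.card α := by
  have hexpand (a : α) : ((if a ∈ E then p else 0) - 1) * ((if a ∈ F then p else 0) - 1) =
      (if a ∈ E ∩ F then p ^ 2 else 0) - (if a ∈ E then p else 0) - (if a ∈ F then p else 0)
        + 1 := by
    by_cases hE : a ∈ E <;> by_cases hF : a ∈ F <;> simp [hE, hF] <;> ring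
  simp only [hexpand, Finset.sum_add_distrib, Finset.sum_sub_distrib, Finset.sum_ite_mem,
    Finset.univ_inter, Finset.sum_const, nsmul_eq_mul, Finset.card_univ]
  ring

theorem sum_sq_sum_centered_le (hp : 0 ≤ p) (E : β → Finset α) (X : Finset β) (σ : β → β)
    (hprob : ∀ x ∈ X, (E x).card * p = Fintype.card α)
    (hcorr : ∀ x ∈ X, ∀ y ∈ X, y ≠ x → y ≠ σ x →
      (E x ∩ E y).card * p ^ 2 ≤ Fintype.card α) :
    ∑ a, (∑ x ∈ X, ((if a ∈ E x then p else 0) - 1)) ^ 2 ≤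
      2 * (p * Fintype.card α) * X.card := by
  classical
  set m : ℝ := (Fintype.card α : ℝ)
  have hpm : 0 ≤ p * m := by positivity
  have hcov : ∀ x ∈ X, ∀ y ∈ X,
      ∑ a, ((if a ∈ E x then p else 0) - 1) * ((if a ∈ E y then p else 0) - 1) ≤
        (if y = x then p * m else 0) + if y = σ x then p * m else 0 := by
    intro x hx y hy
    have hxy : ((E x ∩ E y).card : ℝ) ≤ (E x).card :=
      Nat.cast_le.2 (Finset.card_le_card Finset.inter_subset_left)
    have hself : p ^ 2 * (E x ∩ E y).card ≤ p * m := by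
      rw [← hprob x hx, sq, mul_assoc, mul_comm _ p]
      gcongr
    rw [sum_centered_mul_centered, mul_comm p, mul_comm p, hprob x hx, hprob y hy]
    have : 0 ≤ m := Nat.cast_nonneg _
    split_ifs with h₁ h₂ h₂
    · linarith
    · linarith
    · linarith
    · linarith [hcorr x hx y hy h₁ h₂]
  calc ∑ a, (∑ x ∈ X, ((if a ∈ E x then p else 0) - 1)) ^ 2
      = ∑ x ∈ X, ∑ y ∈ X,
          ∑ a, ((if a ∈ E x then p else 0) - 1) * ((if a ∈ E y then p else 0) - 1) := by
        simp only [sq, Finset.sum_mul_sum]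
        rw [Finset.sum_comm]
        exact Finset.sum_congr rfl fun x _ => Finset.sum_comm
    _ ≤ ∑ x ∈ X, ∑ y ∈ X, ((if y = x then p * m else 0) + if y = σ x then p * m else 0) :=
        Finset.sum_le_sum fun x hx => Finset.sum_le_sum (hcov x hx)
    _ ≤ ∑ x ∈ X, 2 * (p * m) := by
        gcongr with x
        rw [Finset.sum_add_distrib, Finset.sum_ite_eq', Finset.sum_ite_eq', two_mul]
        gcongr <;> split_ifs <;> simp [hpm]
    _ = 2 * (p * m) * X.card := by rw [Finset.sum_const, nsmul_eq_mul, mul_comm]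

theorem card_avoid_mul_card_le (hp : 0 ≤ p) (E : β → Finset α) (X : Finset β) (σ : β → β)
    (hprob : ∀ x ∈ X, (E x).card * p = Fintype.card α)
    (hcorr : ∀ x ∈ X, ∀ y ∈ X, y ≠ x → y ≠ σ x →
      (E x ∩ E y).card * p ^ 2 ≤ Fintype.card α) :
    ((Finset.univ.filter fun a => ∀ x ∈ X, a ∉ E x).card : ℝ) * X.card ≤
      2 * (p * Fintype.card α) := by
  rcases X.card.eq_zero_or_pos with h0 | h0
  · rw [h0, Nat.cast_zero, mul_zero]
    positivity
  refine le_of_mul_le_mul_right ?_ (Nat.cast_pos.2 h0 : (0 : ℝ) < X.card)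
  refine le_trans ?_ (sum_sq_sum_centered_le hp E X σ hprob hcorr)
  rw [mul_assoc, ← sq, ← nsmul_eq_mul, ← Finset.sum_const]
  -- An `a` avoiding all events has every centred indicator equal to `-1`.
  refine (Finset.sum_le_sum fun a ha => le_of_eq ?_).trans
    (Finset.sum_le_univ_sum_of_nonneg fun a => sq_nonneg _)
  rw [Finset.sum_congr rfl fun x hx => by rw [if_neg ((Finset.mem_filter.1 ha).2 x hx)]]
  simp

end SecondMoment

section Hyperplanes

variable {ι : Type*} [Fintype ι]

theorem card_dotProduct_eq_zero_mul_card_pow [DecidableEq ι] {κ F : Type*} [Fintype κ] [Field F]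
    [Fintype F] [DecidableEq F] {v : κ → ι → F} (hv : LinearIndependent F v) :
    (Finset.univ.filter fun a : ι → F => ∀ k, v k ⬝ᵥ a = 0).card *
      Fintype.card F ^ Fintype.card κ = Fintype.card F ^ Fintype.card ι := by
  classical
  set f := (Matrix.of v).mulVecLin
  have hrank : Module.finrank F (LinearMap.range f) = Fintype.card κ := hv.rank_matrix
  have hker : (Finset.univ.filter fun a : ι → F => ∀ k, v k ⬝ᵥ a = 0).card =
      Fintype.card F ^ Module.finrank F (LinearMap.ker f) := by
    rw [← Module.card_eq_pow_finrank (K := F) (V := LinearMap.ker f), ← Fintype.card_subtype]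
    exact Fintype.card_congr (Equiv.subtypeEquivRight fun a => by
      rw [LinearMap.mem_ker, funext_iff]; rfl)
  rw [hker, ← hrank, ← pow_add, add_comm, f.finrank_range_add_finrank_ker,
    Module.finrank_fintype_fun_eq_card]

theorem ne_zero_of_gcd_eq_one {x : ι → ℤ} (hx : Finset.univ.gcd x = 1) : x ≠ 0 := by
  rintro rfl
  exact zero_ne_one ((Finset.gcd_eq_zero_iff.2 fun _ _ => rfl).symm.trans hx)

theorem castVec_zmod_ne_zero_of_gcd_eq_one {p : ℕ} [Fact p.Prime] {x : ι → ℤ}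
    (hx : Finset.univ.gcd x = 1) : castVec (ZMod p) x ≠ 0 := fun h => by
  have hdvd : (p : ℤ) ∣ Finset.univ.gcd x :=
    Finset.dvd_gcd fun i _ => (ZMod.intCast_zmod_eq_zero_iff_dvd _ _).1 (congrFun h i)
  rw [hx] at hdvd
  exact (Nat.prime_iff_prime_int.1 Fact.out).not_dvd_one hdvd

theorem eq_or_eq_neg_of_gcd_eq_one {x y : ι → ℤ} (hx : Finset.univ.gcd x = 1)
    (hy : Finset.univ.gcd y = 1) (hxy : ∀ i j, x i * y j = x j * y i) : y = x ∨ y = -x := by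
  have habs (j : ι) : |y j| = |x j| := by
    calc |y j| = Finset.univ.gcd fun i => y j * x i := by
          rw [Finset.gcd_mul_left, hx, mul_one, Int.abs_eq_normalize]
      _ = Finset.univ.gcd fun i => x j * y i := by simp only [mul_comm (y j), hxy _ j]
      _ = |x j| := by rw [Finset.gcd_mul_left, hy, mul_one, Int.abs_eq_normalize]
  obtain ⟨i, hi⟩ := Function.ne_iff.1 (ne_zero_of_gcd_eq_one hx)
  refine (abs_eq_abs.1 (habs i)).imp (fun h => ?_) fun h => ?_ <;> ext j <;>
    refine mul_left_cancel₀ hi ?_ <;> rw [hxy i j, h]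
  · exact mul_comm _ _
  · rw [Pi.neg_apply]; ring

theorem linearIndependent_castVec_zmod_pair {p : ℕ} [Fact p.Prime] {x y : ι → ℤ}
    (hx : Finset.univ.gcd x = 1) (hy : Finset.univ.gcd y = 1) (hne : y ≠ x) (hneg : y ≠ -x)
    {H : ℤ} (hxH : ∀ i, |x i| ≤ H) (hyH : ∀ i, |y i| ≤ H) (hp : 2 * H ^ 2 < p) :
    LinearIndependent (ZMod p) ![castVec (ZMod p) x, castVec (ZMod p) y] := by
  obtain ⟨i, j, hij⟩ : ∃ i j, x i * y j ≠ x j * y i := by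
    by_contra! h
    exact (eq_or_eq_neg_of_gcd_eq_one hx hy h).elim hne hneg
  have hmul (k l : ι) : |x k * y l| ≤ H ^ 2 := by
    rw [abs_mul, sq]
    exact mul_le_mul (hxH k) (hyH l) (abs_nonneg _) ((abs_nonneg _).trans (hxH k))
  have hminor : (x i * y j - x j * y i : ZMod p) ≠ 0 := by
    intro h
    have hdvd : (p : ℤ) ∣ x i * y j - x j * y i := by
      rw [← ZMod.intCast_zmod_eq_zero_iff_dvd]; exact_mod_cast h
    refine hij (sub_eq_zero.1 (Int.eq_zero_of_abs_lt_dvd hdvd ?_))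
    linarith [abs_sub (x i * y j) (x j * y i), hmul i j, hmul j i]
  rw [LinearIndependent.pair_iff]
  intro s t hst
  have hi : s * x i + t * y i = 0 := congrFun hst i
  have hj : s * x j + t * y j = 0 := congrFun hst j
  constructor
  · exact (mul_eq_zero.1 (by linear_combination (y j : ZMod p) * hi - (y i : ZMod p) * hj :
      s * (x i * y j - x j * y i : ZMod p) = 0)).resolve_right hminor
  · exact (mul_eq_zero.1 (by linear_combination (x i : ZMod p) * hj - (x j : ZMod p) * hi :
      t * (x i * y j - x j * y i : ZMod p) = 0)).resolve_right hminor

theorem card_hyperplane_avoid_mul_le [DecidableEq ι] {p : ℕ} [Fact p.Prime] {X : Finset (ι → ℤ)}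
    (hX : ∀ x ∈ X, Finset.univ.gcd x = 1) {H : ℤ} (hH : ∀ x ∈ X, ∀ i, |x i| ≤ H)
    (hp : 2 * H ^ 2 < p) :
    ((Finset.univ.filter fun a : ι → ZMod p => ∀ x ∈ X, castVec (ZMod p) x ⬝ᵥ a ≠ 0).card : ℝ)
      * X.card ≤ 2 * (p * (p : ℝ) ^ Fintype.card ι) := by
  classical
  have hcard : (Fintype.card (ι → ZMod p) : ℝ) = (p : ℝ) ^ Fintype.card ι := by
    rw [Fintype.card_fun, ZMod.card, Nat.cast_pow]
  set E : (ι → ℤ) → Finset (ι → ZMod p) := fun x => {a | castVec (ZMod p) x ⬝ᵥ a = 0} with hE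
  have hprob : ∀ x ∈ X, ((E x).card : ℝ) * p = Fintype.card (ι → ZMod p) := by
    intro x hx
    have h := card_dotProduct_eq_zero_mul_card_pow (v := fun _ : Unit => castVec (ZMod p) x)
      (linearIndependent_unique_iff.2 (castVec_zmod_ne_zero_of_gcd_eq_one (hX x hx)))
    rw [hcard]
    exact_mod_cast (by simpa [ZMod.card] using h :
      (E x).card * p = p ^ Fintype.card ι)
  have hcorr : ∀ x ∈ X, ∀ y ∈ X, y ≠ x → y ≠ -x →
      ((E x ∩ E y).card : ℝ) * (p : ℝ) ^ 2 ≤ Fintype.card (ι → ZMod p) := by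
    intro x hx y hy hne hneg
    have h := card_dotProduct_eq_zero_mul_card_pow
      (linearIndependent_castVec_zmod_pair (hX x hx) (hX y hy) hne hneg (hH x hx) (hH y hy) hp)
    rw [hcard, hE, ← Finset.filter_and]
    exact_mod_cast (by simpa [Fin.forall_fin_two, ZMod.card] using h : _ = _).le
  simpa [E, hcard] using card_avoid_mul_card_le p.cast_nonneg E X (fun x => -x) hprob hcorr

end Hyperplanes

section JordanRegion

variable {ι : Type*} [Fintype ι] {S : Set (ι → ℝ)}

/-- A bounded open set with null boundary not containing the origin: the regions whose integer
points are counted below. -/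
structure IsJordanRegion (S : Set (ι → ℝ)) : Prop where
  isOpen : IsOpen S
  isBounded : Bornology.IsBounded S
  volume_frontier : volume (frontier S) = 0
  zero_notMem : 0 ∉ S

theorem volumeReal_smul (S : Set (ι → ℝ)) {t : ℝ} (ht : 0 ≤ t) :
    volume.real (t • S) = t ^ Fintype.card ι * volume.real S := by
  rw [measureReal_def, Measure.addHaar_smul, ENNReal.toReal_mul,
    ENNReal.toReal_ofReal (abs_nonneg _), Module.finrank_fintype_fun_eq_card,
    abs_of_nonneg (pow_nonneg ht _), measureReal_def]

theorem IsJordanRegion.smul (hS : IsJordanRegion S) {t : ℝ} (ht : t ≠ 0) :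
    IsJordanRegion (t • S) where
  isOpen := hS.isOpen.smul₀ ht
  isBounded := hS.isBounded.smul₀ t
  volume_frontier := by
    have h : t • frontier S = frontier (t • S) :=
      (Homeomorph.smulOfNeZero t ht : (ι → ℝ) ≃ₜ (ι → ℝ)).image_frontier S
    rw [← h, Measure.addHaar_smul, hS.volume_frontier, mul_zero]
  zero_notMem h := hS.zero_notMem ((Set.zero_mem_smul_set_iff ht).1 h)

end JordanRegion

section ScaledPoints

variable {ι : Type*} {S : Set (ι → ℝ)} {C t : ℝ}

/-- The integer points `x` with `t • x ∈ S`, that is, the integer points of `t⁻¹ • S`. -/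
def scaledPoints (S : Set (ι → ℝ)) (t : ℝ) : Set (ι → ℤ) := {x | t • castVec ℝ x ∈ S}

theorem mem_scaledPoints {x : ι → ℤ} : x ∈ scaledPoints S t ↔ t • castVec ℝ x ∈ S := Iff.rfl

theorem scaledPoints_inv_smul {k : ℝ} (hk : k ≠ 0) (t : ℝ) :
    scaledPoints (k⁻¹ • S) t = scaledPoints S (k * t) := by
  ext x
  rw [mem_scaledPoints, mem_scaledPoints, Set.mem_inv_smul_set_iff₀ hk, smul_smul]

theorem natCast_smul_mem_scaledPoints {k : ℕ} {x : ι → ℤ} :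
    (k : ℤ) • x ∈ scaledPoints S t ↔ x ∈ scaledPoints S (k * t) := by
  rw [mem_scaledPoints, mem_scaledPoints, map_smul, natCast_zsmul, ← Nat.cast_smul_eq_nsmul ℝ,
    smul_smul, mul_comm]

theorem ne_zero_of_mem_scaledPoints (h0 : 0 ∉ S) {x : ι → ℤ} (hx : x ∈ scaledPoints S t) :
    x ≠ 0 := by
  rintro rfl
  rw [mem_scaledPoints, map_zero, smul_zero] at hx
  exact h0 hx

theorem coe_span_range_basisFun [Finite ι] :
    (Submodule.span ℤ (Set.range (Pi.basisFun ℝ ι)) : Set (ι → ℝ)) =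
      Set.range (castVec ℝ : (ι → ℤ) → ι → ℝ) := by
  ext y
  simp only [SetLike.mem_coe, Module.Basis.mem_span_iff_repr_mem, Pi.basisFun_repr, Set.mem_range,
    funext_iff, castVec_apply]
  exact Classical.skolem

theorem inter_inv_smul_span_eq_image_scaledPoints [Finite ι] (R : ℝ) :
    S ∩ R⁻¹ • (Submodule.span ℤ (Set.range (Pi.basisFun ℝ ι)) : Set (ι → ℝ)) =
      (fun x => R⁻¹ • castVec ℝ x) '' scaledPoints S R⁻¹ := by
  rw [coe_span_range_basisFun, ← Set.image_smul, ← Set.range_comp,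
    ← Set.image_preimage_eq_inter_range]
  rfl

variable [Fintype ι]

theorem abs_le_of_mem_scaledPoints (hS : ∀ y ∈ S, ‖y‖ ≤ C) (ht : 0 < t) {x : ι → ℤ}
    (hx : x ∈ scaledPoints S t) (i : ι) : |(x i : ℝ)| ≤ C / t := by
  have h := (norm_le_pi_norm (t • castVec ℝ x) i).trans (hS _ hx)
  rwa [Pi.smul_apply, castVec_apply, norm_smul, Real.norm_of_nonneg ht.le, Real.norm_eq_abs,
    mul_comm, ← le_div_iff₀ ht] at h

theorem scaledPoints_eq_empty (hS : ∀ y ∈ S, ‖y‖ ≤ C) (h0 : 0 ∉ S) (ht : 0 < t) (hCt : C < t) :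
    scaledPoints S t = ∅ := by
  refine Set.eq_empty_of_forall_notMem fun x hx => ne_zero_of_mem_scaledPoints h0 hx ?_
  ext i
  have h : |(x i : ℝ)| < 1 :=
    (abs_le_of_mem_scaledPoints hS ht hx i).trans_lt ((div_lt_one ht).2 hCt)
  exact Int.abs_lt_one_iff.1 (by exact_mod_cast h)

theorem scaledPoints_subset_piFinset [DecidableEq ι] (hS : ∀ y ∈ S, ‖y‖ ≤ C) (ht : 0 < t) :
    scaledPoints S t ⊆
      (Fintype.piFinset fun _ : ι => Finset.Icc (-⌊C / t⌋) ⌊C / t⌋ : Finset (ι → ℤ)) := by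
  intro x hx
  rw [Finset.mem_coe, Fintype.mem_piFinset]
  intro i
  rw [Finset.mem_Icc, ← abs_le, Int.le_floor]
  exact_mod_cast abs_le_of_mem_scaledPoints hS ht hx i

theorem finite_scaledPoints {ι : Type*} [Finite ι] {S : Set (ι → ℝ)}
    (hS : Bornology.IsBounded S) (ht : 0 < t) : (scaledPoints S t).Finite := by
  classical
  have := Fintype.ofFinite ι
  obtain ⟨C, hC⟩ := hS.exists_norm_le
  exact (Finset.finite_toSet _).subset (scaledPoints_subset_piFinset hC ht)

theorem ncard_scaledPoints_le (hC : 0 ≤ C) (hS : ∀ y ∈ S, ‖y‖ ≤ C) (ht : 0 < t) :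
    ((scaledPoints S t).ncard : ℝ) ≤ (2 * (C / t) + 1) ^ Fintype.card ι := by
  classical
  have hcard := Set.ncard_le_ncard (scaledPoints_subset_piFinset hS ht) (Finset.finite_toSet _)
  rw [Set.ncard_coe_finset, Fintype.card_piFinset, Finset.prod_const, Finset.card_univ,
    Int.card_Icc] at hcard
  have hfloor : 0 ≤ ⌊C / t⌋ := Int.floor_nonneg.2 (by positivity)
  have hIcc : ((⌊C / t⌋ + 1 - -⌊C / t⌋).toNat : ℝ) = 2 * ⌊C / t⌋ + 1 := by
    have h : ((⌊C / t⌋ + 1 - -⌊C / t⌋).toNat : ℤ) = 2 * ⌊C / t⌋ + 1 := by lia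
    exact_mod_cast congrArg (Int.cast : ℤ → ℝ) h
  calc ((scaledPoints S t).ncard : ℝ)
      ≤ ((⌊C / t⌋ + 1 - -⌊C / t⌋).toNat : ℝ) ^ Fintype.card ι := by exact_mod_cast hcard
    _ ≤ (2 * (C / t) + 1) ^ Fintype.card ι := by
        rw [hIcc]
        have : (0 : ℝ) ≤ ⌊C / t⌋ := Int.cast_nonneg hfloor
        gcongr
        exact Int.floor_le _

theorem ncard_scaledPoints_div_le (hC : 0 ≤ C) (hS : ∀ y ∈ S, ‖y‖ ≤ C) (h0 : 0 ∉ S)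
    (hι : 2 ≤ Fintype.card ι) {R k : ℕ} (hR : 0 < R) (hk : 0 < k) :
    ((scaledPoints S (k / R)).ncard : ℝ) / R ^ Fintype.card ι ≤
      (3 * C) ^ Fintype.card ι * (1 / (k : ℝ) ^ 2) := by
  have ht : (0 : ℝ) < k / R := by positivity
  rcases lt_or_ge C (k / R) with hCt | hCt
  · rw [scaledPoints_eq_empty hS h0 ht hCt, Set.ncard_empty, Nat.cast_zero, zero_div]
    positivity
  have hone : 1 ≤ C / (k / R) := (one_le_div ht).2 hCt
  have hk1 : (1 : ℝ) ≤ k := by exact_mod_cast hk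
  rw [div_le_iff₀ (by positivity)]
  calc ((scaledPoints S (k / R)).ncard : ℝ)
      ≤ (2 * (C / (k / R)) + 1) ^ Fintype.card ι := ncard_scaledPoints_le hC hS ht
    _ ≤ (3 * (C / (k / R))) ^ Fintype.card ι := by gcongr; linarith
    _ = (3 * C) ^ Fintype.card ι * (1 / (k : ℝ) ^ Fintype.card ι) * R ^ Fintype.card ι := by
      rw [← _root_.one_div_pow, ← mul_pow, ← mul_pow]
      congr 1
      field_simp
    _ ≤ (3 * C) ^ Fintype.card ι * (1 / (k : ℝ) ^ 2) * R ^ Fintype.card ι := by gcongr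

theorem IsJordanRegion.tendsto_ncard_scaledPoints_inv (hS : IsJordanRegion S) :
    Tendsto (fun R : ℕ => ((scaledPoints S (R : ℝ)⁻¹).ncard : ℝ) / R ^ Fintype.card ι) atTop
      (𝓝 (volume.real S)) := by
  refine (tendsto_card_div_pow_atTop_volume S hS.isBounded hS.isOpen.measurableSet
    hS.volume_frontier).congr' ?_
  filter_upwards [eventually_ne_atTop 0] with R hR
  have hinj : Function.Injective fun x : ι → ℤ => (R : ℝ)⁻¹ • castVec ℝ x :=
    (smul_right_injective _ (inv_ne_zero (Nat.cast_ne_zero.2 hR))).comp (castVec_injective ℝ)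
  rw [inter_inv_smul_span_eq_image_scaledPoints, Nat.card_coe_set_eq,
    Set.ncard_image_of_injective _ hinj]

theorem IsJordanRegion.tendsto_ncard_scaledPoints (hS : IsJordanRegion S) {k : ℕ} (hk : k ≠ 0) :
    Tendsto (fun R : ℕ => ((scaledPoints S (k / R)).ncard : ℝ) / R ^ Fintype.card ι) atTop
      (𝓝 (volume.real S / (k : ℝ) ^ Fintype.card ι)) := by
  have hk' : (k : ℝ) ≠ 0 := Nat.cast_ne_zero.2 hk
  have h := (hS.smul (inv_ne_zero hk')).tendsto_ncard_scaledPoints_inv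
  rw [volumeReal_smul S (inv_nonneg.2 k.cast_nonneg), inv_pow, inv_mul_eq_div] at h
  simpa only [scaledPoints_inv_smul hk', ← div_eq_mul_inv] using h

end ScaledPoints

section PrimitivePoints

variable {ι : Type*} [Fintype ι] {S : Set (ι → ℝ)} {C t : ℝ}

/-- The points of `scaledPoints S t` whose coordinates have no common factor. -/
def primitivePoints (S : Set (ι → ℝ)) (t : ℝ) : Set (ι → ℤ) :=
  {x ∈ scaledPoints S t | Finset.univ.gcd x = 1}

theorem exists_eq_natCast_smul_of_gcd_ne_one {x : ι → ℤ} (hx : x ≠ 0)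
    (h : Finset.univ.gcd x ≠ 1) : ∃ (k : ℕ) (z : ι → ℤ), x = ((k + 2 : ℕ) : ℤ) • z := by
  obtain ⟨d, hd⟩ := Int.eq_ofNat_of_zero_le
    (Int.nonneg_of_normalize_eq_self (Finset.normalize_gcd (s := Finset.univ) (f := x)))
  have hd0 : d ≠ 0 := by
    rintro rfl
    exact hx (funext fun i => Finset.gcd_eq_zero_iff.1 hd i (Finset.mem_univ i))
  have hd1 : d ≠ 1 := fun hd1 => h (by rw [hd, hd1, Nat.cast_one])
  choose z hz using fun i => Finset.gcd_dvd (f := x) (Finset.mem_univ i)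
  obtain ⟨k, rfl⟩ := Nat.exists_eq_add_of_le' (show 2 ≤ d by lia)
  exact ⟨k, z, funext fun i => by rw [hz i, hd, Pi.smul_apply, smul_eq_mul]⟩

theorem scaledPoints_subset_primitivePoints_union (hS : ∀ y ∈ S, ‖y‖ ≤ C) (h0 : 0 ∉ S)
    (ht : 0 < t) {N : ℕ} (hN : C < N * t) :
    scaledPoints S t ⊆ primitivePoints S t ∪ ⋃ k ∈ Finset.range N,
      (((k + 2 : ℕ) : ℤ) • · : (ι → ℤ) → ι → ℤ) '' scaledPoints S ((k + 2 : ℕ) * t) := by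
  intro x hx
  by_cases hprim : Finset.univ.gcd x = 1
  · exact Or.inl ⟨hx, hprim⟩
  obtain ⟨k, z, rfl⟩ :=
    exists_eq_natCast_smul_of_gcd_ne_one (ne_zero_of_mem_scaledPoints h0 hx) hprim
  rw [natCast_smul_mem_scaledPoints] at hx
  refine Or.inr (Set.mem_biUnion (x := k) ?_ ⟨z, hx, rfl⟩)
  rw [Finset.mem_coe, Finset.mem_range]
  by_contra! hk
  have hCt : C < (k + 2 : ℕ) * t := hN.trans_le (by gcongr; lia)
  rw [scaledPoints_eq_empty hS h0 (by positivity) hCt] at hx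
  exact hx

theorem exists_ncard_scaledPoints_le_add_sum (hS : Bornology.IsBounded S) (h0 : 0 ∉ S)
    (ht : 0 < t) :
    ∃ N : ℕ, (scaledPoints S t).ncard ≤ (primitivePoints S t).ncard +
      ∑ k ∈ Finset.range N, (scaledPoints S ((k + 2 : ℕ) * t)).ncard := by
  obtain ⟨C, hC⟩ := hS.exists_norm_le
  obtain ⟨N, hN⟩ := exists_nat_gt (C / t)
  have hfin (k : ℕ) : (scaledPoints S ((k + 2 : ℕ) * t)).Finite :=
    finite_scaledPoints hS (by positivity)
  have hfin_prim : (primitivePoints S t).Finite :=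
    (finite_scaledPoints hS ht).subset fun x hx => hx.1
  refine ⟨N, ?_⟩
  calc (scaledPoints S t).ncard
      ≤ _ := Set.ncard_le_ncard
        (scaledPoints_subset_primitivePoints_union hC h0 ht ((div_lt_iff₀ ht).1 hN))
        (hfin_prim.union ((Finset.range N).finite_toSet.biUnion fun k _ => (hfin k).image _))
    _ ≤ _ := Set.ncard_union_le _ _
    _ ≤ _ := by
      gcongr
      exact (Finset.set_ncard_biUnion_le _ _).trans
        (Finset.sum_le_sum fun k _ => Set.ncard_image_le (hfin k))

theorem summable_one_div_add_two_sq : Summable fun k : ℕ => 1 / ((k + 2 : ℕ) : ℝ) ^ 2 :=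
  (summable_nat_add_iff 2).2 hasSum_zeta_two.summable

theorem tsum_one_div_add_two_sq_lt : ∑' k : ℕ, 1 / ((k + 2 : ℕ) : ℝ) ^ 2 < 7 / 10 := by
  have h := hasSum_zeta_two.summable.sum_add_tsum_nat_add 2
  simp only [hasSum_zeta_two.tsum_eq, Finset.sum_range_succ, Finset.sum_range_zero, Nat.cast_zero,
    Nat.cast_one] at h
  have hpi : Real.pi ^ 2 < 10 := by nlinarith [Real.pi_lt_d2, Real.pi_pos]
  linarith

theorem tsum_div_add_two_pow_lt {V : ℝ} (hV : 0 < V) {m : ℕ} (hm : 2 ≤ m) :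
    ∑' k : ℕ, V / ((k + 2 : ℕ) : ℝ) ^ m < 7 / 10 * V := by
  have hle (k : ℕ) : V / ((k + 2 : ℕ) : ℝ) ^ m ≤ V * (1 / ((k + 2 : ℕ) : ℝ) ^ 2) := by
    rw [div_eq_mul_one_div]
    have : (1 : ℝ) ≤ (k + 2 : ℕ) := by exact_mod_cast Nat.le_add_left 1 (k + 1)
    gcongr
  have hsum := summable_one_div_add_two_sq.mul_left V
  calc ∑' k : ℕ, V / ((k + 2 : ℕ) : ℝ) ^ m
      ≤ ∑' k : ℕ, V * (1 / ((k + 2 : ℕ) : ℝ) ^ 2) :=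
        (hsum.of_nonneg_of_le (fun k => by positivity) hle).tsum_le_tsum hle hsum
    _ = V * ∑' k : ℕ, 1 / ((k + 2 : ℕ) : ℝ) ^ 2 := tsum_mul_left
    _ < 7 / 10 * V := by rw [mul_comm]; gcongr; exact tsum_one_div_add_two_sq_lt

namespace IsJordanRegion

theorem eventually_tsum_ncard_scaledPoints_lt (hS : IsJordanRegion S) (hι : 2 ≤ Fintype.card ι)
    (hV : 0 < volume.real S) :
    ∀ᶠ R : ℕ in atTop,
      (Summable fun k : ℕ => ((scaledPoints S ((k + 2 : ℕ) / R)).ncard : ℝ) / R ^ Fintype.card ι) ∧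
      ∑' k : ℕ, ((scaledPoints S ((k + 2 : ℕ) / R)).ncard : ℝ) / R ^ Fintype.card ι <
        7 / 10 * volume.real S := by
  obtain ⟨C, hC0, hC⟩ := hS.isBounded.exists_pos_norm_le
  have hbound := summable_one_div_add_two_sq.mul_left ((3 * C) ^ Fintype.card ι)
  have hle {R : ℕ} (hR : 0 < R) (k : ℕ) :
      ((scaledPoints S ((k + 2 : ℕ) / R)).ncard : ℝ) / R ^ Fintype.card ι ≤
        (3 * C) ^ Fintype.card ι * (1 / ((k + 2 : ℕ) : ℝ) ^ 2) :=
    ncard_scaledPoints_div_le hC0.le hC hS.zero_notMem hι hR (by lia)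
  have hlim := tendsto_tsum_of_dominated_convergence hbound
    (fun k => hS.tendsto_ncard_scaledPoints (k := k + 2) (by lia)) <| by
      filter_upwards [eventually_gt_atTop 0] with R hR k
      rw [Real.norm_of_nonneg (by positivity)]
      exact hle hR k
  filter_upwards [hlim.eventually_lt_const (tsum_div_add_two_pow_lt hV hι),
    eventually_gt_atTop 0] with R hlt hR
  exact ⟨hbound.of_nonneg_of_le (fun k => by positivity) (hle hR), hlt⟩

theorem eventually_le_ncard_primitivePoints (hS : IsJordanRegion S) (hι : 2 ≤ Fintype.card ι)
    (hV : 0 < volume.real S) :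
    ∀ᶠ R : ℕ in atTop, volume.real S / 4 * (R : ℝ) ^ Fintype.card ι ≤
      (primitivePoints S (R : ℝ)⁻¹).ncard := by
  have hall := hS.tendsto_ncard_scaledPoints_inv.eventually_const_lt
    (show 19 / 20 * volume.real S < volume.real S by linarith)
  filter_upwards [hall, hS.eventually_tsum_ncard_scaledPoints_lt hι hV, eventually_gt_atTop 0]
    with R hall hmultiples hR
  obtain ⟨hsummable, hmultiples⟩ := hmultiples
  have hRn : (0 : ℝ) < (R : ℝ) ^ Fintype.card ι := by positivity
  obtain ⟨N, hN⟩ := exists_ncard_scaledPoints_le_add_sum hS.isBounded hS.zero_notMem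
    (show (0 : ℝ) < (R : ℝ)⁻¹ by positivity)
  have hsum : ∑ k ∈ Finset.range N, ((scaledPoints S ((k + 2 : ℕ) * (R : ℝ)⁻¹)).ncard : ℝ) <
      7 / 10 * volume.real S * R ^ Fintype.card ι := by
    simp only [← div_eq_mul_inv]
    rw [← div_lt_iff₀ hRn, Finset.sum_div]
    exact (hsummable.sum_le_tsum _ fun k _ => by positivity).trans_lt hmultiples
  rw [lt_div_iff₀ hRn] at hall
  have hN' : ((scaledPoints S (R : ℝ)⁻¹).ncard : ℝ) ≤ (primitivePoints S (R : ℝ)⁻¹).ncard +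
      ∑ k ∈ Finset.range N, ((scaledPoints S ((k + 2 : ℕ) * (R : ℝ)⁻¹)).ncard : ℝ) := by
    exact_mod_cast hN
  linarith

end IsJordanRegion

end PrimitivePoints

section CongruenceLattice

variable {ι : Type*} [Fintype ι] {p : ℕ}

/-- The integer vectors orthogonal to `a` modulo `p`. For `p` prime and `a ≠ 0` this is a
sublattice of index `p`. -/
def congruenceLattice (a : ι → ZMod p) : Submodule ℤ (ι → ℤ) where
  carrier := {z | castVec (ZMod p) z ⬝ᵥ a = 0}
  add_mem' hx hy := by
    rw [Set.mem_ofPred_eq] at hx hy ⊢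
    rw [map_add, add_dotProduct, hx, hy, add_zero]
  zero_mem' := by rw [Set.mem_ofPred_eq, map_zero, zero_dotProduct]
  smul_mem' c x hx := by
    rw [Set.mem_ofPred_eq] at hx ⊢
    rw [map_smul, smul_dotProduct, hx, smul_zero]

theorem ncard_avoid_mul_ncard_primitivePoints_le [Fact p.Prime] {S : Set (ι → ℝ)} {t : ℝ} {H : ℤ}
    (hfin : (scaledPoints S t).Finite) (hH : ∀ x ∈ scaledPoints S t, ∀ i, |x i| ≤ H)
    (hp : 2 * H ^ 2 < p) :
    ({a : ι → ZMod p | ∀ x ∈ scaledPoints S t, x ∉ congruenceLattice a}.ncard : ℝ) *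
      (primitivePoints S t).ncard ≤ 2 * (p * (p : ℝ) ^ Fintype.card ι) := by
  classical
  have hprim : (primitivePoints S t).Finite := hfin.subset fun x hx => hx.1
  have havoid := card_hyperplane_avoid_mul_le (X := hprim.toFinset)
    (fun x hx => (hprim.mem_toFinset.1 hx).2) (fun x hx => hH x (hprim.mem_toFinset.1 hx).1) hp
  rw [← Set.ncard_eq_toFinset_card _ hprim] at havoid
  refine le_trans ?_ havoid
  gcongr
  rw [← Set.ncard_coe_finset]
  refine Set.ncard_le_ncard (fun a ha => ?_) (Finset.finite_toSet _)
  exact Finset.mem_filter.2 ⟨Finset.mem_univ _, fun x hx => ha x (hprim.mem_toFinset.1 hx).1⟩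

theorem IsJordanRegion.eventually_ncard_avoid_le {S : Set (ι → ℝ)} (hS : IsJordanRegion S)
    (hι : 3 ≤ Fintype.card ι) (hV : 0 < volume.real S) :
    ∀ᶠ R : ℕ in atTop, ∀ p : ℕ, p.Prime → R ^ Fintype.card ι < p → p ≤ 2 * R ^ Fintype.card ι →
      ({a : ι → ZMod p | ∀ x ∈ scaledPoints S (R : ℝ)⁻¹, x ∉ congruenceLattice a}.ncard : ℝ) ≤
        16 / volume.real S * (p : ℝ) ^ Fintype.card ι := by
  obtain ⟨C, hC⟩ := hS.isBounded.exists_norm_le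
  obtain ⟨N, hN⟩ := exists_nat_ge C
  filter_upwards [hS.eventually_le_ncard_primitivePoints (by lia) hV,
    eventually_gt_atTop (2 * N ^ 2)] with R hR hNR p hp hp1 hp2
  have : Fact p.Prime := ⟨hp⟩
  have hR0 : (0 : ℝ) < R := by exact_mod_cast hNR.trans_le' (Nat.zero_le _)
  have hheight : ∀ x ∈ scaledPoints S (R : ℝ)⁻¹, ∀ i, |x i| ≤ ((N * R : ℕ) : ℤ) := fun x hx i => by
    have h := abs_le_of_mem_scaledPoints hC (inv_pos.2 hR0) hx i
    rw [div_inv_eq_mul] at h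
    have h' : |(x i : ℝ)| ≤ N * R := h.trans (by gcongr)
    exact_mod_cast h'
  have hlt : 2 * (N * R) ^ 2 < p := calc
    2 * (N * R) ^ 2 = 2 * N ^ 2 * R ^ 2 := by ring
    _ ≤ R * R ^ 2 := by gcongr
    _ = R ^ 3 := by ring
    _ ≤ R ^ Fintype.card ι := Nat.pow_le_pow_right (by exact_mod_cast hR0) hι
    _ < p := hp1
  have havoid := ncard_avoid_mul_ncard_primitivePoints_le
    (finite_scaledPoints hS.isBounded (inv_pos.2 hR0)) hheight (by exact_mod_cast hlt)
  refine le_of_mul_le_mul_right ?_ (show 0 < volume.real S / 4 * (R : ℝ) ^ Fintype.card ι by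
    positivity)
  calc _ ≤ _ := mul_le_mul_of_nonneg_left hR (by positivity)
    _ ≤ 2 * (p * (p : ℝ) ^ Fintype.card ι) := havoid
    _ ≤ 2 * (2 * (R : ℝ) ^ Fintype.card ι * (p : ℝ) ^ Fintype.card ι) := by
      gcongr
      exact_mod_cast hp2
    _ = 16 / volume.real S * (p : ℝ) ^ Fintype.card ι *
        (volume.real S / 4 * (R : ℝ) ^ Fintype.card ι) := by
      field_simp
      ring

end CongruenceLattice

section Preimage

variable {n : ℕ} {S : Set (Fin n → ℝ)}

theorem IsJordanRegion.preimage {ι : Type*} [Fintype ι] {S : Set (ι → ℝ)} (hS : IsJordanRegion S)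
    (e : (ι → ℝ) ≃L[ℝ] ι → ℝ) : IsJordanRegion (e ⁻¹' S) where
  isOpen := hS.isOpen.preimage e.continuous
  isBounded := by
    rw [← e.image_symm_eq_preimage]
    exact e.symm.lipschitz.isBounded_image hS.isBounded
  volume_frontier := by
    rw [← e.coe_toHomeomorph, ← e.toHomeomorph.preimage_frontier, e.coe_toHomeomorph,
      Measure.addHaar_preimage_continuousLinearEquiv, hS.volume_frontier, mul_zero]
  zero_notMem := by rw [Set.mem_preimage, map_zero]; exact hS.zero_notMem

theorem IsJordanRegion.preimage_mulVec (hS : IsJordanRegion S) (h : SLR n) :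
    IsJordanRegion ((h.1 *ᵥ ·) ⁻¹' S) :=
  hS.preimage (Matrix.SpecialLinearGroup.toLin' h).toContinuousLinearEquiv

theorem volumeReal_preimage_mulVec (h : SLR n) (S : Set (Fin n → ℝ)) :
    volume.real ((h.1 *ᵥ ·) ⁻¹' S) = volume.real S := by
  have hdet : LinearMap.det (toLin' h.1) = 1 := by rw [LinearMap.det_toLin', h.det_coe]
  have hvol := Measure.addHaar_preimage_linearMap volume (hdet.trans_ne one_ne_zero) S
  rw [hdet, inv_one, abs_one, ENNReal.ofReal_one, one_mul] at hvol
  exact congrArg ENNReal.toReal hvol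

end Preimage

section AxisBox

variable {n : ℕ} {r : ℝ} {i : Fin n}

/-- The cube of radius `r` about the point at distance `2 n r` on the `i`-th coordinate axis. It is
so far out that a choice of one point from each of these cubes is linearly independent. -/
def axisBox (r : ℝ) (i : Fin n) : Set (Fin n → ℝ) := Metric.ball (Pi.single i (2 * n * r)) r

theorem volumeReal_axisBox (hr : 0 < r) (i : Fin n) : volume.real (axisBox r i) = (2 * r) ^ n := by
  rw [axisBox, measureReal_def, Real.volume_pi_ball _ hr, Fintype.card_fin,
    ENNReal.toReal_ofReal (by positivity)]

theorem abs_sub_lt_of_mem_axisBox {y : Fin n → ℝ} (hy : y ∈ axisBox r i) (k : Fin n) :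
    |y k - (Pi.single i (2 * n * r) : Fin n → ℝ) k| < r :=
  (norm_le_pi_norm (y - (Pi.single i (2 * n * r) : Fin n → ℝ)) k).trans_lt (mem_ball_iff_norm.1 hy)

theorem lt_apply_self_of_mem_axisBox {y : Fin n → ℝ} (hy : y ∈ axisBox r i) :
    2 * n * r - r < y i := by
  have h := abs_sub_lt_of_mem_axisBox hy i
  rw [Pi.single_eq_same] at h
  linarith [(abs_lt.1 h).1]

theorem abs_apply_lt_of_mem_axisBox {y : Fin n → ℝ} (hy : y ∈ axisBox r i) {k : Fin n}
    (hk : k ≠ i) : |y k| < r := by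
  simpa [hk] using abs_sub_lt_of_mem_axisBox hy k

theorem abs_le_of_mem_axisBox {y : Fin n → ℝ} (hy : y ∈ axisBox r i) (k : Fin n) :
    |y k| ≤ 3 * n * r := by
  have hr : 0 < r := Metric.pos_of_mem_ball hy
  have hn : (1 : ℝ) ≤ n := by exact_mod_cast Fin.pos i
  rcases eq_or_ne k i with rfl | hk
  · have h := abs_sub_lt_of_mem_axisBox hy k
    rw [Pi.single_eq_same, abs_lt] at h
    rw [abs_le]
    constructor <;> nlinarith
  · exact (abs_apply_lt_of_mem_axisBox hy hk).le.trans (by nlinarith)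

theorem isJordanRegion_axisBox (hr : 0 < r) (i : Fin n) : IsJordanRegion (axisBox r i) where
  isOpen := Metric.isOpen_ball
  isBounded := Metric.isBounded_ball
  volume_frontier := (convex_ball _ _).addHaar_frontier _
  zero_notMem h := by
    have hn : (1 : ℝ) ≤ n := by exact_mod_cast Fin.pos i
    have := lt_apply_self_of_mem_axisBox h
    rw [Pi.zero_apply] at this
    nlinarith

theorem det_ne_zero_of_col_mem_axisBox {A : Matrix (Fin n) (Fin n) ℝ}
    (hA : ∀ i, A.col i ∈ axisBox r i) : A.det ≠ 0 := by
  refine det_ne_zero_of_sum_row_lt_diag fun k => ?_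
  have hr : 0 < r := Metric.pos_of_mem_ball (hA k)
  calc ∑ j ∈ Finset.univ.erase k, ‖A k j‖
      ≤ ∑ _j ∈ Finset.univ.erase k, r := Finset.sum_le_sum fun j hj =>
        (abs_apply_lt_of_mem_axisBox (y := A.col j) (hA j) (Finset.ne_of_mem_erase hj).symm).le
    _ = (n - 1) * r := by
      rw [Finset.sum_const, Finset.card_erase_of_mem (Finset.mem_univ k), Finset.card_univ,
        Fintype.card_fin, nsmul_eq_mul, Nat.cast_pred (Fin.pos k)]
    _ ≤ 2 * n * r - r := by linarith [mul_nonneg n.cast_nonneg hr.le]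
    _ < A k k := lt_apply_self_of_mem_axisBox (y := A.col k) (hA k)
    _ ≤ ‖A k k‖ := Real.le_norm_self _

end AxisBox

section Unimodular

variable {ι : Type*} [Fintype ι] [DecidableEq ι] {p : ℕ}

theorem dvd_det_of_col_mem_congruenceLattice [Fact p.Prime] {a : ι → ZMod p} (ha : a ≠ 0)
    {W : Matrix ι ι ℤ} (hW : ∀ i, W.col i ∈ congruenceLattice a) : (p : ℤ) ∣ W.det := by
  rw [← ZMod.intCast_zmod_eq_zero_iff_dvd, ← eq_intCast (Int.castRingHom (ZMod p)),
    RingHom.map_det, ← exists_vecMul_eq_zero_iff]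
  exact ⟨a, ha, funext fun i => (dotProduct_comm _ _).trans (hW i)⟩

theorem exists_mulVec_eq_smul_of_mem_congruenceLattice [Fact p.Prime] {a : ι → ZMod p} (ha : a ≠ 0)
    {W : Matrix ι ι ℤ} (hW : ∀ i, W.col i ∈ congruenceLattice a) {m : ℤ} (hm : W.det = p * m)
    {z : ι → ℤ} (hz : z ∈ congruenceLattice a) : ∃ u : ι → ℤ, W *ᵥ u = m • z := by
  have hdvd (i : ι) : (p : ℤ) ∣ W.cramer z i := by
    -- By Cramer's rule this is the determinant of a matrix with all columns in the lattice.
    rw [cramer_apply]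
    refine dvd_det_of_col_mem_congruenceLattice ha fun k => ?_
    rcases eq_or_ne k i with rfl | hki
    · rwa [show (W.updateCol k z).col k = z from funext fun _ => updateCol_self]
    · rw [show (W.updateCol i z).col k = W.col k from funext fun _ => updateCol_ne hki]
      exact hW k
  choose u hu using hdvd
  have hp : (p : ℤ) ≠ 0 := Nat.cast_ne_zero.2 (Fact.out : p.Prime).ne_zero
  refine ⟨u, smul_right_injective _ hp ?_⟩
  have hcramer := mulVec_cramer W z
  rwa [show W.cramer z = (p : ℤ) • u from funext hu, mulVec_smul, hm, mul_smul] at hcramer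

theorem exists_det_pos_of_det_ne_zero [Nonempty ι] {L : Submodule ℤ (ι → ℤ)} {W : Matrix ι ι ℤ}
    (hW : ∀ i, W.col i ∈ L) (hdet : W.det ≠ 0) :
    ∃ W' : Matrix ι ι ℤ, (∀ i, W'.col i ∈ L) ∧ (∀ k i, |W' k i| ≤ |W k i|) ∧ 0 < W'.det := by
  obtain ⟨i₀⟩ := ‹Nonempty ι›
  set d : ι → ℤ := Pi.mulSingle i₀ W.det.sign with hd
  have hd1 (i : ι) : |d i| = 1 := by
    rcases eq_or_ne i i₀ with rfl | hi
    · rw [hd, Pi.mulSingle_eq_same, Int.abs_sign_of_ne_zero hdet]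
    · rw [hd, Pi.mulSingle_eq_of_ne hi, abs_one]
  refine ⟨W * diagonal d, fun i => ?_, fun k i => ?_, ?_⟩
  · have hcol : (W * diagonal d).col i = d i • W.col i := by
      ext k
      simp [mul_comm]
    rw [hcol]
    exact L.smul_mem _ (hW i)
  · rw [mul_diagonal, abs_mul, hd1, mul_one]
  · rw [det_mul, det_diagonal, hd, Finset.prod_pi_mulSingle', if_pos (Finset.mem_univ _),
      Int.mul_sign_self]
    exact_mod_cast Int.natAbs_pos.2 hdet

theorem exists_SLR_eq_smul {n : ℕ} {A : Matrix (Fin n) (Fin n) ℝ} (hA : 1 ≤ A.det) :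
    ∃ (g : SLR n) (t : ℝ), 0 < t ∧ t ≤ 1 ∧ g.1 = t • A := by
  rcases eq_or_ne n 0 with rfl | hn
  · exact ⟨1, 1, one_pos, le_rfl, Subsingleton.elim _ _⟩
  have hA0 : 0 < A.det := one_pos.trans_le hA
  refine ⟨⟨(A.det ^ (n : ℝ)⁻¹)⁻¹ • A, ?_⟩, (A.det ^ (n : ℝ)⁻¹)⁻¹, by positivity,
    inv_le_one_of_one_le₀ (Real.one_le_rpow hA (by positivity)), rfl⟩
  rw [det_smul, Fintype.card_fin, inv_pow, Real.rpow_inv_natCast_pow hA0.le hn,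
    inv_mul_cancel₀ hA0.ne']

end Unimodular

section BoundedBasis

variable {n p : ℕ} {R r : ℝ}

theorem det_inv_smul_map_intCast (R : ℝ) (W : Matrix (Fin n) (Fin n) ℤ) :
    (R⁻¹ • W.map ((↑) : ℤ → ℝ)).det = W.det / R ^ n := by
  rw [det_smul, Fintype.card_fin, inv_pow, inv_mul_eq_div, ← Int.cast_det]

theorem exists_matrix_of_scaledPoints_axisBox_inter_nonempty [NeZero n] (hR : 0 < R)
    {L : Submodule ℤ (Fin n → ℤ)} (hbox : ∀ i, ∃ x ∈ scaledPoints (axisBox r i) R⁻¹, x ∈ L) :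
    ∃ W : Matrix (Fin n) (Fin n) ℤ, (∀ i, W.col i ∈ L) ∧ 0 < W.det ∧
      ∀ k i, |(R⁻¹ • W.map ((↑) : ℤ → ℝ)) k i| ≤ 3 * n * r := by
  choose x hxbox hxL using hbox
  have hdet : (of x)ᵀ.det ≠ 0 := by
    have h := det_ne_zero_of_col_mem_axisBox (A := R⁻¹ • (of x)ᵀ.map ((↑) : ℤ → ℝ)) hxbox
    rw [det_inv_smul_map_intCast] at h
    exact_mod_cast (div_ne_zero_iff.1 h).1
  obtain ⟨W, hWL, hWle, hWdet⟩ := exists_det_pos_of_det_ne_zero (W := (of x)ᵀ) hxL hdet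
  refine ⟨W, hWL, hWdet, fun k i => ?_⟩
  calc |(R⁻¹ • W.map ((↑) : ℤ → ℝ)) k i| = R⁻¹ * |(W k i : ℝ)| := by
        rw [Matrix.smul_apply, map_apply, smul_eq_mul, abs_mul, abs_of_pos (inv_pos.2 hR)]
    _ ≤ R⁻¹ * |(x i k : ℝ)| := by
        gcongr R⁻¹ * ?_
        exact_mod_cast hWle k i
    _ = |(R⁻¹ • castVec ℝ (x i)) k| := by
        rw [Pi.smul_apply, castVec_apply, smul_eq_mul, abs_mul, abs_of_pos (inv_pos.2 hR)]
    _ ≤ 3 * n * r := abs_le_of_mem_axisBox (hxbox i) k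

theorem exists_SLR_of_scaledPoints_axisBox_inter_nonempty [NeZero n] (hp : p.Prime) (hR : 0 < R)
    (hRp : R ^ n ≤ p) {a : Fin n → ZMod p} (ha : a ≠ 0)
    (hbox : ∀ i, ∃ x ∈ scaledPoints (axisBox r i) R⁻¹, x ∈ congruenceLattice a) :
    ∃ v : SLR n, (∀ k i, |v.1 k i| ≤ 3 * n * r) ∧ ∀ z ∈ congruenceLattice a,
      ∃ u : Fin n → ℤ, ∃ t ∈ Set.Ioc 0 (n.factorial * (3 * n * r) ^ n),
        v.1 *ᵥ castVec ℝ u = t • R⁻¹ • castVec ℝ z := by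
  have := Fact.mk hp
  obtain ⟨W, hWL, hWdet, hWle⟩ := exists_matrix_of_scaledPoints_axisBox_inter_nonempty hR hbox
  obtain ⟨m, hm⟩ := dvd_det_of_col_mem_congruenceLattice ha hWL
  have hm0 : 0 < m := pos_of_mul_pos_right (hm ▸ hWdet) p.cast_nonneg
  have hdet : (m : ℝ) ≤ (R⁻¹ • W.map ((↑) : ℤ → ℝ)).det := by
    rw [det_inv_smul_map_intCast, hm, le_div_iff₀ (by positivity)]
    push_cast
    rw [mul_comm]
    gcongr
  have hdetle := (le_abs_self _).trans
    (det_le (abv := IsAbsoluteValue.toAbsoluteValue (abs : ℝ → ℝ)) hWle)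
  rw [Fintype.card_fin, nsmul_eq_mul] at hdetle
  obtain ⟨v, t, ht0, ht1, hv⟩ := exists_SLR_eq_smul ((Int.cast_one_le_of_pos hm0).trans hdet)
  refine ⟨v, fun k i => ?_, fun z hz => ?_⟩
  · rw [hv, Matrix.smul_apply, smul_eq_mul, abs_mul, abs_of_pos ht0]
    exact (mul_le_of_le_one_left (abs_nonneg _) ht1).trans (hWle k i)
  · obtain ⟨u, hu⟩ := exists_mulVec_eq_smul_of_mem_congruenceLattice ha hWL hm hz
    refine ⟨u, t * m, ⟨by positivity, ?_⟩, ?_⟩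
    · exact (mul_le_of_le_one_left (by positivity) ht1).trans (hdet.trans hdetle)
    · rw [hv, smul_mulVec, smul_mulVec, ← castVec_mulVec, hu, map_smul, ← Int.cast_smul_eq_zsmul ℝ,
        mul_smul, smul_comm R⁻¹]

theorem exists_mul_mem_meetSet [NeZero n] (hp : p.Prime) (hR : 0 < R)
    (hRp : R ^ n ≤ p) {a : Fin n → ZMod p} (ha : a ≠ 0)
    (hbox : ∀ i, ∃ x ∈ scaledPoints (axisBox r i) R⁻¹, x ∈ congruenceLattice a) :
    ∃ v : SLR n, (∀ k i, |v.1 k i| ≤ 3 * n * r) ∧ ∀ (h : SLR n) (U : Set (Fin n → ℝ)),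
      (∃ x ∈ scaledPoints ((h.1 *ᵥ ·) ⁻¹' U) R⁻¹, x ∈ congruenceLattice a) →
        h * v ∈ meetSet (Set.Ioc 0 (n.factorial * (3 * n * r) ^ n : ℝ) • U) := by
  obtain ⟨v, hv, hvL⟩ := exists_SLR_of_scaledPoints_axisBox_inter_nonempty hp hR hRp ha hbox
  refine ⟨v, hv, fun h U ⟨x, hxU, hx⟩ => ?_⟩
  obtain ⟨u, t, ht, hu⟩ := hvL x hx
  have hmem := Set.smul_mem_smul ht (show h.1 *ᵥ R⁻¹ • castVec ℝ x ∈ U from hxU)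
  rw [← mulVec_smul, ← hu, mulVec_mulVec] at hmem
  exact ⟨u, hmem⟩

end BoundedBasis

section HittingVectors

variable {ι κ : Type*} {U : κ → Set (ι → ℝ)} {p : ℕ}

/-- The nonzero `a` modulo `p` such that, after scaling by `R⁻¹`, the congruence lattice of `a` has
a point in each of the sets `U k`. -/
def hittingVectors [Fintype ι] (U : κ → Set (ι → ℝ)) (R : ℝ) (p : ℕ) : Set (ι → ZMod p) :=
  {a | a ≠ 0 ∧ ∀ k, ∃ x ∈ scaledPoints (U k) R⁻¹, x ∈ congruenceLattice a}

variable [Fintype ι] [Fintype κ]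

theorem card_le_one_add_sum_ncard_add_ncard_hittingVectors [NeZero p] (R : ℝ) :
    p ^ Fintype.card ι ≤ 1 +
      ∑ k, {a : ι → ZMod p | ∀ x ∈ scaledPoints (U k) R⁻¹, x ∉ congruenceLattice a}.ncard +
        (hittingVectors U R p).ncard := by
  classical
  have hcover : (Set.univ : Set (ι → ZMod p)) ⊆
      ({0} ∪ ⋃ k, {a | ∀ x ∈ scaledPoints (U k) R⁻¹, x ∉ congruenceLattice a}) ∪
        hittingVectors U R p := by
    intro a _
    rcases eq_or_ne a 0 with ha | ha
    · exact Or.inl (Or.inl ha)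
    by_cases hhit : ∀ k, ∃ x ∈ scaledPoints (U k) R⁻¹, x ∈ congruenceLattice a
    · exact Or.inr ⟨ha, hhit⟩
    · push Not at hhit
      exact Or.inl (Or.inr (Set.mem_iUnion.2 hhit))
  calc p ^ Fintype.card ι = (Set.univ : Set (ι → ZMod p)).ncard := by
        rw [Set.ncard_univ, Nat.card_eq_fintype_card, Fintype.card_fun, ZMod.card]
    _ ≤ _ := Set.ncard_le_ncard hcover
    _ ≤ _ := Set.ncard_union_le _ _
    _ ≤ _ := by
        gcongr
        refine (Set.ncard_union_le _ _).trans ?_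
        rw [Set.ncard_singleton]
        gcongr
        exact Set.ncard_iUnion_le_of_fintype _

theorem eventually_pow_le_two_mul_ncard_hittingVectors (hU : ∀ k, IsJordanRegion (U k))
    (hι : 3 ≤ Fintype.card ι) (hV : ∀ k, 0 < volume.real (U k))
    (hsum : ∑ k, 16 / volume.real (U k) ≤ 1 / 4) :
    ∀ᶠ R : ℕ in atTop, ∀ p : ℕ, p.Prime → R ^ Fintype.card ι < p → p ≤ 2 * R ^ Fintype.card ι →
      p ^ Fintype.card ι ≤ 2 * (hittingVectors U R p).ncard := by
  filter_upwards [eventually_all.2 fun k => (hU k).eventually_ncard_avoid_le hι (hV k)]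
    with R hR p hp hRp hpR
  have := Fact.mk hp
  have hp8 : (8 : ℝ) ≤ (p : ℝ) ^ Fintype.card ι := calc
    (8 : ℝ) = 2 ^ 3 := by norm_num
    _ ≤ (p : ℝ) ^ 3 := by gcongr; exact_mod_cast hp.two_le
    _ ≤ (p : ℝ) ^ Fintype.card ι := by gcongr; exact_mod_cast hp.one_le
  have hcard : (p : ℝ) ^ Fintype.card ι ≤ 1 +
      ∑ k, ({a : ι → ZMod p | ∀ x ∈ scaledPoints (U k) (R : ℝ)⁻¹,
        x ∉ congruenceLattice a}.ncard : ℝ) + (hittingVectors U R p).ncard := by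
    exact_mod_cast card_le_one_add_sum_ncard_add_ncard_hittingVectors (U := U) (p := p) (R : ℝ)
  have havoid : ∑ k, ({a : ι → ZMod p | ∀ x ∈ scaledPoints (U k) (R : ℝ)⁻¹,
      x ∉ congruenceLattice a}.ncard : ℝ) ≤ 1 / 4 * (p : ℝ) ^ Fintype.card ι := by
    refine (Finset.sum_le_sum fun k _ => hR k p hp hRp hpR).trans ?_
    rw [← Finset.sum_mul]
    gcongr
  have hreal : (p : ℝ) ^ Fintype.card ι ≤ 2 * (hittingVectors U R p).ncard := by linarith
  exact_mod_cast hreal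

end HittingVectors

section TwistedHitting

variable {n : ℕ} {J : Type*}

theorem sum_div_volumeReal_axisBox_le [NeZero n] :
    ∑ i : Fin n, 16 / volume.real (axisBox (64 * n : ℝ) i) ≤ 1 / 8 := by
  have hn : (1 : ℝ) ≤ n := by exact_mod_cast NeZero.one_le
  calc ∑ i : Fin n, 16 / volume.real (axisBox (64 * n : ℝ) i)
      = n * (16 / (2 * (64 * n)) ^ n) := by
        simp only [volumeReal_axisBox (show (0 : ℝ) < 64 * n by positivity), Finset.sum_const,
          Finset.card_univ, Fintype.card_fin, nsmul_eq_mul]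
    _ ≤ n * (16 / (2 * (64 * n))) := by
        gcongr
        exact le_self_pow₀ (by linarith) (NeZero.ne n)
    _ = 1 / 8 := by
        field_simp
        norm_num

/-- The axis boxes, which provide a bounded basis, together with the preimages under `h` of the sets
`S j` to be hit. -/
def boxesWithPreimages (S : J → Set (Fin n → ℝ)) (h : SLR n) : Fin n ⊕ J → Set (Fin n → ℝ) :=
  Sum.elim (axisBox (64 * n)) fun j => (h.1 *ᵥ ·) ⁻¹' S j

theorem mem_hittingVectors_boxesWithPreimages {S : J → Set (Fin n → ℝ)} {h : SLR n} {R : ℝ} {p : ℕ}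
    {a : Fin n → ZMod p} : a ∈ hittingVectors (boxesWithPreimages S h) R p ↔
      a ≠ 0 ∧ (∀ i, ∃ x ∈ scaledPoints (axisBox (64 * n) i) R⁻¹, x ∈ congruenceLattice a) ∧
        ∀ j, ∃ x ∈ scaledPoints ((h.1 *ᵥ ·) ⁻¹' S j) R⁻¹, x ∈ congruenceLattice a :=
  and_congr_right fun _ => Sum.forall

theorem eventually_pow_le_two_mul_ncard_hittingVectors_boxesWithPreimages [Fintype J]
    {S : J → Set (Fin n → ℝ)} (hn : 3 ≤ n) (hS : ∀ j, IsJordanRegion (S j))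
    (hV : ∀ j, 0 < volume.real (S j)) (hsum : ∑ j, 16 / volume.real (S j) ≤ 1 / 8) (h : SLR n) :
    ∀ᶠ R : ℕ in atTop, ∀ p : ℕ, p.Prime → R ^ n < p → p ≤ 2 * R ^ n →
      p ^ n ≤ 2 * (hittingVectors (boxesWithPreimages S h) R p).ncard := by
  have : NeZero n := ⟨by lia⟩
  have hr : (0 : ℝ) < 64 * n := by
    have := NeZero.pos n
    positivity
  have key := eventually_pow_le_two_mul_ncard_hittingVectors (U := boxesWithPreimages S h)
    (Sum.forall.2 ⟨isJordanRegion_axisBox hr, fun j => (hS j).preimage_mulVec h⟩)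
    (by rwa [Fintype.card_fin])
    (Sum.forall.2 ⟨fun i => ?_, fun j => (volumeReal_preimage_mulVec h (S j)).symm ▸ hV j⟩) ?_
  · rwa [Fintype.card_fin] at key
  · rw [boxesWithPreimages, Sum.elim_inl, volumeReal_axisBox hr]
    positivity
  · rw [Fintype.sum_sum_type]
    simp only [boxesWithPreimages, Sum.elim_inl, Sum.elim_inr, volumeReal_preimage_mulVec]
    linarith [sum_div_volumeReal_axisBox_le (n := n)]

theorem isOpen_setOf_mem_hittingVectors_boxesWithPreimages [Finite J] {S : J → Set (Fin n → ℝ)}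
    (hS : ∀ j, IsOpen (S j)) (R : ℝ) {p : ℕ} (a : Fin n → ZMod p) :
    IsOpen {h : SLR n | a ∈ hittingVectors (boxesWithPreimages S h) R p} := by
  have hcont (x : Fin n → ℤ) (j : J) :
      IsOpen {h : SLR n | x ∈ scaledPoints ((h.1 *ᵥ ·) ⁻¹' S j) R⁻¹} :=
    (hS j).preimage (continuous_mulVec_SLR (R⁻¹ • castVec ℝ x))
  simp only [mem_hittingVectors_boxesWithPreimages, Set.ofPred_and, Set.ofPred_forall (ι := J),
    Set.ofPred_exists (ι := Fin n → ℤ)]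
  refine isOpen_const.inter (isOpen_const.inter (isOpen_iInter_of_finite fun j => ?_))
  exact isOpen_iUnion fun x => (hcont x j).inter isOpen_const

end TwistedHitting

section Averaging

open scoped ENNReal

variable {X : Type*} [MeasurableSpace X] {ν : Measure X} {K : Set X}

theorem eventually_half_le_measure_of_forall_eventually (hK0 : ν K ≠ 0) (hK : ν K ≠ ∞)
    {P : ℕ → X → Prop} (hP : ∀ x ∈ K, ∀ᶠ N in atTop, P N x) :
    ∀ᶠ N in atTop, ν K / 2 ≤ ν {x ∈ K | P N x} := by
  have hmono : Monotone fun N => {x ∈ K | ∀ N' ≥ N, P N' x} :=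
    fun _ _ hMN _ hx => ⟨hx.1, fun N' hN' => hx.2 N' (hMN.trans hN')⟩
  have hunion : ⋃ N, {x ∈ K | ∀ N' ≥ N, P N' x} = K := by
    refine (Set.iUnion_subset fun N => Set.sep_subset _ _).antisymm fun x hx => ?_
    obtain ⟨N, hN⟩ := eventually_atTop.1 (hP x hx)
    exact Set.mem_iUnion.2 ⟨N, hx, hN⟩
  have hlim := tendsto_measure_iUnion_atTop (μ := ν) hmono
  rw [hunion] at hlim
  filter_upwards [hlim.eventually_const_lt (ENNReal.half_lt_self hK0 hK)] with N hN
  exact hN.le.trans (measure_mono fun x hx => ⟨hx.1, hx.2 N le_rfl⟩)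

theorem exists_half_le_measure_inter {α : Type*} [Fintype α] [Nonempty α] {s : α → Set X}
    (hs : ∀ a, MeasurableSet (s a)) (hK : ∀ x ∈ K, Fintype.card α ≤ 2 * {a | x ∈ s a}.ncard) :
    ∃ a, ν K / 2 ≤ ν (K ∩ s a) := by
  classical
  by_contra! hlt
  have hsum : ∑ a, ν (K ∩ s a) < ∑ _a : α, ν K / 2 :=
    ENNReal.sum_lt_sum_of_nonempty Finset.univ_nonempty fun a _ => hlt a
  refine hsum.not_ge ?_
  calc ∑ _a : α, ν K / 2 = ∫⁻ _ in K, (Fintype.card α : ℝ≥0∞) / 2 ∂ν := by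
        rw [setLIntegral_const, Finset.sum_const, Finset.card_univ, nsmul_eq_mul, div_eq_mul_inv,
          div_eq_mul_inv]
        ring
    _ ≤ ∫⁻ x in K, ∑ a, (s a).indicator 1 x ∂ν := by
        refine setLIntegral_mono (Finset.measurable_fun_sum _ fun a _ =>
          measurable_one.indicator (hs a)) fun x hx => ENNReal.div_le_of_le_mul' ?_
        simp only [Set.indicator_apply, Pi.one_apply, Finset.sum_boole]
        have := hK x hx
        rw [Set.ncard_eq_toFinset_card', Set.toFinset_ofPred] at this
        exact_mod_cast this
    _ = ∑ a, ν (K ∩ s a) := by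
        rw [lintegral_finsetSum _ fun a _ => measurable_one.indicator (hs a)]
        exact Finset.sum_congr rfl fun a _ => by
          rw [lintegral_indicator_one (hs a), Measure.restrict_apply (hs a), Set.inter_comm]

end Averaging

section PositiveMeasure

open scoped ENNReal

variable {n : ℕ}

theorem exists_half_half_le_measure_mem_hittingVectors {J : Type*} [Fintype J]
    {S : J → Set (Fin n → ℝ)} (hn : 3 ≤ n) (hS : ∀ j, IsJordanRegion (S j))
    (hV : ∀ j, 0 < volume.real (S j)) (hsum : ∑ j, 16 / volume.real (S j) ≤ 1 / 8)
    {ν : Measure (SLR n)} {K : Set (SLR n)} (hK0 : ν K ≠ 0) (hK : ν K ≠ ∞) :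
    ∃ R p : ℕ, 0 < R ∧ p.Prime ∧ R ^ n < p ∧ ∃ a : Fin n → ZMod p,
      ν K / 2 / 2 ≤ ν (K ∩ {h | a ∈ hittingVectors (boxesWithPreimages S h) R p}) := by
  obtain ⟨R, hR, hR0⟩ := ((eventually_half_le_measure_of_forall_eventually hK0 hK fun h _ =>
    eventually_pow_le_two_mul_ncard_hittingVectors_boxesWithPreimages hn hS hV hsum h).and
      (eventually_gt_atTop 0)).exists
  obtain ⟨p, hp, hRp, hpR⟩ := Nat.exists_prime_lt_and_le_two_mul (R ^ n) (pow_ne_zero n hR0.ne')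
  have := Fact.mk hp
  obtain ⟨a, ha⟩ := exists_half_le_measure_inter (ν := ν)
    (K := {h ∈ K | ∀ p : ℕ, p.Prime → R ^ n < p → p ≤ 2 * R ^ n →
      p ^ n ≤ 2 * (hittingVectors (boxesWithPreimages S h) R p).ncard})
    (s := fun a : Fin n → ZMod p => {h | a ∈ hittingVectors (boxesWithPreimages S h) R p})
    (fun a => (isOpen_setOf_mem_hittingVectors_boxesWithPreimages
      (fun j => (hS j).isOpen) R a).measurableSet)
    fun h hh => by
      rw [Fintype.card_fun, ZMod.card, Fintype.card_fin]
      exact hh.2 p hp hRp hpR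
  refine ⟨R, p, hR0, hp, hRp, a, ?_⟩
  exact (ENNReal.div_le_div_right hR 2).trans (ha.trans (by gcongr; exact Set.sep_subset _ _))

theorem exists_forall_le_measure_inter_meetSet (hn : 3 ≤ n) (ν : Measure (SLR n))
    [ν.IsMulRightInvariant] [IsFiniteMeasureOnCompacts ν] [ν.IsOpenPosMeasure] :
    ∃ (D : ℕ) (E : Set (SLR n)) (ε : ℝ≥0∞), IsCompact E ∧ ε ≠ 0 ∧
      ∀ {J : Type} [Fintype J] {S : J → Set (Fin n → ℝ)}, (∀ j, IsJordanRegion (S j)) →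
        (∀ j, 0 < volume.real (S j)) → ∑ j, 16 / volume.real (S j) ≤ 1 / 8 →
          ε ≤ ν (E ∩ ⋂ j, meetSet (Set.Ioc (0 : ℝ) D • S j)) := by
  have : NeZero n := ⟨by lia⟩
  obtain ⟨K, hK, hK1⟩ := exists_compact_mem_nhds (1 : SLR n)
  have hK0 : ν K ≠ 0 := (Measure.measure_pos_of_mem_nhds ν hK1).ne'
  have hε : ν K / 2 / 2 ≠ 0 := by simpa using hK0
  refine ⟨n.factorial * (3 * n * (64 * n)) ^ n,
    K * {v | ∀ k i, |v.1 k i| ≤ 3 * n * (64 * n : ℝ)}, ν K / 2 / 2,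
    hK.mul (isCompact_setOf_abs_entry_le _), hε, ?_⟩
  intro J _ S hS hV hsum
  obtain ⟨R, p, hR0, hp, hRp, a, ha⟩ :=
    exists_half_half_le_measure_mem_hittingVectors hn hS hV hsum hK0 hK.measure_ne_top
  obtain ⟨h₀, -, hh₀⟩ := nonempty_of_measure_ne_zero (ha.trans_lt' hε.bot_lt).ne'
  obtain ⟨ha0, hbox, -⟩ := mem_hittingVectors_boxesWithPreimages.1 hh₀
  obtain ⟨v, hv, hvS⟩ := exists_mul_mem_meetSet hp (Nat.cast_pos.2 hR0)
    (by exact_mod_cast hRp.le) ha0 hbox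
  refine (ha.trans (measure_mono ?_)).trans_eq (measure_preimage_mul_right ν v _)
  rintro h ⟨hhK, hh⟩
  refine ⟨⟨h, hhK, v, hv, rfl⟩, Set.mem_iInter.2 fun j => ?_⟩
  have hhit := hvS h (S j) ((mem_hittingVectors_boxesWithPreimages.1 hh).2.2 j)
  push_cast
  exact hhit

end PositiveMeasure

section BorelCantelli

variable {n : ℕ}

theorem exists_forall_sum_div_le {v : ℕ → ℝ} (hv : ∀ᶠ j in atTop, 0 < v j)
    (hsum : Summable fun j => (v j)⁻¹) {c ε : ℝ} (hc : 0 ≤ c) (hε : 0 < ε) :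
    ∃ N, (∀ j, 0 < v (j + N)) ∧ ∀ s : Finset ℕ, ∑ j ∈ s, c / v (j + N) ≤ ε := by
  have htail := tendsto_sum_nat_add fun j => c * (v j)⁻¹
  obtain ⟨N, hN, hlt⟩ :=
    ((eventually_forall_ge_atTop.2 hv).and (htail.eventually_lt_const hε)).exists
  have hpos (j : ℕ) : 0 < v (j + N) := hN _ (Nat.le_add_left N j)
  refine ⟨N, hpos, fun s => ?_⟩
  simp only [div_eq_mul_inv]
  exact (((summable_nat_add_iff N).2 (hsum.mul_left c)).sum_le_tsum s fun j _ =>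
    mul_nonneg hc (inv_nonneg.2 (hpos j).le)).trans hlt.le

theorem measure_eventuallyMeetSet_ne_zero (hn : 3 ≤ n) {S : ℕ → Set (Fin n → ℝ)}
    (hS : ∀ j, IsJordanRegion (S j)) (hV : ∀ᶠ j in atTop, 0 < volume.real (S j))
    (hsum : Summable fun j => (volume.real (S j))⁻¹) (ν : Measure (SLR n))
    [ν.IsMulRightInvariant] [IsFiniteMeasureOnCompacts ν] [ν.IsOpenPosMeasure] :
    ν (eventuallyMeetSet S) ≠ 0 := by
  obtain ⟨D, E, ε, hE, hε, hfin⟩ := exists_forall_le_measure_inter_meetSet hn ν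
  obtain ⟨N, hpos, hle⟩ := exists_forall_sum_div_le hV hsum (c := 16) (ε := 1 / 8)
    (by norm_num) (by norm_num)
  have hmeas (j : ℕ) : MeasurableSet (meetSet (Set.Ioc (0 : ℝ) D • S (j + N))) :=
    (isOpen_meetSet (isOpen_Ioc_smul (hS _).isOpen D)).measurableSet
  have hbound : ε ≤ ν.restrict E (⋂ j, meetSet (Set.Ioc (0 : ℝ) D • S (j + N))) := by
    have := Fact.mk (hE.measure_lt_top (μ := ν))
    rw [measure_iInter_eq_iInf_measure_iInter_le (fun j => (hmeas j).nullMeasurableSet)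
      ⟨0, measure_ne_top _ _⟩]
    refine le_iInf fun m => ?_
    rw [Measure.restrict_apply (.iInter fun j => .iInter fun _ => hmeas j)]
    refine (hfin (J := Finset.Iic m) (fun j => hS _) (fun j => hpos j) ?_).trans
      (measure_mono fun g ⟨hgE, hg⟩ => ⟨Set.mem_iInter₂.2 fun j hj => ?_, hgE⟩)
    · exact (Finset.sum_coe_sort (Finset.Iic m) _).trans_le (hle _)
    · exact Set.mem_iInter.1 hg ⟨j, Finset.mem_Iic.2 hj⟩
  have hsub : ⋂ j, meetSet (Set.Ioc (0 : ℝ) D • S (j + N)) ⊆ eventuallyMeetSet S := fun g hg =>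
    ⟨D, eventually_atTop.2 ⟨N, fun j hj => by
      simpa only [Nat.sub_add_cancel hj] using Set.mem_iInter.1 hg (j - N)⟩⟩
  exact ((hε.bot_lt.trans_le hbound).trans_le
    ((measure_mono hsub).trans (Measure.restrict_apply_le _ _))).ne'

theorem ae_mem_eventuallyMeetSet_of_summable (hn : 3 ≤ n) {S : ℕ → Set (Fin n → ℝ)}
    (hS : ∀ j, IsJordanRegion (S j)) (hV : ∀ᶠ j in atTop, 0 < volume.real (S j))
    (hsum : Summable fun j => (volume.real (S j))⁻¹) (μ : Measure (SLR n)) [μ.IsHaarMeasure] :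
    ∀ᵐ g ∂μ, g ∈ eventuallyMeetSet S := by
  have : NeZero n := ⟨by lia⟩
  refine ae_mem_eventuallyMeetSet (fun j => (hS j).isOpen) μ fun h0 => ?_
  refine measure_eventuallyMeetSet_ne_zero hn hS hV hsum μ.inv ?_
  rw [Measure.inv_apply, measure_inv_null, h0]

end BorelCantelli

section Shell

variable {n : ℕ}

theorem euclNorm_eq_norm_toLp (x : Fin n → ℝ) : euclNorm x = ‖WithLp.toLp 2 x‖ := by
  simp [euclNorm, EuclideanSpace.norm_eq]

theorem euclNorm_smul {t : ℝ} (ht : 0 ≤ t) (x : Fin n → ℝ) : euclNorm (t • x) = t * euclNorm x := by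
  rw [euclNorm_eq_norm_toLp, euclNorm_eq_norm_toLp, WithLp.toLp_smul, norm_smul,
    Real.norm_of_nonneg ht]

theorem setOf_euclNorm_lt (T : ℝ) : {x : Fin n → ℝ | euclNorm x < T} =
    (EuclideanSpace.equiv (Fin n) ℝ).symm ⁻¹' Metric.ball 0 T := by
  ext x
  rw [Set.mem_ofPred_eq, euclNorm_eq_norm_toLp]
  exact mem_ball_zero_iff.symm

theorem isOpen_setOf_euclNorm_lt (T : ℝ) : IsOpen {x : Fin n → ℝ | euclNorm x < T} := by
  rw [setOf_euclNorm_lt]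
  exact Metric.isOpen_ball.preimage (EuclideanSpace.equiv (Fin n) ℝ).symm.continuous

theorem isBounded_setOf_euclNorm_lt (T : ℝ) :
    Bornology.IsBounded {x : Fin n → ℝ | euclNorm x < T} := by
  rw [setOf_euclNorm_lt, ← ContinuousLinearEquiv.image_eq_preimage_symm]
  exact (EuclideanSpace.equiv (Fin n) ℝ).lipschitz.isBounded_image Metric.isBounded_ball

theorem convex_setOf_euclNorm_lt (T : ℝ) : Convex ℝ {x : Fin n → ℝ | euclNorm x < T} := by
  rw [setOf_euclNorm_lt]
  exact (convex_ball 0 T).linear_preimage (EuclideanSpace.equiv (Fin n) ℝ).symm.toLinearMap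

variable (M : Matrix (Fin n) (Fin n) ℝ)

theorem continuous_Qform : Continuous (Qform M) :=
  continuous_id.dotProduct (continuous_const.matrix_mulVec continuous_id)

theorem Qform_smul (t : ℝ) (x : Fin n → ℝ) : Qform M (t • x) = t ^ 2 * Qform M x := by
  simp only [Qform, mulVec_smul, smul_dotProduct, dotProduct_smul, smul_eq_mul]
  ring

theorem Qform_add_smul (x y : Fin n → ℝ) (t : ℝ) : Qform M (y + t • x) =
    Qform M x * t ^ 2 + (x ⬝ᵥ M *ᵥ y + y ⬝ᵥ M *ᵥ x) * t + Qform M y := by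
  simp only [Qform, mulVec_add, mulVec_smul, add_dotProduct, dotProduct_add, smul_dotProduct,
    dotProduct_smul, smul_eq_mul]
  ring

variable {M}

theorem finite_setOf_quadratic_eq_zero {a : ℝ} (ha : a ≠ 0) (b c : ℝ) :
    {t : ℝ | a * t ^ 2 + b * t + c = 0}.Finite := by
  open Polynomial in
  have hp : (C a * X ^ 2 + C b * X + C c : ℝ[X]) ≠ 0 :=
    leadingCoeff_ne_zero.1 ((leadingCoeff_quadratic ha).trans_ne ha)
  simpa [Polynomial.IsRoot] using Polynomial.finite_setOfPred_isRoot hp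

theorem volume_setOf_Qform_eq (hM : ∃ x, Qform M x ≠ 0) (c : ℝ) :
    volume {x | Qform M x = c} = 0 := by
  -- Every line in a direction where the form does not vanish meets the level set in two points
  -- at most.
  obtain ⟨x, hx⟩ := hM
  have hmeas : MeasurableSet {y | Qform M y ≠ c} :=
    (isOpen_ne_fun (continuous_Qform M) continuous_const).measurableSet
  have hae : ∀ᵐ y, y ∈ {y | Qform M y ≠ c} := by
    refine ae_mem_of_ae_add_linearMap_mem (LinearMap.toSpanSingleton ℝ (Fin n → ℝ) x) volume volume
      hmeas fun y => ?_
    refine measure_mono_null (fun t ht => ?_) ((finite_setOf_quadratic_eq_zero hx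
      (x ⬝ᵥ M *ᵥ y + y ⬝ᵥ M *ᵥ x) (Qform M y - c)).measure_zero volume)
    have hQ : Qform M (y + t • x) = c := not_not.1 ht
    rw [Qform_add_smul] at hQ
    rw [Set.mem_ofPred_eq]
    linarith
  simpa [ae_iff] using hae

variable (M) in
/-- The vectors of norm less than `T` at which the form takes a value in `(0, η)`. The sets `A_j`
are of this kind. -/
def shell (η T : ℝ) : Set (Fin n → ℝ) := {x | Qform M x ∈ Set.Ioo 0 η ∧ euclNorm x < T}

theorem isJordanRegion_shell (hM : ∃ x, Qform M x ≠ 0) (η T : ℝ) :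
    IsJordanRegion (shell M η T) where
  isOpen := (isOpen_Ioo.preimage (continuous_Qform M)).inter (isOpen_setOf_euclNorm_lt T)
  isBounded := (isBounded_setOf_euclNorm_lt T).subset fun _ hx => hx.2
  zero_notMem h := by
    have h0 : Qform M 0 = 0 := by rw [Qform, zero_dotProduct]
    exact h.1.1.ne' h0
  volume_frontier := by
    have hIoo : frontier (Set.Ioo 0 η) ⊆ {0, η} := by
      rcases lt_or_ge 0 η with hη | hη
      · rw [frontier_Ioo hη]
      · simp [Set.Ioo_eq_empty hη.not_gt]
    have hlevel : frontier (Qform M ⁻¹' Set.Ioo 0 η) ⊆ {x | Qform M x = 0} ∪ {x | Qform M x = η} :=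
      ((continuous_Qform M).frontier_preimage_subset _).trans (Set.preimage_mono hIoo)
    refine measure_mono_null (frontier_inter_subset _ _) (measure_union_null ?_ ?_)
    · exact measure_mono_null (Set.inter_subset_left.trans hlevel)
        (measure_union_null (volume_setOf_Qform_eq hM 0) (volume_setOf_Qform_eq hM η))
    · exact measure_mono_null Set.inter_subset_right
        ((convex_setOf_euclNorm_lt T).addHaar_frontier _)

theorem smul_mem_shell {η T t : ℝ} {x : Fin n → ℝ} (ht : 0 < t) (hx : x ∈ shell M η T) :
    t • x ∈ shell M (t ^ 2 * η) (t * T) := by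
  obtain ⟨⟨hx0, hxη⟩, hxT⟩ := hx
  rw [shell, Set.mem_ofPred_eq, Qform_smul, euclNorm_smul ht.le]
  exact ⟨⟨by positivity, by gcongr⟩, by gcongr⟩

theorem shell_subset_shell {η η' T T' : ℝ} (hη : η ≤ η') (hT : T ≤ T') :
    shell M η T ⊆ shell M η' T' :=
  fun _ ⟨⟨hx0, hxη⟩, hxT⟩ => ⟨⟨hx0, hxη.trans_le hη⟩, hxT.trans_le hT⟩

theorem Ioc_smul_shell_subset {D η T : ℝ} (hη : 0 ≤ η) (hT : 0 ≤ T) :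
    Set.Ioc 0 D • shell M η T ⊆ shell M (D ^ 2 * η) (D * T) := by
  rintro _ ⟨t, ⟨ht0, htD⟩, x, hx, rfl⟩
  exact shell_subset_shell (by gcongr) (by gcongr) (smul_mem_shell ht0 hx)

theorem volumeReal_setOf_Qform_mem_Ioo_le {η T : ℝ} (hη : 0 < η) (hT : 0 < T) :
    √η ^ n * volume.real {x | Qform M x ∈ Set.Ioo 0 1 ∧ euclNorm x ≤ T / (2 * √η)} ≤
      volume.real (shell M η T) := by
  have hs : 0 < √η := Real.sqrt_pos.2 hη
  have hlt : T / (2 * √η) < T / √η := by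
    gcongr
    linarith
  have hsmul := volumeReal_smul {x | Qform M x ∈ Set.Ioo 0 1 ∧ euclNorm x ≤ T / (2 * √η)} hs.le
  rw [Fintype.card_fin] at hsmul
  rw [← hsmul]
  have hbdd : Bornology.IsBounded (shell M η T) :=
    (isBounded_setOf_euclNorm_lt T).subset fun _ hx => hx.2
  refine measureReal_mono ?_ hbdd.measure_lt_top.ne
  rintro _ ⟨x, ⟨hxQ, hxT⟩, rfl⟩
  have hmem := smul_mem_shell hs (show x ∈ shell M 1 (T / √η) from ⟨hxQ, hxT.trans_lt hlt⟩)
  rwa [Real.sq_sqrt hη.le, mul_one, mul_div_cancel₀ _ hs.ne'] at hmem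

variable (M) in
/-- The volume of `{0 < Q < 1} ∩ B(0, T)` is at least a constant multiple of `T ^ (n - 2)` for large
`T`: the lower bound contained in the volume asymptotic condition. -/
def HasVolumeLowerBound : Prop :=
  (fun T : ℝ => T ^ (n - 2)) =O[atTop]
    fun T => volume.real {x | Qform M x ∈ Set.Ioo 0 1 ∧ euclNorm x ≤ T}

theorem isBigO_volumeReal_shell (hn : 2 ≤ n) (hvol : HasVolumeLowerBound M)
    {α : Type*} {l : Filter α} {η T : α → ℝ} (hη : ∀ j, 0 < η j) (hT : ∀ j, 0 < T j)
    (hlim : Tendsto (fun j => T j / √(η j)) l atTop) :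
    (fun j => η j * T j ^ (n - 2)) =O[l] fun j => volume.real (shell M (η j) (T j)) := by
  have hlim2 : Tendsto (fun j => T j / (2 * √(η j))) l atTop := by
    simpa only [div_div, mul_comm] using hlim.atTop_div_const (two_pos (α := ℝ))
  have hpow (j : α) : η j * T j ^ (n - 2) =
      2 ^ (n - 2) * (√(η j) ^ n * (T j / (2 * √(η j))) ^ (n - 2)) := by
    obtain ⟨m, rfl⟩ := Nat.exists_eq_add_of_le' hn
    have hs : √(η j) ≠ 0 := (Real.sqrt_pos.2 (hη j)).ne'
    rw [Nat.add_sub_cancel, pow_add, Real.sq_sqrt (hη j).le, div_pow, mul_pow]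
    field_simp
  have hscaled := (isBigO_refl (fun j => √(η j) ^ n) l).mul (IsBigO.comp_tendsto hvol hlim2)
  simp only [hpow]
  refine (hscaled.const_mul_left (2 ^ (n - 2))).trans
    (IsBigO.of_bound' (Eventually.of_forall fun j => ?_))
  rw [Function.comp_apply, Real.norm_of_nonneg (mul_nonneg (by positivity) measureReal_nonneg),
    Real.norm_of_nonneg measureReal_nonneg]
  exact volumeReal_setOf_Qform_mem_Ioo_le (hη j) (hT j)

end Shell

section DyadicShells

theorem tendsto_two_rpow_mul_natCast_atTop {γ : ℝ} (hγ : 0 < γ) :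
    Tendsto (fun j : ℕ => (2 : ℝ) ^ (γ * j)) atTop atTop := by
  simp only [Real.rpow_mul_natCast two_pos.le]
  exact tendsto_pow_atTop_atTop_of_one_lt (Real.one_lt_rpow one_lt_two hγ)

theorem summable_two_rpow_mul_natCast_inv {γ : ℝ} (hγ : 0 < γ) :
    Summable fun j : ℕ => ((2 : ℝ) ^ (γ * j))⁻¹ := by
  simp only [Real.rpow_mul_natCast two_pos.le, ← inv_pow]
  exact summable_geometric_of_lt_one (by positivity)
    (inv_lt_one_of_one_lt₀ (Real.one_lt_rpow one_lt_two hγ))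

variable {n : ℕ} {M : Matrix (Fin n) (Fin n) ℝ}

theorem HasVolumeLowerBound.exists_Qform_ne_zero (hvol : HasVolumeLowerBound M) :
    ∃ x, Qform M x ≠ 0 := by
  obtain ⟨T, hT0, hT⟩ := (hvol.eq_zero_imp.and (eventually_gt_atTop 0)).exists
  have hne : volume.real {x | Qform M x ∈ Set.Ioo 0 1 ∧ euclNorm x ≤ T} ≠ 0 :=
    fun h => (pow_pos hT _).ne' (hT0 h)
  obtain ⟨x, hx, -⟩ := nonempty_of_measureReal_ne_zero hne
  exact ⟨x, hx.1.ne'⟩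

theorem isBigO_two_rpow_volumeReal_shell {α τ : ℝ} (hn : 2 ≤ n) (hατ : 0 < τ + α / 2)
    (hvol : HasVolumeLowerBound M) :
    (fun j : ℕ => (2 : ℝ) ^ ((τ * (n - 2) - α) * j)) =O[atTop]
      fun j : ℕ => volume.real (shell M (2 ^ (-α * j)) (2 ^ (τ * j))) := by
  have hratio (j : ℕ) : (2 : ℝ) ^ (τ * j) / √(2 ^ (-α * j)) = 2 ^ ((τ + α / 2) * j) := by
    rw [Real.sqrt_eq_rpow, ← Real.rpow_mul two_pos.le, ← Real.rpow_sub two_pos]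
    congr 1
    ring
  have hprod (j : ℕ) : (2 : ℝ) ^ ((τ * (n - 2) - α) * j) =
      2 ^ (-α * j) * (2 ^ (τ * j)) ^ (n - 2) := by
    rw [← Real.rpow_mul_natCast two_pos.le, ← Real.rpow_add two_pos, Nat.cast_sub hn]
    congr 1
    push_cast
    ring
  simp only [hprod]
  refine isBigO_volumeReal_shell hn hvol (fun j => by positivity) (fun j => by positivity) ?_
  simpa only [hratio] using tendsto_two_rpow_mul_natCast_atTop hατ

theorem ae_mem_eventuallyMeetSet_shell {α τ : ℝ} (hn : 3 ≤ n) (hατ : 0 < τ + α / 2)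
    (hgrowth : 0 < τ * (n - 2) - α)
    (hvol : HasVolumeLowerBound M)
    (μ : Measure (SLR n)) [μ.IsHaarMeasure] :
    ∀ᵐ g ∂μ, g ∈ eventuallyMeetSet fun j : ℕ => shell M (2 ^ (-α * j)) (2 ^ (τ * j)) := by
  have hO := isBigO_two_rpow_volumeReal_shell (Nat.le_of_succ_le hn) hατ hvol
  have hzero := hO.eq_zero_imp
  refine ae_mem_eventuallyMeetSet_of_summable hn
    (fun j => isJordanRegion_shell (hvol.exists_Qform_ne_zero) _ _) ?_ ?_ μ
  · filter_upwards [hzero] with j hj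
    exact measureReal_nonneg.lt_of_ne' fun h => (Real.rpow_pos_of_pos two_pos _).ne' (hj h)
  · refine summable_of_isBigO_nat (summable_two_rpow_mul_natCast_inv hgrowth)
      (hO.inv_rev (Eventually.of_forall fun j h => ?_))
    exact absurd h (Real.rpow_pos_of_pos two_pos _).ne'

theorem Aset_eq_shell (δ : ℝ) (j : ℕ) :
    Aset M δ j = shell M (2 ^ (-(j : ℝ))) (2 ^ ((1 / ((n : ℝ) - 2) + δ) * j)) := rfl

theorem eventually_Ioc_smul_shell_subset {α α' τ τ' : ℝ} (hα : α' < α) (hτ : τ < τ') (D : ℝ) :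
    ∀ᶠ j : ℕ in atTop, Set.Ioc 0 D • shell M (2 ^ (-α * j)) (2 ^ (τ * j)) ⊆
      shell M (2 ^ (-α' * j)) (2 ^ (τ' * j)) := by
  have hrpow {a b C : ℝ} {j : ℕ} (h : C ≤ 2 ^ ((b - a) * j)) :
      C * (2 : ℝ) ^ (a * j) ≤ 2 ^ (b * j) := by
    rw [sub_mul, Real.rpow_sub two_pos] at h
    exact (le_div_iff₀ (by positivity)).1 h
  have hη : 0 < -α' - -α := by linarith
  filter_upwards [(tendsto_two_rpow_mul_natCast_atTop hη).eventually_ge_atTop (D ^ 2),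
    (tendsto_two_rpow_mul_natCast_atTop (sub_pos.2 hτ)).eventually_ge_atTop D] with j hjη hjτ
  exact (Ioc_smul_shell_subset (by positivity) (by positivity)).trans
    (shell_subset_shell (hrpow hjη) (hrpow hjτ))

end DyadicShells

theorem hasVolumeLowerBound_of_volumeAsymp {n : ℕ} {M : Matrix (Fin n) (Fin n) ℝ} {c₀ : ℝ}
    (hc₀ : c₀ ≠ 0) (hvol : volumeAsymp M c₀) :
    HasVolumeLowerBound M := by
  have hequiv : (fun T => volume.real {x | Qform M x ∈ Set.Ioo 0 1 ∧ euclNorm x ≤ T}) ~[atTop]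
      fun T => c₀ * T ^ (n - 2) := by
    have h := hvol 0 1 one_pos
    simp only [sub_zero, mul_one] at h
    exact h.const_mul_right hc₀
  exact (isBigO_self_const_mul hc₀ _ _).trans hequiv.symm.isBigO

theorem lattice_eventually_meets_Aj_general
    (n : ℕ) (hn : 3 ≤ n) (M : Matrix (Fin n) (Fin n) ℝ)
    (hvol : HasVolumeLowerBound M)
    (δ : ℝ) (hδ : 0 < δ) (μ : Measure (SLR n)) [μ.IsHaarMeasure] :
    ∀ᵐ g : SLR n ∂μ, ∃ j₀ : ℕ, ∀ j : ℕ, j₀ ≤ j →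
      ∃ x : Fin n → ℤ,
        (g : Matrix (Fin n) (Fin n) ℝ).mulVec (fun i => (x i : ℝ)) ∈ Aset M δ j := by
  have hn2 : (1 : ℝ) ≤ n - 2 := by
    have : (3 : ℝ) ≤ n := mod_cast hn
    linarith
  -- The thinner shells still have summable reciprocal volumes, and the room left up to `A_j`
  -- absorbs the bounded dilations.
  have hgrowth : 0 < (1 / ((n : ℝ) - 2) + δ / 2) * (n - 2) - (1 + δ / 4) := by
    rw [add_mul, one_div_mul_cancel (by positivity)]
    nlinarith
  filter_upwards [ae_mem_eventuallyMeetSet_shell hn (by positivity) hgrowth hvol μ]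
    with g ⟨D, hD⟩
  have hsub := eventually_Ioc_smul_shell_subset (M := M) (show 1 < 1 + δ / 4 by linarith)
    (show 1 / ((n : ℝ) - 2) + δ / 2 < 1 / ((n : ℝ) - 2) + δ by linarith) D
  refine eventually_atTop.1 ?_
  filter_upwards [hD, hsub] with j hj hjsub
  rw [neg_one_mul, ← Aset_eq_shell] at hjsub
  exact meetSet_mono hjsub hj

/-- Let `n ≥ 3`, let `Q₀` satisfy the volume asymptotic condition with constant `c₀ > 0`,
and let `δ > 0`. Then for Haar-almost every `g ∈ SL(n,ℝ)` there is `j₀` such that for all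
`j ≥ j₀` the lattice `gℤ^n` meets `A_j`. -/
theorem lattice_eventually_meets_Aj
    (n : ℕ) (hn : 3 ≤ n) (M : Matrix (Fin n) (Fin n) ℝ) (hM : M.IsSymm)
    (c₀ : ℝ) (hc₀ : 0 < c₀) (hvol : volumeAsymp M c₀)
    (δ : ℝ) (hδ : 0 < δ)
    (μ : Measure (SLR n)) [μ.IsHaarMeasure] :
    ∀ᵐ g : SLR n ∂μ, ∃ j₀ : ℕ, ∀ j : ℕ, j₀ ≤ j →
      ∃ x : Fin n → ℤ,
        (g : Matrix (Fin n) (Fin n) ℝ).mulVec (fun i => (x i : ℝ)) ∈ Aset M δ j :=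
  lattice_eventually_meets_Aj_general n hn M
    (hasVolumeLowerBound_of_volumeAsymp hc₀.ne' hvol) δ hδ μ
end
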